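/- Let G be a (possibly infinite) graph and let s, t ∈ V(G) be distinct. If there is no non-trivial st-wave in G, then there exists a system 𝒫 of pairwise edge-disjoint st-paths covering δ(s), and δ(s) is the unique Erdős–Menger st-cut. -/

import Mathlib

/-!
Common definitions: multigraphs (parallel edges allowed, no loops), walks,
paths, cuts, waves and related notions used in the statements below.
-/

universe u v

/-- A multigraph with vertex type `V` and edge type `E`: every edge is assigned
an unordered pair of *distinct* end-vertices (parallel edges allowed, no loops). -/
structure Multigraph (V : Type u) (E : Type v) : Type (max u v) where
  inc : E → Sym2 V
  not_isDiag : ∀ e, ¬ (inc e).IsDiag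

namespace Multigraph

variable {V : Type u} {E : Type v}

/-- Walks in a multigraph, recorded together with the edges they traverse. -/
inductive Walk (G : Multigraph V E) : V → V → Type (max u v)
  | nil (v : V) : Walk G v v
  | cons {u v w : V} (e : E) (he : G.inc e = s(u, v)) (p : Walk G v w) : Walk G u w

namespace Walk

variable {G : Multigraph V E}

/-- The list of vertices visited by a walk. -/
def support : ∀ {u w : V}, G.Walk u w → List V
  | _, _, .nil v => [v]
  | u, _, .cons _ _ p => u :: p.support

/-- The list of edges traversed by a walk. -/
def edges : ∀ {u w : V}, G.Walk u w → List E
  | _, _, .nil _ => []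
  | _, _, .cons e _ p => e :: p.edges

end Walk

/-- `δ_G(v)`: the set of edges incident with the vertex `v`. -/
def inci (G : Multigraph V E) (v : V) : Set E := {e | v ∈ G.inc e}

/-- `δ_G(X)`: the set of edges with exactly one end-vertex in `X`. -/
def cut (G : Multigraph V E) (X : Set V) : Set E :=
  {e | ∃ x y, G.inc e = s(x, y) ∧ x ∈ X ∧ y ∉ X}

/-- Connectedness of a multigraph. -/
def Connected (G : Multigraph V E) : Prop := ∀ u v : V, Nonempty (G.Walk u v)

/-- A `T`-path: a path connecting two distinct vertices of `T`
with no internal vertex in `T`. -/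
structure TPath (G : Multigraph V E) (T : Set V) : Type (max u v) where
  first : V
  last : V
  walk : G.Walk first last
  first_mem : first ∈ T
  last_mem : last ∈ T
  ne : first ≠ last
  support_nodup : walk.support.Nodup
  internal : ∀ x ∈ walk.support, x ∈ T → x = first ∨ x = last

/-- A system of pairwise edge-disjoint `T`-paths. -/
def TPathDisjoint (G : Multigraph V E) {T : Set V} (P : Set (G.TPath T)) : Prop :=
  ∀ p ∈ P, ∀ q ∈ P, p ≠ q → ∀ e, e ∈ p.walk.edges → e ∉ q.walk.edges

/-- An `st`-path: a path from `s` to `t` (no internal vertex is `s` or `t`,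
which is automatic as the vertices of a path are distinct). -/
structure STPath (G : Multigraph V E) (s t : V) : Type (max u v) where
  walk : G.Walk s t
  support_nodup : walk.support.Nodup

/-- A system of pairwise edge-disjoint `st`-paths. -/
def STPathDisjoint (G : Multigraph V E) {s t : V} (P : Set (G.STPath s t)) : Prop :=
  ∀ p ∈ P, ∀ q ∈ P, p ≠ q → ∀ e, e ∈ p.walk.edges → e ∉ q.walk.edges

/-- A nontrivial path starting at `s`. -/
structure SPath (G : Multigraph V E) (s : V) : Type (max u v) where
  last : V
  walk : G.Walk s last
  support_nodup : walk.support.Nodup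
  edges_ne_nil : walk.edges ≠ []

/-- A system of pairwise edge-disjoint paths starting at `s`. -/
def SPathDisjoint (G : Multigraph V E) {s : V} (W : Set (G.SPath s)) : Prop :=
  ∀ p ∈ W, ∀ q ∈ W, p ≠ q → ∀ e, e ∈ p.walk.edges → e ∉ q.walk.edges

/-- The set of last edges of a system of paths starting at `s`. -/
def lastEdges (G : Multigraph V E) {s : V} (W : Set (G.SPath s)) : Set E :=
  {e | ∃ p ∈ W, p.walk.edges.getLast? = some e}

/-- `C` is a cut separating `A` from `B`. -/
def SepCut (G : Multigraph V E) (A B : Set V) (C : Set E) : Prop :=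
  ∃ X : Set V, A ⊆ X ∧ (∀ b ∈ B, b ∉ X) ∧ C = G.cut X

/-- `C` is a `⊆`-minimal cut separating `A` from `B`. -/
def IsMinSepCut (G : Multigraph V E) (A B : Set V) (C : Set E) : Prop :=
  G.SepCut A B C ∧ ∀ D : Set E, G.SepCut A B D → D ⊆ C → D = C

/-- An `s`-`B`-wave: a system of pairwise edge-disjoint paths starting at `s`
whose set of last edges is a `⊆`-minimal cut separating `s` from `B`. -/
def IsWave (G : Multigraph V E) (s : V) (B : Set V) (W : Set (G.SPath s)) : Prop :=
  G.SPathDisjoint W ∧ G.IsMinSepCut {s} B (G.lastEdges W)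

/-- An Erdős–Menger `st`-cut: an `st`-cut which is orthogonal to some system of
pairwise edge-disjoint `st`-paths, i.e. it consists of exactly one edge chosen
from each path of the system. -/
def IsEMCut (G : Multigraph V E) (s t : V) (C : Set E) : Prop :=
  (∃ X : Set V, s ∈ X ∧ t ∉ X ∧ C = G.cut X) ∧
  ∃ P : Set (G.STPath s t), G.STPathDisjoint P ∧
    (∀ p ∈ P, ∃! e, e ∈ C ∧ e ∈ p.walk.edges) ∧
    (∀ e ∈ C, ∃ p ∈ P, e ∈ p.walk.edges)

/-- The order `≼` on `st`-cuts: the `s`-side of `C` is contained in the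
`s`-side of `D` (in a connected graph the `s`-side is unique). -/
def CutLE (G : Multigraph V E) (s t : V) (C D : Set E) : Prop :=
  ∃ X Y : Set V, s ∈ X ∧ t ∉ X ∧ C = G.cut X ∧ s ∈ Y ∧ t ∉ Y ∧ D = G.cut Y ∧ X ⊆ Y

/-- A cut of the form `C_W` for some `st`-wave `W`. -/
def IsWaveCut (G : Multigraph V E) (s t : V) (C : Set E) : Prop :=
  ∃ W : Set (G.SPath s), G.IsWave s {t} W ∧ G.lastEdges W = C

/-- Deletion of a set of edges. -/
def deleteEdges (G : Multigraph V E) (F : Set E) : Multigraph V {e : E // e ∉ F} where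
  inc e := G.inc e.1
  not_isDiag e := G.not_isDiag e.1

open Classical in
/-- Contraction of the vertex set `X` to the vertex `s` (edges inside `X` are
deleted, edges leaving `X` are redirected to `s`). -/
noncomputable def contract (G : Multigraph V E) (X : Set V) (s : V) :
    Multigraph V {e : E // ¬ (Sym2.map (fun v => if v ∈ X then s else v) (G.inc e)).IsDiag} where
  inc e := Sym2.map (fun v => if v ∈ X then s else v) (G.inc e.1)
  not_isDiag e := e.2

/-- Reachability inside a set `S` of vertices. -/
def ReachableIn (G : Multigraph V E) (S : Set V) (x y : V) : Prop :=
  ∃ p : G.Walk x y, ∀ z ∈ p.support, z ∈ S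

/-- `Y` is (the vertex set of) a connected component of the subgraph of `G`
induced by `S`. -/
def IsComponentOf (G : Multigraph V E) (Y S : Set V) : Prop :=
  Y.Nonempty ∧ Y ⊆ S ∧ ∀ x ∈ Y, ∀ y ∈ S, (G.ReachableIn S x y ↔ y ∈ Y)

/-- A cycle in a multigraph (a closed walk with distinct edges whose
vertices are distinct except that the first one equals the last one). -/
structure Cycle (G : Multigraph V E) : Type (max u v) where
  base : V
  walk : G.Walk base base
  edges_ne_nil : walk.edges ≠ []
  edges_nodup : walk.edges.Nodup
  support_tail_nodup : walk.support.tail.Nodup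

/-- A graph is Eulerian if its edge set can be partitioned into
edge sets of cycles. -/
def IsEulerian (G : Multigraph V E) : Prop :=
  ∃ C : Set G.Cycle,
    (∀ c ∈ C, ∀ d ∈ C, c ≠ d → ∀ e, e ∈ c.walk.edges → e ∉ d.walk.edges) ∧
    ∀ e : E, ∃ c ∈ C, e ∈ c.walk.edges

/-- A `T`-partition: a family `{A t : t ∈ T}` of pairwise disjoint vertex sets
with `A t ∩ T = {t}`. -/
def IsTPartition (T : Set V) (A : V → Set V) : Prop :=
  (∀ t ∈ T, A t ∩ T = {t}) ∧
  ∀ t₁ ∈ T, ∀ t₂ ∈ T, t₁ ≠ t₂ → Disjoint (A t₁) (A t₂)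

end Multigraph

universe w

section Part1
namespace EMW
/-- A web: a digraph with sources `A` and sinks `B`, no arcs entering `A`. -/
structure Web (Ω : Type w) where
  R : Ω → Ω → Prop
  A : Set Ω
  B : Set Ω
  hRA : ∀ u z, R u z → z ∉ A

/-- Following `pr` backwards from the point we reach `A`. -/
inductive Rooted {Ω : Type w} (A : Set Ω) (pr : Ω → Ω) : Ω → Prop
  | base (a : Ω) (h : a ∈ A) : Rooted A pr a
  | step (u : Ω) (h : Rooted A pr (pr u)) : Rooted A pr u

structure IsLink {Ω : Type w} (N : Web Ω) (U : Set Ω) (pr : Ω → Ω) : Prop where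
  up : ∀ u ∈ U, u ∉ N.A → pr u ∈ U
  upR : ∀ u ∈ U, u ∉ N.A → N.R (pr u) u
  inj : ∀ u ∈ U, ∀ v ∈ U, u ∉ N.A → v ∉ N.A → pr u = pr v → u = v
  rt : ∀ u ∈ U, Rooted N.A pr u

/-- data of a wave -/
structure Wv (Ω : Type w) where
  X : Set Ω
  S : Set Ω
  U : Set Ω
  pr : Ω → Ω

def Wv.rf {Ω : Type w} (k : Wv Ω) : Set Ω := {u | u ∈ k.X ∨ u ∈ k.S}

structure IsWv {Ω : Type w} (N : Web Ω) (I : Set Ω) (k : Wv Ω) : Prop where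
  dX : ∀ x ∈ k.X, x ∉ I
  dS : ∀ x ∈ k.S, x ∉ I
  XS : ∀ x ∈ k.X, x ∉ k.S
  XB : ∀ x ∈ k.X, x ∉ N.B
  cov : ∀ a ∈ N.A, a ∉ I → a ∈ k.X ∨ a ∈ k.S
  nb : ∀ x ∈ k.X, ∀ z, N.R x z → z ∈ k.X ∨ z ∈ k.S ∨ z ∈ I
  lk : IsLink N k.U k.pr
  prX : ∀ u ∈ k.U, u ∉ N.A → k.pr u ∈ k.X
  US : ∀ u ∈ k.U, u ∈ k.X ∨ u ∈ k.S
  SU : ∀ u ∈ k.S, u ∈ k.U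

def Unh {Ω : Type w} (N : Web Ω) (I : Set Ω) : Prop :=
  ∀ k, IsWv N I k → ∀ a ∈ N.A, a ∉ I → a ∈ k.U

structure WLe {Ω : Type w} (k l : Wv Ω) : Prop where
  X : ∀ x ∈ k.X, x ∈ l.X
  S : ∀ x ∈ k.S, x ∈ l.X ∨ x ∈ l.S
  U : ∀ x ∈ k.rf, (x ∈ k.U ↔ x ∈ l.U)
  pr : ∀ x ∈ k.rf, l.pr x = k.pr x

variable {Ω : Type w} {N : Web Ω}

theorem Wv.mem_rf {k : Wv Ω} {u : Ω} : u ∈ k.rf ↔ u ∈ k.X ∨ u ∈ k.S := Iff.rfl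

theorem WLe.rf {k l : Wv Ω} (h : WLe k l) {x : Ω} (hx : x ∈ k.rf) : x ∈ l.rf := by
  rcases hx with hx | hx
  · exact Or.inl (h.X x hx)
  · exact h.S x hx

theorem WLe.refl (k : Wv Ω) : WLe k k :=
  ⟨fun _ h => h, fun _ h => Or.inr h, fun _ _ => Iff.rfl, fun _ _ => rfl⟩

theorem WLe.trans {k l m : Wv Ω} (h : WLe k l) (h' : WLe l m) : WLe k m := by
  refine ⟨fun x hx => h'.X x (h.X x hx), fun x hx => ?_, fun x hx => ?_, fun x hx => ?_⟩
  · rcases h.S x hx with h1 | h1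
    · exact Or.inl (h'.X x h1)
    · exact h'.S x h1
  · rw [h.U x hx, h'.U x (h.rf hx)]
  · rw [h'.pr x (h.rf hx), h.pr x hx]

open Classical in
noncomputable def comb (k l : Wv Ω) : Wv Ω where
  X := {u | u ∈ k.X ∨ u ∈ l.X}
  S := {u | (u ∈ k.S ∨ u ∈ l.S) ∧ u ∉ k.X ∧ u ∉ l.X}
  U := {u | u ∈ k.U ∨ (u ∈ l.U ∧ u ∉ k.rf)}
  pr := fun u => if u ∈ k.rf then k.pr u else l.pr u

theorem mem_comb_X {k l : Wv Ω} {u : Ω} : u ∈ (comb k l).X ↔ u ∈ k.X ∨ u ∈ l.X := Iff.rfl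
theorem mem_comb_S {k l : Wv Ω} {u : Ω} :
    u ∈ (comb k l).S ↔ (u ∈ k.S ∨ u ∈ l.S) ∧ u ∉ k.X ∧ u ∉ l.X := Iff.rfl
theorem mem_comb_U {k l : Wv Ω} {u : Ω} :
    u ∈ (comb k l).U ↔ u ∈ k.U ∨ (u ∈ l.U ∧ u ∉ k.rf) := Iff.rfl
theorem mem_comb_rf {k l : Wv Ω} {u : Ω} : u ∈ (comb k l).rf ↔ u ∈ k.rf ∨ u ∈ l.rf := by
  simp only [Wv.mem_rf, mem_comb_X, mem_comb_S]; tauto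
theorem comb_pr1 {k l : Wv Ω} {u : Ω} (h : u ∈ k.rf) : (comb k l).pr u = k.pr u := by
  simp [comb, h]
theorem comb_pr2 {k l : Wv Ω} {u : Ω} (h : u ∉ k.rf) : (comb k l).pr u = l.pr u := by
  simp [comb, h]

/-- transfer of rootedness -/
theorem Rooted.transfer {A : Set Ω} {pr pr' : Ω → Ω} {P : Ω → Prop}
    (h : ∀ u, P u → u ∉ A → (pr' u = pr u ∧ P (pr u)) ∨ Rooted A pr' u)
    {u : Ω} (hr : Rooted A pr u) (hu : P u) : Rooted A pr' u := by
  induction hr with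
  | base a ha => exact .base a ha
  | step u _ ih =>
    by_cases hA : u ∈ A
    · exact .base u hA
    · rcases h u hu hA with ⟨h1, h2⟩ | h1
      · exact .step u (h1 ▸ ih h2)
      · exact h1

theorem comb_isWv {I J : Set Ω} {k l : Wv Ω} (hk : IsWv N I k) (hl : IsWv N J l)
    (h1 : ∀ x ∈ I, x ∉ l.rf) (h2 : ∀ x ∈ J, x ∈ I ∨ x ∈ k.rf) :
    IsWv N I (comb k l) := by
  have key : ∀ u ∈ l.U, u ∉ k.rf → u ∉ N.A → l.pr u ∉ k.X := by
    intro u hu hk' hA hX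
    have := hk.nb _ hX u (hl.lk.upR u hu hA)
    have h3 := hl.US u hu
    have := h1 u
    simp only [Wv.mem_rf] at *
    tauto
  have key2 : ∀ u ∈ l.U, u ∉ k.rf → u ∉ N.A → l.pr u ∈ k.U ∨ (l.pr u ∈ l.U ∧ l.pr u ∉ k.rf) := by
    intro u hu hk' hA
    have h3 := key u hu hk' hA
    have h4 := hk.SU (l.pr u)
    have h5 := hl.lk.up u hu hA
    simp only [Wv.mem_rf] at *
    tauto
  have hUr : ∀ u ∈ k.U, u ∈ k.rf := hk.US
  have rt1 : ∀ u ∈ k.U, Rooted N.A (comb k l).pr u := fun u hu =>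
    (hk.lk.rt u hu).transfer (P := fun u => u ∈ k.U)
      (fun u hu hA => Or.inl ⟨comb_pr1 (hUr u hu), hk.lk.up u hu hA⟩) hu
  refine ⟨?_, ?_, ?_, ?_, ?_, ?_, ⟨?_, ?_, ?_, ?_⟩, ?_, ?_, ?_⟩
  · rintro x (hx | hx) hI
    · exact hk.dX x hx hI
    · exact h1 x hI (Or.inl hx)
  · rintro x ⟨hx | hx, _⟩ hI
    · exact hk.dS x hx hI
    · exact h1 x hI (Or.inr hx)
  · rintro x hx ⟨_, h3, h4⟩
    exact hx.elim h3 h4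
  · rintro x (hx | hx)
    · exact hk.XB x hx
    · exact hl.XB x hx
  · intro a ha haI
    have := hk.cov a ha haI
    simp only [mem_comb_X, mem_comb_S]; tauto
  · rintro x (hx | hx) z hz
    · have := hk.nb x hx z hz
      simp only [mem_comb_X, mem_comb_S]; tauto
    · have := hl.nb x hx z hz
      have := h2 z
      simp only [Wv.mem_rf] at this
      simp only [mem_comb_X, mem_comb_S]; tauto
  · rintro u (hu | ⟨hu, hu'⟩) hA
    · rw [comb_pr1 (hUr u hu)]; exact Or.inl (hk.lk.up u hu hA)
    · rw [comb_pr2 hu']; exact key2 u hu hu' hA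
  · rintro u (hu | ⟨hu, hu'⟩) hA
    · rw [comb_pr1 (hUr u hu)]; exact hk.lk.upR u hu hA
    · rw [comb_pr2 hu']; exact hl.lk.upR u hu hA
  · rintro u (hu | ⟨hu, hu'⟩) v (hv | ⟨hv, hv'⟩) hA hB h
    · rw [comb_pr1 (hUr u hu), comb_pr1 (hUr v hv)] at h
      exact hk.lk.inj u hu v hv hA hB h
    · rw [comb_pr1 (hUr u hu), comb_pr2 hv'] at h
      exact absurd (h ▸ hk.prX u hu hA) (key v hv hv' hB)
    · rw [comb_pr2 hu', comb_pr1 (hUr v hv)] at h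
      exact absurd (h ▸ hk.prX v hv hB) (key u hu hu' hA)
    · rw [comb_pr2 hu', comb_pr2 hv'] at h
      exact hl.lk.inj u hu v hv hA hB h
  · rintro u (hu | ⟨hu, hu'⟩)
    · exact rt1 u hu
    · refine (hl.lk.rt u hu).transfer (P := fun u => u ∈ l.U ∧ u ∉ k.rf) ?_ ⟨hu, hu'⟩
      rintro u ⟨hu, hu'⟩ hA
      rcases key2 u hu hu' hA with h | h
      · right
        refine .step u ?_
        rw [comb_pr2 hu']; exact rt1 _ h
      · left; exact ⟨comb_pr2 hu', h⟩
  · rintro u (hu | ⟨hu, hu'⟩) hA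
    · rw [comb_pr1 (hUr u hu)]; exact Or.inl (hk.prX u hu hA)
    · rw [comb_pr2 hu']; exact Or.inr (hl.prX u hu hA)
  · rintro u (hu | ⟨hu, hu'⟩)
    · have := hk.US u hu; simp only [mem_comb_X, mem_comb_S]; tauto
    · have := hl.US u hu; simp only [mem_comb_X, mem_comb_S]; tauto
  · rintro u ⟨hu | hu, h3, h4⟩
    · exact Or.inl (hk.SU u hu)
    · by_cases h : u ∈ k.S
      · exact Or.inl (hk.SU u h)
      · exact Or.inr ⟨hl.SU u hu, by simp only [Wv.mem_rf]; tauto⟩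

theorem comb_le {k l : Wv Ω} : WLe k (comb k l) := by
  refine ⟨fun x hx => Or.inl hx, fun x hx => ?_, fun x hx => ?_, fun x hx => comb_pr1 hx⟩
  · simp only [mem_comb_X, mem_comb_S]; tauto
  · simp only [mem_comb_U]; tauto

open Classical in
theorem limit {ι : Type*} (f : ι → Wv Ω) (I : ι → Set Ω) (J : Set Ω)
    (hf : ∀ i, IsWv N (I i) (f i)) (hd : ∀ i j, ∃ k, WLe (f i) (f k) ∧ WLe (f j) (f k))
    (hJ : ∀ i, ∀ x ∈ (f i).rf, x ∉ J)
    (hA : ∀ a ∈ N.A, a ∉ J → ∃ i, a ∈ (f i).rf)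
    (hN : ∀ i, ∀ x ∈ (f i).X, ∀ z, N.R x z → (∃ j, z ∈ (f j).rf) ∨ z ∈ J) :
    ∃ v, IsWv N J v ∧ (∀ i, WLe (f i) v) ∧ (∀ x, x ∈ v.X ↔ ∃ i, x ∈ (f i).X) ∧
      (∀ x, x ∈ v.rf ↔ ∃ i, x ∈ (f i).rf) ∧ (∀ x, x ∈ v.U ↔ ∃ i, x ∈ (f i).U) := by
  set p : Ω → Ω := fun u => if h : ∃ i, u ∈ (f i).rf then (f h.choose).pr u else u with hp
  have hpr : ∀ i, ∀ u ∈ (f i).rf, p u = (f i).pr u := by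
    intro i u hu
    have h : ∃ i, u ∈ (f i).rf := ⟨i, hu⟩
    have h1 : p u = (f h.choose).pr u := by simp only [hp]; rw [dif_pos h]
    obtain ⟨k, hk1, hk2⟩ := hd i h.choose
    rw [h1, ← hk2.pr u h.choose_spec, hk1.pr u hu]
  have hU : ∀ i j, ∀ u ∈ (f i).rf, u ∈ (f j).U → u ∈ (f i).U := by
    intro i j u hu huj
    obtain ⟨k, hk1, hk2⟩ := hd i j
    rw [hk1.U u hu, ← hk2.U u ((hf j).US u huj)]; exact huj
  have hmem : ∀ x, x ∈ {x | ∃ i, x ∈ (f i).X} ∨ x ∈ {x | (∃ i, x ∈ (f i).S) ∧ ∀ i, x ∉ (f i).X} ↔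
      ∃ i, x ∈ (f i).rf := by
    intro x
    simp only [Set.mem_ofPred_eq, Wv.mem_rf]
    by_cases h : ∃ i, x ∈ (f i).X
    · simp only [h, true_or, true_iff]; exact h.imp fun _ h => Or.inl h
    · push Not at h; simp [h]
  refine ⟨⟨{x | ∃ i, x ∈ (f i).X}, {x | (∃ i, x ∈ (f i).S) ∧ ∀ i, x ∉ (f i).X},
    {x | ∃ i, x ∈ (f i).U}, p⟩, ?_, ?_, fun _ => Iff.rfl, hmem, fun _ => Iff.rfl⟩
  · refine ⟨?_, ?_, ?_, ?_, ?_, ?_, ⟨?_, ?_, ?_, ?_⟩, ?_, ?_, ?_⟩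
    · rintro x ⟨i, hx⟩; exact hJ i x (Or.inl hx)
    · rintro x ⟨⟨i, hx⟩, _⟩; exact hJ i x (Or.inr hx)
    · rintro x ⟨i, hx⟩ ⟨_, h⟩; exact h i hx
    · rintro x ⟨i, hx⟩; exact (hf i).XB x hx
    · intro a ha haJ; exact (hmem a).2 (hA a ha haJ)
    · rintro x ⟨i, hx⟩ z hz
      rcases hN i x hx z hz with h | h
      · rcases (hmem z).2 h with h | h
        · exact Or.inl h
        · exact Or.inr (Or.inl h)
      · exact Or.inr (Or.inr h)
    · rintro u ⟨i, hu⟩ ha; exact ⟨i, by dsimp only; rw [hpr i u ((hf i).US u hu)]; exact (hf i).lk.up u hu ha⟩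
    · rintro u ⟨i, hu⟩ ha; dsimp only; rw [hpr i u ((hf i).US u hu)]; exact (hf i).lk.upR u hu ha
    · rintro u ⟨i, hu⟩ v ⟨j, hv⟩ ha hb h
      obtain ⟨k, hk1, hk2⟩ := hd i j
      have hu' := (hk1.U u ((hf i).US u hu)).1 hu
      have hv' := (hk2.U v ((hf j).US v hv)).1 hv
      refine (hf k).lk.inj u hu' v hv' ha hb ?_
      rw [← hpr k u ((hf k).US u hu'), ← hpr k v ((hf k).US v hv')]; exact h
    · rintro u ⟨i, hu⟩
      exact ((hf i).lk.rt u hu).transfer (P := fun u => u ∈ (f i).U)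
        (fun u hu ha => Or.inl ⟨hpr i u ((hf i).US u hu), (hf i).lk.up u hu ha⟩) hu
    · rintro u ⟨i, hu⟩ ha
      exact ⟨i, by dsimp only; rw [hpr i u ((hf i).US u hu)]; exact (hf i).prX u hu ha⟩
    · rintro u ⟨i, hu⟩; exact (hmem u).2 ⟨i, (hf i).US u hu⟩
    · rintro u ⟨⟨i, hu⟩, _⟩; exact ⟨i, (hf i).SU u hu⟩
  · intro i
    refine ⟨fun x hx => ⟨i, hx⟩, fun x hx => (hmem x).2 ⟨i, Or.inr hx⟩, fun x hx => ?_, hpr i⟩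
    exact ⟨fun h => ⟨i, h⟩, fun ⟨j, h⟩ => hU i j x hx h⟩

/-- the trivial wave -/
theorem triv_isWv (N : Web Ω) (I : Set Ω) : IsWv N I ⟨∅, N.A \ I, N.A \ I, id⟩ := by
  refine ⟨?_, ?_, ?_, ?_, ?_, ?_, ⟨?_, ?_, ?_, ?_⟩, ?_, ?_, ?_⟩ <;> simp +contextual
  exact fun u h _ => .base u h

theorem exists_max {I : Set Ω} {k : Wv Ω} (hk : IsWv N I k) :
    ∃ m, IsWv N I m ∧ WLe k m ∧ (∀ v, IsWv N I v → ∀ x ∈ v.X, x ∈ m.X) ∧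
      (∀ v, IsWv N I v → ∀ x ∈ v.rf, x ∈ m.rf) := by
  let T := {l : Wv Ω // IsWv N I l ∧ WLe k l}
  obtain ⟨m, hm⟩ := exists_maximal_of_chains_bounded (α := T) (r := fun a b => WLe a.1 b.1)
    (fun c hc => by
      rcases c.eq_empty_or_nonempty with rfl | ⟨c0, hc0⟩
      · exact ⟨⟨k, hk, WLe.refl k⟩, by simp⟩
      obtain ⟨v, hv, hv2, -⟩ := limit (N := N) (fun i : c => i.1.1) (fun _ => I) I
        (fun i => i.1.2.1)
        (by
          rintro ⟨i, hi⟩ ⟨j, hj⟩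
          by_cases hij : i = j
          · subst hij; exact ⟨⟨i, hi⟩, WLe.refl _, WLe.refl _⟩
          · rcases hc hi hj hij with h | h
            · exact ⟨⟨j, hj⟩, h, WLe.refl _⟩
            · exact ⟨⟨i, hi⟩, WLe.refl _, h⟩)
        (fun i x hx => hx.elim (i.1.2.1.dX x) (i.1.2.1.dS x))
        (fun a ha haI => ⟨⟨c0, hc0⟩, c0.2.1.cov a ha haI⟩)
        (fun i x hx z hz => by
          rcases i.1.2.1.nb x hx z hz with h | h | h
          · exact Or.inl ⟨i, Or.inl h⟩
          · exact Or.inl ⟨i, Or.inr h⟩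
          · exact Or.inr h)
      exact ⟨⟨v, hv, c0.2.2.trans (hv2 ⟨c0, hc0⟩)⟩, fun a ha => hv2 ⟨a, ha⟩⟩)
    (fun {a b c} h h' => WLe.trans h h')
  have H : ∀ v, IsWv N I v → WLe (comb m.1 v) m.1 := fun v hv =>
    hm ⟨comb m.1 v, comb_isWv m.2.1 hv (fun x hx h => h.elim (fun h => hv.dX x h hx)
      (fun h => hv.dS x h hx)) (fun x hx => Or.inl hx), m.2.2.trans comb_le⟩ comb_le
  exact ⟨m.1, m.2.1, m.2.2, fun v hv x hx => (H v hv).X x (Or.inr hx),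
    fun v hv x hx => (H v hv).rf (mem_comb_rf.2 (Or.inr hx))⟩

end EMW
end Part1

section Part2
namespace EMW
variable {Ω : Type w} {N : Web Ω}

open Classical in
/-- alternating moves -/
inductive Rch (N : Web Ω) (k : Wv Ω) (a : Ω) : Set Ω → (Ω → Ω) → Ω → Prop
  | init : Rch N k a (insert a k.U) k.pr a
  | ext (U : Set Ω) (pr : Ω → Ω) (u z : Ω) (h : Rch N k a U pr u) (hz : z ∉ U)
      (hr : N.R u z) (hX : z ∈ k.X) : Rch N k a (insert z U) (Function.update pr z u) z
  | steal (U : Set Ω) (pr : Ω → Ω) (u z : Ω) (h : Rch N k a U pr u) (hz : z ∈ U)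
      (hr : N.R u z) (hroot : Rooted N.A (Function.update pr z u) u) :
      Rch N k a U (Function.update pr z u) (pr z)
  | retract (U : Set Ω) (pr : Ω → Ω) (u : Ω) (h : Rch N k a U pr u) (hA : u ∉ N.A) :
      Rch N k a (U \ {u}) pr (pr u)

def KK (N : Web Ω) (k : Wv Ω) (a : Ω) : Set Ω := {u | ∃ U pr, Rch N k a U pr u}

structure Inv (N : Web Ω) (k : Wv Ω) (a : Ω) (U : Set Ω) (pr : Ω → Ω) (u : Ω) : Prop where
  lk : IsLink N U pr
  Urf : ∀ v ∈ U, v ∈ k.X ∨ v ∈ k.S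
  prX : ∀ v ∈ U, v ∉ N.A → pr v ∈ k.X
  SU : ∀ v ∈ k.S, v ∈ U
  uU : u ∈ U
  uX : u ∈ k.X
  dead : ∀ v ∈ U, v ∉ N.A → pr v ≠ u
  i1 : ∀ z ∈ U, z ∉ N.A → (z ∉ k.U ∨ pr z ≠ k.pr z) → pr z ∈ KK N k a
  i2 : ∀ z ∈ U, z ∉ k.U → z ∈ KK N k a
  i3 : ∀ z ∈ k.U, z ∉ N.A → z ∈ U → pr z ≠ k.pr z → k.pr z ∈ KK N k a
  i4 : ∀ z ∈ k.U, z ∉ U → z ∈ KK N k a ∧ z ∉ N.A ∧ k.pr z ∈ KK N k a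

open Classical in
theorem rch_inv {I : Set Ω} {k : Wv Ω} (hk : IsWv N I k) {a : Ω} (ha : a ∈ N.A) (haI : a ∉ I)
    (haU : a ∉ k.U) {U : Set Ω} {pr : Ω → Ω} {u : Ω} (h : Rch N k a U pr u) :
    Inv N k a U pr u := by
  have haX : a ∈ k.X := (hk.cov a ha haI).resolve_right fun h => haU (hk.SU a h)
  have haK : a ∈ KK N k a := ⟨_, _, .init⟩
  induction h with
  | init =>
    have hne : ∀ v ∈ (insert a k.U : Set Ω), v ∉ N.A → v ∈ k.U := by
      rintro v (rfl | hv) hA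
      · exact absurd ha hA
      · exact hv
    refine ⟨⟨fun v hv hA => Or.inr (hk.lk.up v (hne v hv hA) hA),
      fun v hv hA => hk.lk.upR v (hne v hv hA) hA,
      fun v hv v' hv' hA hA' => hk.lk.inj v (hne v hv hA) v' (hne v' hv' hA') hA hA', ?_⟩,
      ?_, fun v hv hA => hk.prX v (hne v hv hA) hA, fun v hv => Or.inr (hk.SU v hv),
      Or.inl rfl, haX, ?_, ?_, ?_, ?_, ?_⟩
    · rintro v (rfl | hv)
      · exact .base _ ha
      · exact hk.lk.rt v hv
    · rintro v (rfl | hv)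
      · exact Or.inl haX
      · exact hk.US v hv
    · intro v hv hA h
      exact haU (h ▸ hk.lk.up v (hne v hv hA) hA)
    · intro v hv hA h
      exact absurd (hne v hv hA) (by tauto)
    · rintro v (rfl | hv) hv'
      · exact haK
      · exact absurd hv hv'
    · intro v hv hA _ h; exact absurd rfl h
    · intro v hv hv'; exact absurd (Or.inr hv) hv'
  | ext U pr u z h hz hr hX ih =>
    have hzK : z ∈ KK N k a := ⟨_, _, .ext U pr u z h hz hr hX⟩
    have huK : u ∈ KK N k a := ⟨_, _, h⟩
    have hzA : z ∉ N.A := N.hRA u z hr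
    have huz : u ≠ z := fun h => hz (h ▸ ih.uU)
    have e1 : ∀ v ∈ U, Function.update pr z u v = pr v := fun v hv =>
      Function.update_of_ne (fun h : v = z => hz (h ▸ hv)) _ _
    have e2 : Function.update pr z u z = u := Function.update_self _ _ _
    have r1 : ∀ v ∈ U, Rooted N.A (Function.update pr z u) v := fun v hv =>
      (ih.lk.rt v hv).transfer (P := fun v => v ∈ U)
        (fun v hv hA => Or.inl ⟨e1 v hv, ih.lk.up v hv hA⟩) hv
    refine ⟨⟨?_, ?_, ?_, ?_⟩, ?_, ?_, ?_, ?_, ?_, ?_, ?_, ?_, ?_, ?_⟩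
    · rintro v (rfl | hv) hA
      · rw [e2]; exact Or.inr ih.uU
      · rw [e1 v hv]; exact Or.inr (ih.lk.up v hv hA)
    · rintro v (rfl | hv) hA
      · rw [e2]; exact hr
      · rw [e1 v hv]; exact ih.lk.upR v hv hA
    · rintro v (rfl | hv) v' (rfl | hv') hA hA' h
      · rfl
      · rw [e2, e1 v' hv'] at h; exact absurd h.symm (ih.dead v' hv' hA')
      · rw [e2, e1 v hv] at h; exact absurd h (ih.dead v hv hA)
      · rw [e1 v hv, e1 v' hv'] at h; exact ih.lk.inj v hv v' hv' hA hA' h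
    · rintro v (rfl | hv)
      · exact .step _ (e2.symm ▸ r1 u ih.uU)
      · exact r1 v hv
    · rintro v (rfl | hv)
      · exact Or.inl hX
      · exact ih.Urf v hv
    · rintro v (rfl | hv) hA
      · rw [e2]; exact ih.uX
      · rw [e1 v hv]; exact ih.prX v hv hA
    · intro v hv; exact Or.inr (ih.SU v hv)
    · exact Or.inl rfl
    · exact hX
    · rintro v (rfl | hv) hA
      · rw [e2]; exact huz
      · rw [e1 v hv]; exact fun h => hz (h ▸ ih.lk.up v hv hA)
    · rintro v (rfl | hv) hA h
      · rw [e2]; exact huK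
      · rw [e1 v hv] at h ⊢; exact ih.i1 v hv hA h
    · rintro v (rfl | hv) hv'
      · exact hzK
      · exact ih.i2 v hv hv'
    · rintro v hvk hA (rfl | hv) h
      · exact (ih.i4 v hvk hz).2.2
      · rw [e1 v hv] at h; exact ih.i3 v hvk hA hv h
    · intro v hvk hv
      exact ih.i4 v hvk (fun h => hv (Or.inr h))
  | steal U pr u z h hz hr hroot ih =>
    have huK : u ∈ KK N k a := ⟨_, _, h⟩
    have hzA : z ∉ N.A := N.hRA u z hr
    have hpK : pr z ∈ KK N k a := ⟨_, _, .steal U pr u z h hz hr hroot⟩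
    have e1 : ∀ v, v ≠ z → Function.update pr z u v = pr v := fun v hv =>
      Function.update_of_ne hv _ _
    have e2 : Function.update pr z u z = u := Function.update_self _ _ _
    refine ⟨⟨?_, ?_, ?_, ?_⟩, ih.Urf, ?_, ih.SU, ih.lk.up z hz hzA, ih.prX z hz hzA,
      ?_, ?_, ih.i2, ?_, ih.i4⟩
    · intro v hv hA
      by_cases hvz : v = z
      · subst hvz; rw [e2]; exact ih.uU
      · rw [e1 v hvz]; exact ih.lk.up v hv hA
    · intro v hv hA
      by_cases hvz : v = z
      · subst hvz; rw [e2]; exact hr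
      · rw [e1 v hvz]; exact ih.lk.upR v hv hA
    · intro v hv v' hv' hA hA' h
      by_cases hvz : v = z <;> by_cases hvz' : v' = z
      · rw [hvz, hvz']
      · subst hvz; rw [e2, e1 v' hvz'] at h; exact absurd h.symm (ih.dead v' hv' hA')
      · subst hvz'; rw [e2, e1 v hvz] at h; exact absurd h (ih.dead v hv hA)
      · rw [e1 v hvz, e1 v' hvz'] at h; exact ih.lk.inj v hv v' hv' hA hA' h
    · intro v hv
      refine (ih.lk.rt v hv).transfer (P := fun v => v ∈ U) (fun v hv hA => ?_) hv
      by_cases hvz : v = z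
      · subst hvz; right; refine .step _ ?_; rw [e2]; exact hroot
      · left; exact ⟨e1 v hvz, ih.lk.up v hv hA⟩
    · intro v hv hA
      by_cases hvz : v = z
      · subst hvz; rw [e2]; exact ih.uX
      · rw [e1 v hvz]; exact ih.prX v hv hA
    · intro v hv hA h
      by_cases hvz : v = z
      · subst hvz; rw [e2] at h; exact ih.dead v hz hzA h.symm
      · rw [e1 v hvz] at h; exact hvz (ih.lk.inj v hv z hz hA hzA h)
    · intro v hv hA h
      by_cases hvz : v = z
      · subst hvz; rw [e2]; exact huK
      · rw [e1 v hvz] at h ⊢; exact ih.i1 v hv hA h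
    · intro v hvk hA hv h
      by_cases hvz : v = z
      · subst hvz
        by_cases h3 : pr v = k.pr v
        · exact h3 ▸ hpK
        · exact ih.i3 v hvk hA hv h3
      · rw [e1 v hvz] at h; exact ih.i3 v hvk hA hv h
  | retract U pr u h hA ih =>
    have huK : u ∈ KK N k a := ⟨_, _, h⟩
    have hpK : pr u ∈ KK N k a := ⟨_, _, .retract U pr u h hA⟩
    refine ⟨⟨fun v hv hA => ⟨ih.lk.up v hv.1 hA, fun h => ih.dead v hv.1 hA h⟩,
      fun v hv hA => ih.lk.upR v hv.1 hA,
      fun v hv v' hv' => ih.lk.inj v hv.1 v' hv'.1, fun v hv => ih.lk.rt v hv.1⟩,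
      fun v hv => ih.Urf v hv.1, fun v hv => ih.prX v hv.1,
      fun v hv => ⟨ih.SU v hv, fun h => hk.XS u ih.uX (h ▸ hv)⟩,
      ⟨ih.lk.up u ih.uU hA, fun h => ih.dead u ih.uU hA h⟩, ih.prX u ih.uU hA,
      fun v hv hA' h => hv.2 (ih.lk.inj v hv.1 u ih.uU hA' hA h),
      fun z hz => ih.i1 z hz.1, fun z hz => ih.i2 z hz.1, fun z hzk hA hz => ih.i3 z hzk hA hz.1, ?_⟩
    intro z hzk hz
    by_cases hzu : z = u
    · subst hzu
      refine ⟨huK, hA, ?_⟩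
      by_cases h3 : pr z = k.pr z
      · exact h3 ▸ hpK
      · exact ih.i3 z hzk hA ih.uU h3
    · exact ih.i4 z hzk (fun h => hz ⟨h, hzu⟩)

open Classical in
theorem rch_anc {k : Wv Ω} {a : Ω} {z c : Ω} {pr : Ω → Ω} {x : Ω} (hx : Rooted N.A pr x) :
    ∀ U, Rch N k a U pr x → z ∈ KK N k a ∨ Rooted N.A (Function.update pr z c) x := by
  induction hx with
  | base x hx => exact fun _ _ => Or.inr (.base x hx)
  | step x _ ih =>
    intro U h
    by_cases hA : x ∈ N.A
    · exact Or.inr (.base x hA)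
    by_cases hxz : x = z
    · exact Or.inl (hxz ▸ ⟨_, _, h⟩)
    · refine (ih _ (.retract U pr x h hA)).imp id fun h => .step x ?_
      rw [Function.update_of_ne hxz]; exact h

/-- the wave `k` can be made to reach `y` -/
def Gets (N : Web Ω) (k : Wv Ω) (y : Ω) : Prop :=
  ∃ U pr, IsLink N U pr ∧ (∀ v ∈ U, v ∈ k.X ∨ v ∈ k.S ∨ v = y) ∧ (∀ v ∈ k.S, v ∈ U) ∧ y ∈ U ∧
    ∀ v ∈ U, v ∉ N.A → pr v ∈ k.X

open Classical in
theorem aug {I : Set Ω} {k : Wv Ω} (hk : IsWv N I k) {a : Ω} (ha : a ∈ N.A) (haI : a ∉ I)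
    (haU : a ∉ k.U) :
    ∃ l, IsWv N I l ∧ (∀ x ∈ l.X, x ∈ k.X) ∧ (∀ x ∈ l.rf, x ∈ k.rf) ∧ a ∈ l.X ∧ a ∉ l.U ∧
      ∀ x ∈ l.X, ∀ y, N.R x y → y ∉ l.X → y ∉ l.S → Gets N l y := by
  have inv := fun {U pr u} => rch_inv hk ha haI haU (U := U) (pr := pr) (u := u)
  set K := KK N k a with hK
  have haK : a ∈ K := ⟨_, _, .init⟩
  have KX : ∀ x ∈ K, x ∈ k.X := fun x ⟨U, pr, h⟩ => (inv h).uX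
  have Kpr : ∀ x ∈ K, x ∈ k.U → x ∉ N.A → k.pr x ∈ K := by
    rintro x ⟨U, pr, h⟩ hxU hxA
    by_cases h3 : pr x = k.pr x
    · exact h3 ▸ ⟨_, _, .retract U pr x h hxA⟩
    · exact (inv h).i3 x hxU hxA (inv h).uU h3
  set SK : Set Ω := {z | z ∉ K ∧ ((z ∈ N.A ∧ z ∉ I) ∨ (z ∈ k.U ∧ z ∉ N.A ∧ k.pr z ∈ K))} with hSK
  have SKrf : ∀ z ∈ SK, z ∈ k.rf := by
    rintro z ⟨_, h | h⟩
    · exact hk.cov z h.1 h.2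
    · exact hk.US z h.1
  have Knb : ∀ x ∈ K, ∀ z, N.R x z → z ∈ K ∨ z ∈ SK ∨ z ∈ I := by
    rintro u ⟨U, pr, h⟩ z hr
    by_contra! hcon
    obtain ⟨hzK, hzS, hzI⟩ := hcon
    have hzA := N.hRA u z hr
    have i := inv h
    have hzr : z ∈ k.X ∨ z ∈ k.S := by
      rcases hk.nb u i.uX z hr with h | h | h
      · exact Or.inl h
      · exact Or.inr h
      · exact absurd h hzI
    by_cases hzU : z ∈ U
    · rcases rch_anc (c := u) (z := z) (i.lk.rt u i.uU) U h with h1 | h1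
      · exact hzK h1
      · have hp : pr z ∈ K := ⟨_, _, .steal U pr u z h hzU hr h1⟩
        have hzk : z ∈ k.U := by
          by_contra hzk; exact hzK (i.i2 z hzU hzk)
        have hp0 : k.pr z ∈ K := by
          by_cases h3 : pr z = k.pr z
          · exact h3 ▸ hp
          · exact i.i3 z hzk hzA hzU h3
        exact hzS ⟨hzK, Or.inr ⟨hzk, hzA, hp0⟩⟩
    · have hzX : z ∈ k.X := hzr.resolve_right fun h => hzU (i.SU z h)
      exact hzK ⟨_, _, .ext U pr u z h hzU hr hzX⟩
  have cl : ∀ u, (u ∈ k.U ∧ u ∈ K ∨ u ∈ SK) → u ∉ N.A → u ∈ k.U ∧ k.pr u ∈ K := by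
    rintro u (⟨h, h'⟩ | ⟨_, h | h⟩) hA
    · exact ⟨h, Kpr u h' h hA⟩
    · exact absurd h.1 hA
    · exact ⟨h.1, h.2.2⟩
  refine ⟨⟨K, SK, {u | u ∈ k.U ∧ u ∈ K ∨ u ∈ SK}, k.pr⟩, ?_, KX, ?_, haK, ?_, ?_⟩
  · refine ⟨fun x hx => hk.dX x (KX x hx), ?_, fun x hx h => h.1 hx, fun x hx => hk.XB x (KX x hx),
      ?_, Knb, ⟨?_, ?_, ?_, ?_⟩, fun u hu hA => (cl u hu hA).2, ?_, fun u hu => Or.inr hu⟩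
    · intro x hx hI
      exact (SKrf x hx).elim (fun h => hk.dX x h hI) (fun h => hk.dS x h hI)
    · intro b hb hbI
      by_cases h : b ∈ K
      · exact Or.inl h
      · exact Or.inr ⟨h, Or.inl ⟨hb, hbI⟩⟩
    · intro u hu hA
      exact Or.inl ⟨hk.lk.up u (cl u hu hA).1 hA, (cl u hu hA).2⟩
    · intro u hu hA; exact hk.lk.upR u (cl u hu hA).1 hA
    · intro u hu v hv hA hB; exact hk.lk.inj u (cl u hu hA).1 v (cl v hv hB).1 hA hB
    · intro u hu
      by_cases hA : u ∈ N.A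
      · exact .base u hA
      · exact hk.lk.rt u (cl u hu hA).1
    · rintro u (⟨h, h'⟩ | h)
      · exact Or.inl h'
      · exact Or.inr h
  · rintro x (hx | hx)
    · exact Or.inl (KX x hx)
    · exact SKrf x hx
  · rintro (h | h)
    · exact haU h.1
    · exact h.1 haK
  · rintro u hu y hr hyK hyS
    obtain ⟨U, pr, h⟩ := id hu
    have hyI : y ∈ I := ((Knb u hu y hr).resolve_left hyK).resolve_left hyS
    have i := inv h
    have hyA := N.hRA u y hr
    have hyU : y ∉ U := fun h => (i.Urf y h).elim (fun h => hk.dX y h hyI) (fun h => hk.dS y h hyI)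
    have cl2 : ∀ v, (v ∈ U ∧ v ∈ K ∨ v ∈ SK) → v ∉ N.A → v ∈ U ∧ pr v ∈ K := by
      have aux : ∀ v ∈ U, v ∉ N.A → (v ∈ k.U → k.pr v ∈ K) → pr v ∈ K := by
        intro v hv hA h1
        by_cases h2 : v ∉ k.U ∨ pr v ≠ k.pr v
        · exact i.i1 v hv hA h2
        · push Not at h2; rw [h2.2]; exact h1 h2.1
      rintro v (⟨h1, h2⟩ | ⟨h0, h1 | h1⟩) hA
      · exact ⟨h1, aux v h1 hA fun h3 => Kpr v h2 h3 hA⟩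
      · exact absurd h1.1 hA
      · have : v ∈ U := by
          by_contra h2; exact h0 (i.i4 v h1.1 h2).1
        exact ⟨this, aux v this hA fun _ => h1.2.2⟩
    have e2 : Function.update pr y u y = u := Function.update_self _ _ _
    have e1 : ∀ v, (v ∈ U ∧ v ∈ K ∨ v ∈ SK) → v ∉ N.A → Function.update pr y u v = pr v :=
      fun v hv hA => Function.update_of_ne (fun h : v = y => hyU (h ▸ (cl2 v hv hA).1)) _ _
    have r1 : ∀ v ∈ U, Rooted N.A (Function.update pr y u) v := fun v hv =>
      (i.lk.rt v hv).transfer (P := fun v => v ∈ U)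
        (fun v hv hA => Or.inl ⟨Function.update_of_ne (fun h : v = y => hyU (h ▸ hv)) _ _,
          i.lk.up v hv hA⟩) hv
    refine ⟨{v | (v ∈ U ∧ v ∈ K ∨ v ∈ SK) ∨ v = y}, Function.update pr y u,
      ⟨?_, ?_, ?_, ?_⟩, ?_, fun v hv => Or.inl (Or.inr hv), Or.inr rfl, ?_⟩
    · rintro v (hv | rfl) hA
      · rw [e1 v hv hA]
        exact Or.inl (Or.inl ⟨i.lk.up v (cl2 v hv hA).1 hA, (cl2 v hv hA).2⟩)
      · rw [e2]; exact Or.inl (Or.inl ⟨i.uU, hu⟩)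
    · rintro v (hv | rfl) hA
      · rw [e1 v hv hA]; exact i.lk.upR v (cl2 v hv hA).1 hA
      · rw [e2]; exact hr
    · rintro v (hv | rfl) v' (hv' | rfl) hA hA' h
      · rw [e1 v hv hA, e1 v' hv' hA'] at h
        exact i.lk.inj v (cl2 v hv hA).1 v' (cl2 v' hv' hA').1 hA hA' h
      · rw [e1 v hv hA, e2] at h; exact absurd h (i.dead v (cl2 v hv hA).1 hA)
      · rw [e1 v' hv' hA', e2] at h; exact absurd h.symm (i.dead v' (cl2 v' hv' hA').1 hA')
      · rfl
    · rintro v (hv | rfl)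
      · by_cases hA : v ∈ N.A
        · exact .base v hA
        · exact r1 v (cl2 v hv hA).1
      · exact .step _ (by rw [e2]; exact r1 u i.uU)
    · rintro v ((hv | hv) | rfl)
      · exact Or.inl hv.2
      · exact Or.inr (Or.inl hv)
      · exact Or.inr (Or.inr rfl)
    · rintro v (hv | rfl) hA
      · rw [e1 v hv hA]; exact (cl2 v hv hA).2
      · rw [e2]; exact hu

end EMW
end Part2

section Part3
namespace EMW
variable {Ω : Type w} {N : Web Ω}

def fillW (V : Wv Ω) (G : Set Ω) : Wv Ω := ⟨V.X ∪ G, V.S, V.U, V.pr⟩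

theorem fill {J Z G : Set Ω} {V : Wv Ω} (hV : IsWv N J V) (hJ : J = Z ∪ G)
    (hd : ∀ g ∈ G, g ∉ Z) (hB : ∀ g ∈ G, g ∉ N.B)
    (hn : ∀ g ∈ G, ∀ z, N.R g z → z ∈ V.rf ∨ z ∈ J) : IsWv N Z (fillW V G) := by
  subst hJ
  refine ⟨?_, ?_, ?_, ?_, ?_, ?_, hV.lk, ?_, ?_, hV.SU⟩
  · rintro x (hx | hx) hZ
    · exact hV.dX x hx (Or.inl hZ)
    · exact hd x hx hZ
  · intro x hx hZ; exact hV.dS x hx (Or.inl hZ)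
  · rintro x (hx | hx) hS
    · exact hV.XS x hx hS
    · exact hV.dS x hS (Or.inr hx)
  · rintro x (hx | hx)
    · exact hV.XB x hx
    · exact hB x hx
  · intro a ha haZ
    by_cases h : a ∈ G
    · exact Or.inl (Or.inr h)
    · rcases hV.cov a ha (fun h' => h'.elim haZ h) with h | h
      · exact Or.inl (Or.inl h)
      · exact Or.inr h
  · rintro x (hx | hx) z hz
    · rcases hV.nb x hx z hz with h | h | h | h
      · exact Or.inl (Or.inl h)
      · exact Or.inr (Or.inl h)
      · exact Or.inr (Or.inr h)
      · exact Or.inl (Or.inr h)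
    · rcases hn x hx z hz with (h | h) | h | h
      · exact Or.inl (Or.inl h)
      · exact Or.inr (Or.inl h)
      · exact Or.inr (Or.inr h)
      · exact Or.inl (Or.inr h)
  · intro u hu hA; exact Or.inl (hV.prX u hu hA)
  · intro u hu; exact (hV.US u hu).imp Or.inl id

theorem fill_le {V : Wv Ω} {G : Set Ω} : WLe V (fillW V G) :=
  ⟨fun _ h => Or.inl h, fun _ h => Or.inr h, fun _ _ => Iff.rfl, fun _ _ => rfl⟩

/-- Turn a trimmed wave into one reaching `y`. -/
theorem gets_isWv {I : Set Ω} {k : Wv Ω} {y : Ω} (hk : IsWv N (insert y I) k) (hy : y ∉ I)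
    (hg : Gets N k y) :
    ∃ l, IsWv N I l ∧ (∀ x, x ∈ l.X ↔ x ∈ k.X) ∧ (∀ x, x ∈ l.S ↔ x ∈ k.S ∨ x = y) := by
  obtain ⟨U, pr, h1, h2, h3, h4, h5⟩ := hg
  have hyX : y ∉ k.X := fun h => hk.dX y h (Or.inl rfl)
  refine ⟨⟨k.X, {x | x ∈ k.S ∨ x = y}, U, pr⟩, ⟨?_, ?_, ?_, hk.XB, ?_, ?_, h1, h5, h2, ?_⟩,
    fun x => Iff.rfl, fun x => Iff.rfl⟩
  · intro x hx hI; exact hk.dX x hx (Or.inr hI)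
  · rintro x (hx | rfl) hI
    · exact hk.dS x hx (Or.inr hI)
    · exact hy hI
  · rintro x hx (hS | rfl)
    · exact hk.XS x hx hS
    · exact hyX hx
  · intro a ha haI
    by_cases hay : a = y
    · exact Or.inr (Or.inr hay)
    · exact (hk.cov a ha (fun h => h.elim hay haI)).imp id Or.inl
  · intro x hx z hz
    rcases hk.nb x hx z hz with h | h | h | h
    · exact Or.inl h
    · exact Or.inr (Or.inl (Or.inl h))
    · exact Or.inr (Or.inl (Or.inr h))
    · exact Or.inr (Or.inr h)
  · rintro u (hu | rfl)
    · exact h3 u hu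
    · exact h4

/-- restoring deleted points that are not neighbours -/
theorem undel {I J : Set Ω} {k : Wv Ω} (hk : IsWv N J k) (hI : ∀ x ∈ I, x ∈ J)
    (hA : ∀ a ∈ N.A, a ∈ J → a ∈ I)
    (hn : ∀ x ∈ k.X, ∀ z, N.R x z → z ∈ J → z ∈ k.rf ∨ z ∈ I) : IsWv N I k := by
  refine ⟨fun x hx h => hk.dX x hx (hI x h), fun x hx h => hk.dS x hx (hI x h), hk.XS, hk.XB,
    fun a ha haI => hk.cov a ha fun h => haI (hA a ha h), ?_, hk.lk, hk.prX, hk.US, hk.SU⟩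
  intro x hx z hz
  rcases hk.nb x hx z hz with h | h | h
  · exact Or.inl h
  · exact Or.inr (Or.inl h)
  · rcases hn x hx z hz h with (h | h) | h
    · exact Or.inl h
    · exact Or.inr (Or.inl h)
    · exact Or.inr (Or.inr h)

theorem unh_insert {I : Set Ω} {x : Ω} (hI : Unh N I) (hxA : x ∉ N.A) (hxI : x ∉ I)
    (hx : ∀ k, IsWv N I k → x ∉ k.S) : Unh N (insert x I) := by
  intro k hk a ha haI
  by_contra haU
  obtain ⟨l, hl, -, -, haX, haU', hg⟩ := aug hk ha haI haU
  by_cases h : ∃ u ∈ l.X, N.R u x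
  · obtain ⟨u, hu, hr⟩ := h
    have := hg u hu x hr (fun h => hl.dX x h (Or.inl rfl)) (fun h => hl.dS x h (Or.inl rfl))
    obtain ⟨m, hm, -, h2⟩ := gets_isWv hl hxI this
    exact hx m hm ((h2 x).2 (Or.inr rfl))
  · push Not at h
    refine haU' (hI l (undel hl (fun _ h => Or.inr h) ?_ ?_) a ha fun h => haI (Or.inr h))
    · rintro b hb (rfl | h)
      · exact absurd hb hxA
      · exact h
    · rintro u hu z hz (rfl | h')
      · exact absurd hz (h u hu)
      · exact Or.inr h'

theorem unh_source {I : Set Ω} {a : Ω} (hI : Unh N I) (ha : a ∈ N.A) : Unh N (insert a I) := by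
  by_cases haI : a ∈ I
  · rwa [Set.insert_eq_of_mem haI]
  intro k hk b hb hbI
  have haX : a ∉ k.X := fun h => hk.dX a h (Or.inl rfl)
  have : IsWv N I ⟨k.X, insert a k.S, insert a k.U, k.pr⟩ := by
    refine ⟨fun x hx h => hk.dX x hx (Or.inr h), ?_, ?_, hk.XB, ?_, ?_, ⟨?_, ?_, ?_, ?_⟩, ?_, ?_, ?_⟩
    · rintro x (rfl | hx) h
      · exact haI h
      · exact hk.dS x hx (Or.inr h)
    · rintro x hx (rfl | h)
      · exact haX hx
      · exact hk.XS x hx h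
    · intro c hc hcI
      by_cases h : c = a
      · exact Or.inr (Or.inl h)
      · exact (hk.cov c hc (fun h' => h'.elim h hcI)).imp id Or.inr
    · intro x hx z hz
      rcases hk.nb x hx z hz with h | h | h | h
      · exact Or.inl h
      · exact Or.inr (Or.inl (Or.inr h))
      · exact Or.inr (Or.inl (Or.inl h))
      · exact Or.inr (Or.inr h)
    · rintro u (rfl | hu) hA
      · exact absurd ha hA
      · exact Or.inr (hk.lk.up u hu hA)
    · rintro u (rfl | hu) hA
      · exact absurd ha hA
      · exact (hk.lk.upR u hu hA)
    · rintro u (rfl | hu) v (rfl | hv) hA hB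
      · exact absurd ha hA
      · exact absurd ha hA
      · exact absurd ha hB
      · exact hk.lk.inj u hu v hv hA hB
    · rintro u (rfl | hu)
      · exact .base _ ha
      · exact hk.lk.rt u hu
    · rintro u (rfl | hu) hA
      · exact absurd ha hA
      · exact hk.prX u hu hA
    · rintro u (rfl | hu)
      · exact Or.inr (Or.inl rfl)
      · exact (hk.US u hu).imp id Or.inr
    · rintro u (rfl | hu)
      · exact Or.inl rfl
      · exact Or.inr (hk.SU u hu)
  rcases hI _ this b hb (fun h => hbI (Or.inr h)) with h | h
  · exact absurd (Or.inl h) hbI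
  · exact h

/-- ancestor relation -/
inductive Anc (A : Set Ω) (pr : Ω → Ω) (x : Ω) : Ω → Prop
  | refl : Anc A pr x x
  | step (v : Ω) (hv : v ∉ A) (h : Anc A pr x (pr v)) : Anc A pr x v

theorem Anc.up {A : Set Ω} {pr : Ω → Ω} {x v : Ω} (h : Anc A pr x v) (hx : x ∉ A) :
    Anc A pr (pr x) v := by
  induction h with
  | refl => exact .step _ hx .refl
  | step v hv _ ih => exact .step v hv ih

theorem Anc.memU {U : Set Ω} {pr : Ω → Ω} (hl : IsLink N U pr) {x v : Ω} (h : Anc N.A pr x v)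
    (hv : v ∈ U) : x ∈ U := by
  induction h with
  | refl => exact hv
  | step v hA _ ih => exact ih (hl.up v hv hA)

theorem exists_root {A : Set Ω} {pr : Ω → Ω} {v : Ω} (h : Rooted A pr v) : ∃ a ∈ A, Anc A pr a v := by
  induction h with
  | base a ha => exact ⟨a, ha, .refl⟩
  | step u _ ih =>
    by_cases hA : u ∈ A
    · exact ⟨u, hA, .refl⟩
    · obtain ⟨a, ha, h⟩ := ih
      exact ⟨a, ha, .step u hA h⟩

theorem sub_link {U U' : Set Ω} {pr : Ω → Ω} (h : IsLink N U pr) (hU : ∀ u ∈ U', u ∈ U)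
    (hc : ∀ u ∈ U', u ∉ N.A → pr u ∈ U') : IsLink N U' pr :=
  ⟨hc, fun u hu => h.upR u (hU u hu), fun u hu v hv => h.inj u (hU u hu) v (hU v hv),
    fun u hu => h.rt u (hU u hu)⟩

theorem mono {I : Set Ω} {k : Wv Ω} (hk : IsWv N I k) {c : Ω} (hcA : c ∉ N.A) (hcI : c ∉ I)
    (hun : Unh N (insert c I)) :
    c ∉ k.S ∧ ∃ l, IsWv N (insert c I) l ∧ (∀ x, x ∈ l.X ↔ x ∈ k.X ∧ x ≠ c) ∧
      (∀ x, x ∈ l.S ↔ x ∈ k.S) := by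
  by_cases hq : ∃ q ∈ k.S, Anc N.A k.pr c q
  · obtain ⟨q, hqS, hqc⟩ := hq
    have hqA : q ∉ N.A := by
      cases hqc with
      | refl => exact hcA
      | step _ h _ => exact h
    have hqU := hk.SU q hqS
    obtain ⟨a, ha, haq⟩ := exists_root (hk.lk.rt q hqU)
    have haU : a ∈ k.U := haq.memU hk.lk hqU
    have hcU : c ∈ k.U := hqc.memU hk.lk hqU
    have hDX : ∀ x, Anc N.A k.pr x q → x = q ∨ x ∈ k.X := by
      have : ∀ x v, Anc N.A k.pr x v → v ∈ k.U → x = v ∨ x ∈ k.X := by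
        intro x v h
        induction h with
        | refl => exact fun _ => Or.inl rfl
        | step v hv h ih =>
          intro hvU
          rcases ih (hk.lk.up v hvU hv) with h1 | h1
          · exact Or.inr (h1 ▸ hk.prX v hvU hv)
          · exact Or.inr h1
      exact fun x h => this x q h hqU
    -- removing the path ending at `q`
    let U' : Set Ω := {u | u ∈ k.U ∧ ¬ Anc N.A k.pr u q}
    have hU'c : ∀ u ∈ U', u ∉ N.A → k.pr u ∈ U' := by
      rintro u ⟨hu, hu'⟩ hA
      refine ⟨hk.lk.up u hu hA, fun h => ?_⟩
      have : ∀ v, Anc N.A k.pr (k.pr u) v → v ∈ k.U → k.pr u = v ∨ Anc N.A k.pr u v := by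
        intro v h
        induction h with
        | refl => exact fun _ => Or.inl rfl
        | step v hv h ih =>
          intro hvU
          rcases ih (hk.lk.up v hvU hv) with h1 | h1
          · rw [hk.lk.inj u hu v hvU hA hv h1]; exact Or.inr .refl
          · exact Or.inr (.step v hv h1)
      rcases this q h hqU with h1 | h1
      · exact hk.XS _ (hk.prX u hu hA) (h1 ▸ hqS)
      · exact hu' h1
    let k' : Wv Ω := ⟨{x | x ∈ k.X ∧ x ≠ c}, {x | x ∈ k.S ∧ x ≠ q}, U', k.pr⟩
    have hk' : IsWv N (insert q (insert c I)) k' := by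
      refine ⟨?_, ?_, fun x hx h => hk.XS x hx.1 h.1, fun x hx => hk.XB x hx.1, ?_, ?_,
        sub_link hk.lk (fun u hu => hu.1) hU'c, ?_, ?_, ?_⟩
      · rintro x ⟨hx, hxc⟩ (rfl | rfl | h)
        · exact hk.XS x hx hqS
        · exact hxc rfl
        · exact hk.dX x hx h
      · rintro x ⟨hx, hxq⟩ (rfl | rfl | h)
        · exact hxq rfl
        · rcases hDX x hqc with h | h
          · exact hxq h
          · exact hk.XS x h hx
        · exact hk.dS x hx h
      · intro b hb hbJ
        have h1 : b ≠ q := fun h => hbJ (Or.inl h)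
        have h2 : b ≠ c := fun h => hbJ (Or.inr (Or.inl h))
        exact (hk.cov b hb (fun h => hbJ (Or.inr (Or.inr h)))).imp (fun h => ⟨h, h2⟩) fun h => ⟨h, h1⟩
      · rintro x ⟨hx, hxc⟩ z hz
        by_cases h1 : z = q
        · exact Or.inr (Or.inr (Or.inl h1))
        by_cases h2 : z = c
        · exact Or.inr (Or.inr (Or.inr (Or.inl h2)))
        rcases hk.nb x hx z hz with h | h | h
        · exact Or.inl ⟨h, h2⟩
        · exact Or.inr (Or.inl ⟨h, h1⟩)
        · exact Or.inr (Or.inr (Or.inr (Or.inr h)))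
      · rintro u hu hA
        refine ⟨hk.prX u hu.1 hA, fun h => (hU'c u hu hA).2 (h ▸ hqc)⟩
      · rintro u ⟨hu, hu'⟩
        exact (hk.US u hu).imp (fun h => ⟨h, fun h => hu' (h ▸ hqc)⟩)
          fun h => ⟨h, fun h => hu' (h ▸ .refl)⟩
      · rintro u ⟨hu, huq⟩
        refine ⟨hk.SU u hu, fun h => ?_⟩
        rcases hDX u h with h | h
        · exact huq h
        · exact hk.XS u h hu
    have haU' : a ∉ U' := fun h => h.2 haq
    have haq : a ≠ q := fun h => hqA (h ▸ ha)
    have hac : a ≠ c := fun h => hcA (h ▸ ha)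
    have haI : a ∉ I := fun h => (hk.US a haU).elim (fun h' => hk.dX a h' h) (fun h' => hk.dS a h' h)
    have haJ : a ∉ insert c I := fun h => h.elim hac haI
    by_cases hcq : c = q
    · subst hcq
      rw [Set.insert_eq_of_mem (Set.mem_insert c I)] at hk'
      exact absurd (hun _ hk' a ha haJ) haU'
    have hcX : c ∈ k.X := (hDX c hqc).resolve_left hcq
    refine ⟨hk.XS c hcX, ?_⟩
    obtain ⟨l, hl, hlX, hlr, haX, haUl, hg⟩ := aug hk' ha (fun h => h.elim haq haJ) haU'
    by_cases h : ∃ u ∈ l.X, N.R u q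
    · obtain ⟨u, hu, hr⟩ := h
      have := hg u hu q hr (fun h => hl.dX q h (Or.inl rfl)) (fun h => hl.dS q h (Or.inl rfl))
      have hqJ : q ∉ insert c I := fun h => h.elim (fun h => hcq h.symm) (hk.dS q hqS)
      obtain ⟨m, hm, hmX, hmS⟩ := gets_isWv hl hqJ this
      refine ⟨comb m k', comb_isWv hm hk' ?_ ?_, ?_, ?_⟩
      · intro x hx h
        exact h.elim (fun h => hk'.dX x h (Or.inr hx)) (fun h => hk'.dS x h (Or.inr hx))
      · rintro x (rfl | hx)
        · exact Or.inr (Or.inr ((hmS x).2 (Or.inr rfl)))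
        · exact Or.inl hx
      · intro x
        rw [mem_comb_X, hmX]
        exact ⟨fun h => h.elim (fun h => hlX x h) id, fun h => Or.inr h⟩
      · intro x
        rw [mem_comb_S, hmX, hmS]
        constructor
        · rintro ⟨(h | rfl) | h, h1, h2⟩
          · rcases hlr x (Or.inr h) with h | h
            · exact absurd h h2
            · exact h.1
          · exact hqS
          · exact h.1
        · intro h
          have h3 : x ∉ k'.X := fun h' => hk.XS x h'.1 h
          refine ⟨?_, fun h' => h3 (hlX x h'), h3⟩
          by_cases hxq : x = q
          · exact Or.inl (Or.inr hxq)
          · exact Or.inr ⟨h, hxq⟩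
    · push Not at h
      refine absurd (hun l (undel hl (fun _ h => Or.inr h) ?_ ?_) a ha haJ) haUl
      · rintro b hb (rfl | h)
        · exact absurd hb hqA
        · exact h
      · rintro u hu z hz (rfl | h')
        · exact absurd hz (h u hu)
        · exact Or.inr h'
  · push Not at hq
    have hcS : c ∉ k.S := fun h => hq c h .refl
    refine ⟨hcS, ⟨{x | x ∈ k.X ∧ x ≠ c}, k.S, {u | u ∈ k.U ∧ ¬ Anc N.A k.pr c u}, k.pr⟩, ?_,
      fun _ => Iff.rfl, fun _ => Iff.rfl⟩
    have hcl : ∀ u ∈ {u | u ∈ k.U ∧ ¬ Anc N.A k.pr c u}, u ∉ N.A →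
        k.pr u ∈ {u | u ∈ k.U ∧ ¬ Anc N.A k.pr c u} := fun u hu hA =>
      ⟨hk.lk.up u hu.1 hA, fun h => hu.2 (.step u hA h)⟩
    refine ⟨?_, ?_, fun x hx => hk.XS x hx.1, fun x hx => hk.XB x hx.1, ?_, ?_,
      sub_link hk.lk (fun u hu => hu.1) hcl, ?_, ?_, fun u hu => ⟨hk.SU u hu, hq u hu⟩⟩
    · rintro x ⟨hx, hxc⟩ (h | h)
      · exact hxc h
      · exact hk.dX x hx h
    · rintro x hx (rfl | h)
      · exact hcS hx
      · exact hk.dS x hx h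
    · intro b hb hbJ
      exact (hk.cov b hb fun h => hbJ (Or.inr h)).imp (fun h => ⟨h, fun h => hbJ (Or.inl h)⟩) id
    · rintro x ⟨hx, _⟩ z hz
      by_cases h2 : z = c
      · exact Or.inr (Or.inr (Or.inl h2))
      rcases hk.nb x hx z hz with h | h | h
      · exact Or.inl ⟨h, h2⟩
      · exact Or.inr (Or.inl h)
      · exact Or.inr (Or.inr (Or.inr h))
    · intro u hu hA
      exact ⟨hk.prX u hu.1 hA, fun h => (hcl u hu hA).2 (h ▸ .refl)⟩
    · rintro u ⟨hu, hu'⟩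
      exact (hk.US u hu).imp (fun h => ⟨h, fun h => hu' (h ▸ .refl)⟩) id

theorem mono_fin {I : Set Ω} {k : Wv Ω} (hk : IsWv N I k) {C : Set Ω} (hC : C.Finite)
    (hCA : ∀ c ∈ C, c ∉ N.A) (hCI : ∀ c ∈ C, c ∉ I)
    (hun : ∀ D ⊆ C, Unh N (I ∪ D)) :
    (∀ c ∈ C, c ∉ k.S) ∧ ∃ l, IsWv N (I ∪ C) l ∧ (∀ x, x ∈ l.X ↔ x ∈ k.X ∧ x ∉ C) ∧
      (∀ x, x ∈ l.S ↔ x ∈ k.S) := by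
  induction C, hC using Set.Finite.induction_on with
  | empty => exact ⟨by simp, k, by simpa using hk, by simp, by simp⟩
  | @insert c C hc _ ih =>
    obtain ⟨h1, l, hl, hlX, hlS⟩ := ih (fun c h => hCA c (Or.inr h)) (fun c h => hCI c (Or.inr h))
      (fun D hD => hun D (hD.trans (Set.subset_insert _ _)))
    obtain ⟨h2, m, hm, hmX, hmS⟩ := mono hl (hCA c (Or.inl rfl))
      (fun h => h.elim (hCI c (Or.inl rfl)) hc)
      (by rw [← Set.union_insert]; exact hun _ subset_rfl)
    refine ⟨?_, m, by rwa [Set.union_insert], ?_, ?_⟩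
    · rintro d (rfl | hd)
      · rwa [hlS] at h2
      · exact h1 d hd
    · intro x; rw [hmX, hlX, Set.mem_insert_iff]; tauto
    · intro x; rw [hmS, hlS]

theorem anti {Z U : Set Ω} {e : Ω} (hU : U.Finite) (heA : e ∉ N.A) (hUA : ∀ u ∈ U, u ∉ N.A)
    (heZ : e ∉ Z) (heU : e ∉ U) (hUZ : ∀ u ∈ U, u ∉ Z)
    (hun : ∀ D ⊆ insert e U, Unh N (Z ∪ D))
    {w1 w2 : Wv Ω} (h1 : IsWv N (Z ∪ U) w1) (he : e ∈ w1.rf)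
    (h2 : IsWv N (insert e Z) w2) (hU2 : ∀ u ∈ U, u ∈ w2.rf) :
    ∃ v, IsWv N Z v ∧ e ∈ v.X := by
  obtain ⟨heS, l1, hl1, hl1X, hl1S⟩ := mono h1 heA (fun h => h.elim heZ heU)
    (by rw [← Set.union_insert]; exact hun _ subset_rfl)
  obtain ⟨hUS, l2, hl2, hl2X, hl2S⟩ := mono_fin h2 hU hUA
    (fun u hu h => h.elim (fun h => heU (h ▸ hu)) (hUZ u hu))
    (fun D hD => by
      rw [Set.insert_union, ← Set.union_insert]; exact hun _ (Set.insert_subset_insert hD))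
  have hJ : insert e Z ∪ U = insert e (Z ∪ U) := Set.insert_union
  rw [hJ] at hl2
  have heX : e ∈ w1.X := he.resolve_right heS
  have hUX : ∀ u ∈ U, u ∈ w2.X := fun u hu => (hU2 u hu).resolve_right (hUS u hu)
  have hV := comb_isWv hl1 hl2 (fun x hx h => h.elim (fun h => hl2.dX x h hx)
      (fun h => hl2.dS x h hx)) (fun x hx => Or.inl hx)
  refine ⟨_, fill hV (Z := Z) (G := insert e U) (by rw [Set.union_insert]) ?_ ?_ ?_,
    Or.inr (Or.inl rfl)⟩
  · rintro g (rfl | hg)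
    · exact heZ
    · exact hUZ g hg
  · rintro g (rfl | hg)
    · exact h1.XB _ heX
    · exact h2.XB _ (hUX g hg)
  · rintro g (rfl | hg) z hz
    · by_cases hzg : z = g
      · exact Or.inr (Or.inl hzg)
      rw [mem_comb_rf, Wv.mem_rf]
      rcases h1.nb _ heX z hz with h | h | h
      · exact Or.inl (Or.inl (Or.inl ((hl1X z).2 ⟨h, hzg⟩)))
      · exact Or.inl (Or.inl (Or.inr ((hl1S z).2 h)))
      · exact Or.inr (Or.inr h)
    · by_cases hzg : z ∈ U
      · exact Or.inr (Or.inr (Or.inr hzg))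
      rw [mem_comb_rf, Wv.mem_rf, Wv.mem_rf]
      rcases h2.nb _ (hUX g hg) z hz with h | h | h | h
      · exact Or.inl (Or.inr (Or.inl ((hl2X z).2 ⟨h, hzg⟩)))
      · exact Or.inl (Or.inr (Or.inr ((hl2S z).2 h)))
      · exact Or.inr (Or.inl h)
      · exact Or.inr (Or.inr (Or.inl h))

end EMW
end Part3

section Part4
namespace EMW
variable {Ω : Type w} {N : Web Ω}

/-- the roof of the web with `I` deleted -/
def Rf (N : Web Ω) (I : Set Ω) : Set Ω := {y | ∃ k, IsWv N I k ∧ y ∈ k.rf}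

theorem del_more {I J : Set Ω} {k : Wv Ω} (hk : IsWv N I k) (hI : ∀ x ∈ I, x ∈ J)
    (hd : ∀ x ∈ J, x ∉ k.rf) : IsWv N J k :=
  ⟨fun x hx h => hd x h (Or.inl hx), fun x hx h => hd x h (Or.inr hx), hk.XS, hk.XB,
    fun a ha haJ => hk.cov a ha fun h => haJ (hI a h),
    fun x hx z hz => (hk.nb x hx z hz).imp id fun h => h.imp id (hI z),
    hk.lk, hk.prX, hk.US, hk.SU⟩

theorem IsWv.drf {I : Set Ω} {k : Wv Ω} (hk : IsWv N I k) {x : Ω} (hx : x ∈ k.rf) : x ∉ I :=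
  hx.elim (hk.dX x) (hk.dS x)

/-- finitely safe set -/
structure Safe (N : Web Ω) (I T : Set Ω) : Prop where
  nA : ∀ x ∈ T, x ∉ N.A
  nI : ∀ x ∈ T, x ∉ I
  nB : ∀ x ∈ T, x ∉ N.B
  un : ∀ F ⊆ T, F.Finite → Unh N (I ∪ F)

theorem Safe.mono {I T : Set Ω} (hT : Safe N I T) {F F' : Set Ω} (hF : F ⊆ F') (hF' : F' ⊆ T)
    (hfin : F'.Finite) {y : Ω} (hy : y ∈ Rf N (I ∪ F)) (hyF : y ∉ F') : y ∈ Rf N (I ∪ F') := by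
  obtain ⟨k, hk, hyk⟩ := hy
  have e : ∀ D, (I ∪ F) ∪ D = I ∪ (F ∪ D) := fun D => Set.union_assoc _ _ _
  obtain ⟨_, l, hl, hlX, hlS⟩ := mono_fin hk (C := F' \ F) (hfin.subset Set.sdiff_subset)
    (fun c hc => hT.nA c (hF' hc.1)) (fun c hc h => h.elim (hT.nI c (hF' hc.1)) hc.2)
    (fun D hD => by
      rw [e]
      have : F ∪ D ⊆ F' := Set.union_subset hF (hD.trans Set.sdiff_subset)
      exact hT.un _ (this.trans hF') (hfin.subset this))
  rw [e, Set.union_sdiff_cancel hF] at hl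
  exact ⟨l, hl, hyk.imp (fun h => (hlX y).2 ⟨h, fun h => hyF h.1⟩) (fun h => (hlS y).2 h)⟩

def Core (N : Web Ω) (I T : Set Ω) : Set Ω :=
  {c | c ∈ T ∧ ∀ F ⊆ T, F.Finite → c ∉ F → c ∉ Rf N (I ∪ F)}

theorem Safe.step {I T : Set Ω} (hT : Safe N I T) {F : Set Ω} (hF : F ⊆ T) (hfin : F.Finite)
    {v : Wv Ω} (hv : IsWv N (I ∪ F) v) {e : Ω} (he : e ∈ F) (heC : e ∉ Core N I T) :
    ∃ F' ⊆ T, F'.Finite ∧ ∃ v', IsWv N (I ∪ F') v' ∧ WLe v v' ∧ e ∈ v'.X ∧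
      ∀ x ∈ F, x ≠ e → x ∈ F' := by
  have heT := hF he
  obtain ⟨G, hG, hGf, heG, heR⟩ : ∃ G ⊆ T, G.Finite ∧ e ∉ G ∧ e ∈ Rf N (I ∪ G) := by
    by_contra! h
    exact heC ⟨heT, h⟩
  obtain ⟨m, hm, hvm, -, hmr⟩ := exists_max hv
  set G' : Set Ω := {x | x ∈ G ∧ x ∉ F ∧ x ∉ m.rf} with hG'
  set Z : Set Ω := {x | (x ∈ F ∧ x ≠ e) ∨ x ∈ G'} with hZ
  have hZT : Z ⊆ T := by
    rintro x (hx | hx)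
    · exact hF hx.1
    · exact hG hx.1
  have hZf : Z.Finite := (hfin.union hGf).subset (by
    rintro x (hx | hx)
    · exact Or.inl hx.1
    · exact Or.inr hx.1)
  have heZ : e ∉ Z := by
    rintro (hx | hx)
    · exact hx.2 rfl
    · exact heG hx.1
  have heI : e ∉ I := hT.nI e heT
  set U : Set Ω := G \ Z with hU
  have hUr : ∀ u ∈ U, u ∈ m.rf := by
    rintro u ⟨huG, huZ⟩
    by_contra hum
    by_cases huF : u ∈ F
    · exact huZ (Or.inl ⟨huF, fun h => heG (h ▸ huG)⟩)
    · exact huZ (Or.inr ⟨huG, huF, hum⟩)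
  have hUT : U ⊆ T := Set.sdiff_subset.trans hG
  have hJ : insert e (I ∪ Z) = (I ∪ F) ∪ G' := by
    ext x
    simp only [hZ, Set.mem_insert_iff, Set.mem_union, Set.mem_ofPred_eq]
    by_cases hx : x = e
    · subst hx; simp [he]
    · simp [hx]; tauto
  have hmJ : IsWv N (insert e (I ∪ Z)) m := by
    rw [hJ]
    refine del_more hm (fun x hx => Or.inl hx) ?_
    rintro x (hx | hx) h
    · exact hm.drf h hx
    · exact hx.2.2 h
  have hvJ : IsWv N (insert e (I ∪ Z)) v := by
    rw [hJ]
    refine del_more hv (fun x hx => Or.inl hx) ?_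
    rintro x (hx | hx) h
    · exact hv.drf h hx
    · exact hx.2.2 (hvm.rf h)
  obtain ⟨w1, hw1, hew1⟩ : e ∈ Rf N (I ∪ (Z ∪ U)) := by
    refine hT.mono (F := G) ?_ (Set.union_subset hZT hUT) (hZf.union (hGf.subset Set.sdiff_subset)) heR ?_
    · intro x hx
      by_cases h : x ∈ Z
      · exact Or.inl h
      · exact Or.inr ⟨hx, h⟩
    · rintro (h | h)
      · exact heZ h
      · exact heG h.1
  have hsub : ∀ D ⊆ insert e U, Unh N ((I ∪ Z) ∪ D) := by
    intro D hD
    rw [Set.union_assoc]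
    refine hT.un _ (Set.union_subset hZT ?_) (hZf.union ?_)
    · exact hD.trans (Set.insert_subset heT hUT)
    · exact ((hGf.subset Set.sdiff_subset).insert e).subset hD
  obtain ⟨v0, hv0, hev0⟩ := anti (Z := I ∪ Z) (U := U) (e := e) (hGf.subset Set.sdiff_subset)
    (hT.nA e heT) (fun u hu => hT.nA u (hUT hu)) (fun h => h.elim heI heZ) (fun h => heG h.1)
    (fun u hu h => h.elim (hT.nI u (hUT hu)) hu.2) hsub (w1 := w1) (w2 := m)
    (by rw [Set.union_assoc]; exact hw1) hew1 hmJ hUr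
  obtain ⟨v2, hv2, hvv2, -, hv2r⟩ := exists_max hvJ
  obtain ⟨-, l, hl, hlX, hlS⟩ := EMW.mono hv0 (hT.nA e heT) (fun h => h.elim heI heZ)
    (by
      have := hsub {e} (by simp)
      rwa [Set.union_singleton] at this)
  refine ⟨Z, hZT, hZf, fillW v2 {e}, fill hv2 (by rw [Set.union_singleton]) ?_ ?_ ?_,
    hvv2.trans fill_le, Or.inr rfl, fun x hx hxe => Or.inl ⟨hx, hxe⟩⟩
  · rintro g rfl h; exact h.elim heI heZ
  · rintro g rfl; exact hT.nB _ heT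
  · rintro g rfl z hz
    by_cases hzg : z = g
    · exact Or.inr (Or.inl hzg)
    rcases hv0.nb _ hev0 z hz with h | h | h
    · exact Or.inl (hv2r l hl z (Or.inl ((hlX z).2 ⟨h, hzg⟩)))
    · exact Or.inl (hv2r l hl z (Or.inr ((hlS z).2 h)))
    · exact Or.inr (Or.inr h)

theorem Safe.steps {I T : Set Ω} (hT : Safe N I T) {F : Set Ω} (hF : F ⊆ T) (hfin : F.Finite)
    {v : Wv Ω} (hv : IsWv N (I ∪ F) v) :
    ∃ F' ⊆ T, F'.Finite ∧ ∃ v', IsWv N (I ∪ F') v' ∧ WLe v v' ∧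
      ∀ x ∈ F, x ∈ Core N I T ∨ x ∈ v'.X := by
  have key : ∀ D : Set Ω, D.Finite → (∀ x ∈ D, x ∈ F ∧ x ∉ Core N I T) →
      ∃ F' ⊆ T, F'.Finite ∧ ∃ v', IsWv N (I ∪ F') v' ∧ WLe v v' ∧ (∀ x ∈ D, x ∈ v'.X) ∧
        ∀ x ∈ F, x ∈ F' ∨ x ∈ v'.X := by
    intro D hD
    induction D, hD using Set.Finite.induction_on with
    | empty => exact fun _ => ⟨F, hF, hfin, v, hv, WLe.refl v, by simp, fun x hx => Or.inl hx⟩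
    | @insert e D _ _ ih =>
      intro h
      obtain ⟨F', hF', hf', v', hv', hle, h1, h2⟩ := ih fun x hx => h x (Or.inr hx)
      by_cases hev : e ∈ v'.X
      · refine ⟨F', hF', hf', v', hv', hle, ?_, h2⟩
        rintro x (rfl | hx)
        · exact hev
        · exact h1 x hx
      · obtain ⟨heF, heC⟩ := h e (Or.inl rfl)
        obtain ⟨F2, hF2, hf2, v2, hv2, hle2, he2, h3⟩ :=
          hT.step hF' hf' hv' ((h2 e heF).resolve_right hev) heC
        refine ⟨F2, hF2, hf2, v2, hv2, hle.trans hle2, ?_, ?_⟩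
        · rintro x (rfl | hx)
          · exact he2
          · exact hle2.X x (h1 x hx)
        · intro x hx
          by_cases hxe : x = e
          · exact Or.inr (hxe ▸ he2)
          · exact (h2 x hx).imp (fun h => h3 x h hxe) (hle2.X x)
  obtain ⟨F', hF', hf', v', hv', hle, h1, h2⟩ := key {x | x ∈ F ∧ x ∉ Core N I T}
    (hfin.subset fun x hx => hx.1) (fun x hx => hx)
  refine ⟨F', hF', hf', v', hv', hle, fun x hx => ?_⟩
  by_cases h : x ∈ Core N I T
  · exact Or.inl h
  · exact Or.inr (h1 x ⟨hx, h⟩)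

theorem Safe.lim {I T : Set Ω} (hT : Safe N I T) {Y : Set Ω} (hY : Y ⊆ T) (hfin : Y.Finite)
    {y : Ω} (hy : y ∈ Y ∨ y ∈ Rf N (I ∪ Y)) :
    y ∈ Core N I T ∨ y ∈ Rf N (I ∪ Core N I T) := by
  obtain ⟨m, hm, -, -, hmr⟩ := exists_max (triv_isWv N (I ∪ Y))
  let St := {p : Set Ω × Wv Ω // p.1 ⊆ T ∧ p.1.Finite ∧ IsWv N (I ∪ p.1) p.2}
  have hnext : ∀ p : St, ∃ q : St, WLe p.1.2 q.1.2 ∧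
      ∀ x ∈ p.1.1, x ∈ Core N I T ∨ x ∈ q.1.2.X := by
    rintro ⟨⟨F, v⟩, h1, h2, h3⟩
    obtain ⟨F', h4, h5, v', h6, h7, h8⟩ := hT.steps h1 h2 h3
    exact ⟨⟨(F', v'), h4, h5, h6⟩, h7, h8⟩
  choose nx hnx1 hnx2 using hnext
  let s : ℕ → St := fun n => nx^[n] ⟨(Y, m), hY, hfin, hm⟩
  have s0 : s 0 = ⟨(Y, m), hY, hfin, hm⟩ := rfl
  have ss : ∀ n, s (n + 1) = nx (s n) := fun n => Function.iterate_succ_apply' _ _ _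
  have hmono : ∀ i j, i ≤ j → WLe (s i).1.2 (s j).1.2 := by
    intro i j hij
    induction j, hij using Nat.le_induction with
    | base => exact WLe.refl _
    | succ j _ ih => rw [ss]; exact ih.trans (hnx1 _)
  have hs2 : ∀ n, ∀ x ∈ (s n).1.1, x ∈ Core N I T ∨ x ∈ (s (n + 1)).1.2.X := by
    intro n; rw [ss]; exact hnx2 _
  obtain ⟨V, hV, hVle, -⟩ := limit (N := N) (fun n => (s n).1.2) (fun n => I ∪ (s n).1.1)
    (I ∪ Core N I T) (fun n => (s n).2.2.2)
    (fun i j => ⟨max i j, hmono _ _ (le_max_left _ _), hmono _ _ (le_max_right _ _)⟩)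
    (fun n x hx h => by
      have hd := (s n).2.2.2.drf hx
      rcases h with h | h
      · exact hd (Or.inl h)
      · exact h.2 _ (s n).2.1 (s n).2.2.1 (fun h => hd (Or.inr h)) ⟨_, (s n).2.2.2, hx⟩)
    (fun a ha haJ => ⟨0, (s 0).2.2.2.cov a ha fun h => h.elim (fun h => haJ (Or.inl h))
      (fun h => hT.nA a ((s 0).2.1 h) ha)⟩)
    (fun n x hx z hz => by
      rcases (s n).2.2.2.nb x hx z hz with h | h | h | h
      · exact Or.inl ⟨n, Or.inl h⟩
      · exact Or.inl ⟨n, Or.inr h⟩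
      · exact Or.inr (Or.inl h)
      · rcases hs2 n z h with h | h
        · exact Or.inr (Or.inr h)
        · exact Or.inl ⟨n + 1, Or.inl h⟩)
  rcases hy with hy | ⟨k, hk, hy⟩
  · rcases hs2 0 y (by rw [s0]; exact hy) with h | h
    · exact Or.inl h
    · exact Or.inr ⟨V, hV, (hVle 1).rf (Or.inl h)⟩
  · exact Or.inr ⟨V, hV, (hVle 0).rf (by rw [s0]; exact hmr k hk y hy)⟩

structure IsABPath (N : Web Ω) (a : Ω) (Q : List Ω) : Prop where
  chain : Q.IsChain N.R
  head : Q.head? = some a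
  last : ∃ b ∈ N.B, Q.getLast? = some b

theorem M1 {I : Set Ω} (hI : Unh N I) {a : Ω} (ha : a ∈ N.A) (haI : a ∉ I) :
    ∃ Q : List Ω, IsABPath N a Q ∧ (∀ x ∈ Q, x ∉ I) ∧ (∀ x ∈ Q, x ∈ N.A → x = a) ∧
      Unh N (I ∪ {x | x ∈ Q}) := by
  have hI1 : Unh N (insert a I) := unh_source hI ha
  by_cases haB : a ∈ N.B
  · refine ⟨[a], ⟨by simp, by simp, a, haB, by simp⟩, by simpa using haI, by simp, ?_⟩
    simpa using hI1
  by_contra hno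
  let P : Set (Set Ω) := {T | (∀ x ∈ T, x ∉ N.A) ∧ (∀ x ∈ T, x ∉ insert a I) ∧
    (∀ F ⊆ T, F.Finite → Unh N (insert a I ∪ F)) ∧
    ∀ x ∈ T, ∃ l : List Ω, (a :: l).IsChain N.R ∧ (a :: l).getLast? = some x ∧ ∀ y ∈ l, y ∈ T}
  obtain ⟨T, hTm⟩ := zorn_subset P (by
    intro c hc hch
    rcases c.eq_empty_or_nonempty with rfl | hne
    · refine ⟨∅, ⟨by simp, by simp, ?_, by simp⟩, by simp⟩
      intro F hF _
      rw [Set.subset_empty_iff.1 hF, Set.union_empty]; exact hI1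
    refine ⟨⋃₀ c, ⟨?_, ?_, ?_, ?_⟩, fun s hs => Set.subset_sUnion_of_mem hs⟩
    · rintro x ⟨t, ht, hx⟩; exact (hc ht).1 x hx
    · rintro x ⟨t, ht, hx⟩; exact (hc ht).2.1 x hx
    · intro F hF hf
      obtain ⟨t, ht, hFt⟩ := DirectedOn.exists_mem_subset_of_finite_of_subset_sUnion hne
        hch.directedOn hf hF
      exact (hc ht).2.2.1 F hFt hf
    · rintro x ⟨t, ht, hx⟩
      obtain ⟨l, h1, h2, h3⟩ := (hc ht).2.2.2 x hx
      exact ⟨l, h1, h2, fun y hy => ⟨t, ht, h3 y hy⟩⟩)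
  obtain ⟨hTA, hTI, hTu, hTc⟩ := hTm.prop
  have hTB : ∀ x ∈ T, x ∉ N.B := by
    intro b hb hbB
    obtain ⟨l, h1, h2, h3⟩ := hTc b hb
    refine hno ⟨a :: l, ⟨h1, by simp, b, hbB, h2⟩, ?_, ?_, ?_⟩
    · intro x hx
      rcases List.mem_cons.1 hx with rfl | hx
      · exact haI
      · exact fun h => hTI x (h3 x hx) (Or.inr h)
    · intro x hx hA
      rcases List.mem_cons.1 hx with rfl | hx
      · rfl
      · exact absurd hA (hTA x (h3 x hx))
    · have := hTu {x | x ∈ l} h3 (List.finite_toSet l)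
      convert this using 1
      ext x; simp; tauto
  have hT : Safe N (insert a I) T := ⟨hTA, hTI, hTB, hTu⟩
  have claim1 : ∀ x y, (x = a ∨ x ∈ T) → N.R x y → y ∉ insert a I → y ∉ T →
      ∃ F ⊆ T, F.Finite ∧ y ∈ Rf N (insert a I ∪ F) := by
    intro x y hx hr hyI hyT
    by_contra! hcon
    have hyA := N.hRA x y hr
    have hunh : ∀ F ⊆ T, F.Finite → Unh N (insert a I ∪ insert y F) := by
      intro F hF hf
      rw [Set.union_insert]
      exact unh_insert (hTu F hF hf) hyA (fun h => h.elim hyI fun h => hyT (hF h))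
        fun k hk hS => hcon F hF hf ⟨k, hk, Or.inr hS⟩
    have : insert y T ∈ P := by
      refine ⟨?_, ?_, ?_, ?_⟩
      · rintro z (rfl | hz)
        · exact hyA
        · exact hTA z hz
      · rintro z (rfl | hz)
        · exact hyI
        · exact hTI z hz
      · intro F hF hf
        by_cases hyF : y ∈ F
        · have h1 : F = insert y (F \ {y}) := by simp [hyF]
          rw [h1]
          refine hunh _ ?_ (hf.subset Set.sdiff_subset)
          rintro z ⟨hz, hzy⟩
          exact (hF hz).resolve_left hzy
        · exact hTu F (fun z hz => (hF hz).resolve_left fun h => hyF (h ▸ hz)) hf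
      · have hx' : ∃ l : List Ω, (a :: l).IsChain N.R ∧ (a :: l).getLast? = some x ∧ ∀ y ∈ l, y ∈ T := by
          rcases hx with rfl | hx
          · exact ⟨[], by simp, by simp, by simp⟩
          · exact hTc x hx
        rintro z (rfl | hz)
        · obtain ⟨l, h1, h2, h3⟩ := hx'
          refine ⟨l ++ [z], ?_, ?_, ?_⟩
          · rw [← List.cons_append, List.isChain_append]
            refine ⟨h1, by simp, ?_⟩
            rw [h2]; simpa using hr
          · rw [← List.cons_append, List.getLast?_append]; simp
          · intro u hu
            rcases List.mem_append.1 hu with h | h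
            · exact Or.inr (h3 u h)
            · exact Or.inl (by simpa using h)
        · obtain ⟨l, h1, h2, h3⟩ := hTc z hz
          exact ⟨l, h1, h2, fun u hu => Or.inr (h3 u hu)⟩
    exact hyT (hTm.le_of_ge this (Set.subset_insert y T) (Or.inl rfl))
  obtain ⟨V, hV, -, -, hVr⟩ := exists_max (triv_isWv N (insert a I ∪ Core N (insert a I) T))
  have claim2 : ∀ x y, (x = a ∨ x ∈ T) → N.R x y →
      y ∈ V.rf ∨ y ∈ insert a I ∪ Core N (insert a I) T := by
    intro x y hx hr
    by_cases hyI : y ∈ insert a I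
    · exact Or.inr (Or.inl hyI)
    have : ∃ Y ⊆ T, Y.Finite ∧ (y ∈ Y ∨ y ∈ Rf N (insert a I ∪ Y)) := by
      by_cases hyT : y ∈ T
      · exact ⟨{y}, by simpa using hyT, Set.finite_singleton y, Or.inl rfl⟩
      · obtain ⟨F, h1, h2, h3⟩ := claim1 x y hx hr hyI hyT
        exact ⟨F, h1, h2, Or.inr h3⟩
    obtain ⟨Y, h1, h2, h3⟩ := this
    rcases hT.lim h1 h2 h3 with h | ⟨k, hk, h⟩
    · exact Or.inr (Or.inr h)
    · exact Or.inl (hVr k hk y h)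
  have hfin := fill hV (Z := I) (G := insert a (Core N (insert a I) T))
    (by rw [Set.insert_union, Set.union_insert]) (by
      rintro g (rfl | hg) h
      · exact haI h
      · exact hTI g hg.1 (Or.inr h)) (by
      rintro g (rfl | hg)
      · exact haB
      · exact hTB g hg.1) (by
      rintro g hg z hz
      exact claim2 g z (hg.imp id fun h => h.1) hz)
  have haU : a ∈ V.U := hI _ hfin a ha haI
  exact hV.drf (hV.US a haU) (Or.inl (Or.inl rfl))

end EMW
end Part4

section Part5
namespace EMW
variable {Ω : Type w} {N : Web Ω}

/-- one piece of data of the transfinite construction -/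
structure Dat (Ω : Type w) where
  M : Set Ω
  X : Set Ω
  S : Set Ω
  T : Set Ω
  U : Set Ω
  pr : Ω → Ω

structure IsDat (N : Web Ω) (I : Set Ω) (d : Dat Ω) : Prop where
  XI : ∀ x ∈ d.X, x ∉ I
  SI : ∀ x ∈ d.S, x ∉ I
  TI : ∀ x ∈ d.T, x ∉ I
  XM : ∀ x ∈ d.X, x ∉ d.M
  SM : ∀ x ∈ d.S, x ∉ d.M
  TM : ∀ x ∈ d.T, x ∈ d.M
  XB : ∀ x ∈ d.X, x ∉ N.B
  nb : ∀ x ∈ d.X, ∀ z, N.R x z → z ∈ d.X ∨ z ∈ d.S ∨ z ∈ I ∨ z ∈ d.M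
  lk : IsLink N d.U d.pr
  prX : ∀ u ∈ d.U, u ∉ N.A → d.pr u ∈ d.X
  US : ∀ u ∈ d.U, u ∈ d.X ∨ u ∈ d.S ∨ u ∈ d.T
  SU : ∀ u ∈ d.S, u ∈ d.U
  TU : ∀ u ∈ d.T, u ∈ d.U

open Classical in
theorem assemble {ι : Type*} [LinearOrder ι] [WellFoundedLT ι] (f : ι → Dat Ω) {I : Set Ω}
    (hf : ∀ i, IsDat N I (f i)) (hM : ∀ i j, i < j → (f i).M ⊆ (f j).M)
    (hc1 : ∀ i j, i < j → ∀ u ∈ (f i).U, u ∉ N.A → u ∈ (f j).M → (f i).pr u ∈ (f j).M)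
    (hc2 : ∀ i j, i < j → ∀ u ∈ (f i).U, u ∉ N.A → (f i).pr u ∈ (f j).M → u ∈ (f j).M)
    (herr : ∀ i, ∀ x ∈ (f i).X, ∀ z, N.R x z → z ∉ (f i).X → z ∉ (f i).S → z ∉ I →
      ∃ j, z ∈ (f j).T)
    (b : ι) (a : Ω) (haA : a ∈ N.A) (haX : a ∈ (f b).X) (haU : a ∉ (f b).U)
    (haM : ∀ i, b < i → a ∈ (f i).M) : ¬ Unh N I := by
  let L : Ω → ι → Prop := fun u i =>
    u ∉ (f i).M ∧ (∀ j, i < j → u ∈ (f j).M) ∧ (u ∈ (f i).X ∨ u ∈ (f i).S)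
  have Luniq : ∀ u i j, L u i → L u j → i = j := by
    intro u i j hi hj
    rcases lt_trichotomy i j with h | h | h
    · exact absurd (hi.2.1 j h) hj.1
    · exact h
    · exact absurd (hj.2.1 i h) hi.1
  let rp : ι → Set Ω := fun i => {u | u ∈ (f i).X ∨ u ∈ (f i).S ∨ u ∈ (f i).T}
  let D : Set Ω := {u | ∃ i, u ∈ rp i}
  have hn : ∀ u, ∃ i, u ∈ D → (L u i ∨ ((∀ j, ¬ L u j) ∧ u ∈ rp i ∧ ∀ j, j < i → u ∉ rp j)) := by
    intro u
    by_cases hD : u ∈ D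
    · by_cases hL : ∃ i, L u i
      · obtain ⟨i, hi⟩ := hL
        exact ⟨i, fun _ => Or.inl hi⟩
      · obtain ⟨i, h1, h2⟩ := WellFounded.has_min (wellFounded_lt (α := ι)) {i | u ∈ rp i} hD
        exact ⟨i, fun _ => Or.inr ⟨fun j hj => hL ⟨j, hj⟩, h1, fun j hj h => h2 j h hj⟩⟩
    · exact ⟨b, fun h => absurd h hD⟩
  choose n hn using hn
  have LD : ∀ u i, L u i → u ∈ D := by
    rintro u i ⟨_, _, h⟩
    exact ⟨i, by rcases h with h | h <;> simp [rp, h]⟩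
  have nL : ∀ u i, L u i → n u = i := by
    intro u i h
    rcases hn u (LD u i h) with h1 | h1
    · exact Luniq u _ _ h1 h
    · exact absurd h (h1.1 i)
  have nrp : ∀ u ∈ D, u ∈ rp (n u) := by
    intro u hu
    rcases hn u hu with h1 | h1
    · rcases h1.2.2 with h | h <;> simp [rp, h]
    · exact h1.2.1
  have DI : ∀ u ∈ D, u ∉ I := by
    rintro u ⟨i, h | h | h⟩
    · exact (hf i).XI u h
    · exact (hf i).SI u h
    · exact (hf i).TI u h
  have Mle : ∀ i j, i ≤ j → (f i).M ⊆ (f j).M := by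
    intro i j h
    rcases h.eq_or_lt with rfl | h
    · exact fun _ h => h
    · exact hM i j h
  -- predecessor of something in layer `i` (or in `M i`) is layer `i`
  have Lpr : ∀ i, ∀ u ∈ (f i).U, u ∉ N.A → (∀ j, i < j → u ∈ (f j).M) → L ((f i).pr u) i := by
    intro i u hu hA hj
    have h1 := (hf i).prX u hu hA
    exact ⟨(hf i).XM _ h1, fun j hij => hc1 i j hij u hu hA (hj j hij), Or.inl h1⟩
  -- key
  have key1 : ∀ u ∈ D, u ∈ (f (n u)).U → u ∉ N.A → ∀ m, m < n u → (f (n u)).pr u ∈ (f m).X →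
      L ((f (n u)).pr u) (n u) := by
    intro u hD hu hA m hm hw
    rcases hn u hD with h | ⟨h1, h2, h3⟩
    · exact Lpr _ u hu hA h.2.1
    · have hR := (hf _).lk.upR u hu hA
      have hmM : u ∈ (f m).M := by
        rcases (hf m).nb _ hw u hR with h | h | h | h
        · exact absurd (by simp [rp, h]) (h3 m hm)
        · exact absurd (by simp [rp, h]) (h3 m hm)
        · exact absurd h (DI u hD)
        · exact h
      exact Lpr _ u hu hA fun j hj => hM _ _ (hm.trans hj) hmM
  have key2 : ∀ u ∈ D, u ∈ (f (n u)).U → u ∉ N.A → ∀ m, n u < m → ¬ (L ((f (n u)).pr u) m ∧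
      (f (n u)).pr u ∈ (f m).X) := by
    rintro u hD hu hA m hm ⟨⟨h1, h2, h3⟩, hX⟩
    have hR := (hf _).lk.upR u hu hA
    have h4 : u ∉ (f m).M := fun h => h1 (hc1 _ m hm u hu hA h)
    have h5 : ∀ j, m < j → u ∈ (f j).M := fun j hj => hc2 _ j (hm.trans hj) u hu hA (h2 j hj)
    have : L u m := by
      refine ⟨h4, h5, ?_⟩
      rcases (hf m).nb _ hX u hR with h | h | h | h
      · exact Or.inl h
      · exact Or.inr h
      · exact absurd h (DI u hD)
      · exact absurd h h4
    exact hm.ne (nL u m this)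
  have up : ∀ u ∈ D, u ∈ (f (n u)).U → u ∉ N.A →
      (f (n u)).pr u ∈ (f (n ((f (n u)).pr u))).U := by
    intro u hD hu hA
    set w := (f (n u)).pr u with hw
    have hwX : w ∈ (f (n u)).X := (hf _).prX u hu hA
    have hwD : w ∈ D := ⟨n u, Or.inl hwX⟩
    have hwU : w ∈ (f (n u)).U := (hf _).lk.up u hu hA
    rcases lt_trichotomy (n w) (n u) with h | h | h
    · by_cases h1 : w ∈ (f (n w)).X
      · have := nL _ _ (key1 u hD hu hA _ h h1)
        exact absurd this h.ne
      · rcases nrp w hwD with h2 | h2 | h2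
        · exact absurd h2 h1
        · exact (hf _).SU _ h2
        · exact (hf _).TU _ h2
    · rw [h]; exact hwU
    · rcases hn w hwD with h1 | h1
      · by_cases h2 : w ∈ (f (n w)).X
        · exact absurd ⟨h1, h2⟩ (key2 u hD hu hA _ h)
        · exact (hf _).SU _ (h1.2.2.resolve_left h2)
      · exact absurd (Or.inl hwX) (h1.2.2 _ h)
  have inj : ∀ u ∈ D, ∀ v ∈ D, u ∈ (f (n u)).U → v ∈ (f (n v)).U → u ∉ N.A → v ∉ N.A →
      (f (n u)).pr u = (f (n v)).pr v → ¬ n u < n v := by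
    intro u hu v hv huU hvU huA hvA he hlt
    have h1 : (f (n v)).pr v ∈ (f (n u)).X := he ▸ (hf _).prX u huU huA
    have h2 := key1 v hv hvU hvA _ hlt h1
    exact key2 u hu huU huA _ hlt ⟨he ▸ h2, he ▸ (hf _).prX v hvU hvA⟩
  let pr : Ω → Ω := fun u => (f (n u)).pr u
  have rtL : ∀ u i, L u i → u ∈ (f i).U → Rooted N.A pr u := by
    intro u i hL hu
    refine Rooted.transfer (P := fun u => L u i ∧ u ∈ (f i).U) ?_ ((hf i).lk.rt u hu) ⟨hL, hu⟩
    rintro u ⟨h1, h2⟩ hA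
    have := nL u i h1
    exact Or.inl ⟨by simp only [pr, this], Lpr i u h2 hA h1.2.1, (hf i).lk.up u h2 hA⟩
  have rt : ∀ i, ∀ u ∈ D, n u = i → u ∈ (f (n u)).U → Rooted N.A pr u := by
    intro i
    induction i using WellFoundedLT.induction with
    | ind i ih =>
    intro u hD hi hu
    refine Rooted.transfer (P := fun u => u ∈ D ∧ n u = i ∧ u ∈ (f (n u)).U) ?_
      ((hf (n u)).lk.rt u hu) ⟨hD, hi, hu⟩
    rintro v ⟨h1, h2, h3⟩ hA
    set w := (f (n v)).pr v with hw
    have hwX : w ∈ (f (n v)).X := (hf _).prX v h3 hA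
    have hwD : w ∈ D := ⟨n v, Or.inl hwX⟩
    have hwU := up v h1 h3 hA
    have hrw : Rooted N.A pr w → Rooted N.A pr v := fun h => .step v h
    rcases lt_trichotomy (n w) (n v) with h | h | h
    · exact Or.inr (hrw (ih (n w) (h2 ▸ h) w hwD rfl hwU))
    · left
      have : n u = n v := hi.trans h2.symm
      rw [this]
      exact ⟨rfl, hwD, h.trans h2, hwU⟩
    · rcases hn w hwD with h4 | h4
      · exact Or.inr (hrw (rtL w _ h4 hwU))
      · exact absurd (Or.inl hwX) (h4.2.2 _ h)
  intro hU
  have haD : a ∈ D := ⟨b, Or.inl haX⟩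
  have haI := DI a haD
  have hna : n a = b := by
    refine nL a b ⟨(hf b).XM a haX, fun j hj => haM j hj, Or.inl haX⟩
  have hwv : IsWv N I ⟨{u | ∃ i, u ∈ (f i).X},
      {u | (u ∈ D ∧ ∀ i, u ∉ (f i).X) ∨ (u ∈ N.A ∧ u ∉ I ∧ u ∉ D)},
      {u | (u ∈ D ∧ u ∈ (f (n u)).U) ∨ (u ∈ N.A ∧ u ∉ I ∧ u ∉ D)}, pr⟩ := by
    constructor
    · rintro x ⟨i, hi⟩; exact (hf i).XI x hi
    · rintro x (⟨h, _⟩ | ⟨_, h, _⟩)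
      · exact DI x h
      · exact h
    · rintro x ⟨i, hi⟩ (⟨h, h'⟩ | ⟨_, h, h'⟩)
      · exact h' i hi
      · exact h' ⟨i, Or.inl hi⟩
    · rintro x ⟨i, hi⟩; exact (hf i).XB x hi
    · intro a ha haI
      by_cases h : a ∈ D
      · by_cases h' : ∃ i, a ∈ (f i).X
        · exact Or.inl h'
        · exact Or.inr (Or.inl ⟨h, fun i hi => h' ⟨i, hi⟩⟩)
      · exact Or.inr (Or.inr ⟨ha, haI, h⟩)
    · rintro x ⟨i, hi⟩ z hz
      by_cases hzI : z ∈ I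
      · exact Or.inr (Or.inr hzI)
      have hzD : z ∈ D := by
        by_cases h1 : z ∈ (f i).X
        · exact ⟨i, Or.inl h1⟩
        · by_cases h2 : z ∈ (f i).S
          · exact ⟨i, Or.inr (Or.inl h2)⟩
          · obtain ⟨j, hj⟩ := herr i x hi z hz h1 h2 hzI
            exact ⟨j, Or.inr (Or.inr hj)⟩
      by_cases h' : ∃ i, z ∈ (f i).X
      · exact Or.inl h'
      · exact Or.inr (Or.inl (Or.inl ⟨hzD, fun i hi => h' ⟨i, hi⟩⟩))
    · constructor
      · rintro u (⟨h1, h2⟩ | ⟨h1, _⟩) hA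
        · exact Or.inl ⟨⟨n u, Or.inl ((hf _).prX u h2 hA)⟩, up u h1 h2 hA⟩
        · exact absurd h1 hA
      · rintro u (⟨h1, h2⟩ | ⟨h1, _⟩) hA
        · exact (hf _).lk.upR u h2 hA
        · exact absurd h1 hA
      · rintro u (⟨h1, h2⟩ | ⟨h1, _⟩) v (⟨h3, h4⟩ | ⟨h3, _⟩) hA hB he
        · rcases lt_trichotomy (n u) (n v) with h | h | h
          · exact absurd h (inj u h1 v h3 h2 h4 hA hB he)
          · refine (hf (n u)).lk.inj u h2 v (h ▸ h4) hA hB ?_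
            simp only [pr] at he
            rw [he, h]
          · exact absurd h (inj v h3 u h1 h4 h2 hB hA he.symm)
        · exact absurd h3 hB
        · exact absurd h1 hA
        · exact absurd h1 hA
      · rintro u (⟨h1, h2⟩ | ⟨h1, _⟩)
        · exact rt _ u h1 rfl h2
        · exact .base u h1
    · rintro u (⟨h1, h2⟩ | ⟨h1, _⟩) hA
      · exact ⟨n u, (hf _).prX u h2 hA⟩
      · exact absurd h1 hA
    · rintro u (⟨h1, h2⟩ | h1)
      · by_cases h' : ∃ i, u ∈ (f i).X
        · exact Or.inl h'
        · exact Or.inr (Or.inl ⟨h1, fun i hi => h' ⟨i, hi⟩⟩)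
      · exact Or.inr (Or.inr h1)
    · rintro u (⟨h1, h2⟩ | h1)
      · refine Or.inl ⟨h1, ?_⟩
        rcases nrp u h1 with h | h | h
        · exact absurd h (h2 _)
        · exact (hf _).SU _ h
        · exact (hf _).TU _ h
      · exact Or.inr h1
  rcases hU _ hwv a haA haI with ⟨_, h⟩ | ⟨_, _, h⟩
  · rw [hna] at h; exact haU h
  · exact h haD

end EMW
end Part5

section Part6
namespace EMW
open Cardinal
variable {Ω : Type w} {N : Web Ω}

def Cl (F : Finset Ω → Set Ω) (M : Set Ω) : Prop := ∀ s : Finset Ω, (∀ x ∈ s, x ∈ M) → F s ⊆ M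

theorem rec_exists {ι : Type*} [LinearOrder ι] [WellFoundedLT ι] {D : Type*}
    (P : (i : ι) → ((j : ι) → j < i → D) → D → Prop) (H : ∀ i g, ∃ d, P i g d) :
    ∃ f : ι → D, ∀ i, P i (fun j _ => f j) (f i) := by
  choose c hc using H
  let f : ι → D := WellFounded.fix (wellFounded_lt (α := ι)) c
  refine ⟨f, fun i => ?_⟩
  have : f i = c i (fun j _ => f j) := WellFounded.fix_eq _ _ _
  rw [this]
  exact hc _ _

theorem small_iUnion {κ : Cardinal.{w}} (hκ : κ.IsRegular) {ι : Type w} (hι : #ι < κ)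
    {t : ι → Set Ω} (ht : ∀ i, #(t i) < κ) : #(⋃ i, t i : Set Ω) < κ :=
  (card_iUnion_lt_iff_forall_of_isRegular hκ hι).2 ht

theorem small_union {κ : Cardinal.{w}} (hκ : ℵ₀ ≤ κ) {s t : Set Ω} (hs : #s < κ) (ht : #t < κ) :
    #(s ∪ t : Set Ω) < κ :=
  (mk_union_le s t).trans_lt (add_lt_of_lt hκ hs ht)

theorem small_finset {κ : Cardinal.{w}} (hκ : ℵ₀ ≤ κ) {α : Type w} (s : Finset α) :
    #(s : Set α) < κ :=
  lt_of_lt_of_le (by simp) hκ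

theorem small_subsing {κ : Cardinal.{w}} (hκ : ℵ₀ ≤ κ) {s : Set Ω} (hs : s.Subsingleton) :
    #s < κ := lt_of_lt_of_le (by simpa using hs.finite) hκ

theorem small_range {κ : Cardinal.{w}} {α : Type w} (f : α → Ω) (h : #α < κ) :
    #(Set.range f) < κ := mk_range_le.trans_lt h

theorem exists_enum [Nonempty Ω] {ι : Type w} {s : Set Ω} (h : #s ≤ #ι) :
    ∃ e : ι → Ω, ∀ x ∈ s, ∃ i, e i = x := by
  obtain ⟨g⟩ := h
  classical
  refine ⟨fun i => if h : ∃ x : s, g x = i then (h.choose : Ω) else Classical.arbitrary Ω, ?_⟩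
  intro x hx
  refine ⟨g ⟨x, hx⟩, ?_⟩
  have h : ∃ y : s, g y = g ⟨x, hx⟩ := ⟨_, rfl⟩
  simp only [dif_pos h]
  have := g.injective h.choose_spec
  rw [this]

/-- bookkeeping function -/
theorem exists_book {κ : Cardinal.{w}} (hκ : ℵ₀ ≤ κ) :
    ∃ b : κ.ord.ToType → κ.ord.ToType × κ.ord.ToType, ∀ p, ∃ i, p.1 < i ∧ b i = p := by
  have h1 : #(κ.ord.ToType) = κ := by simp
  have h2 : #((κ.ord.ToType × κ.ord.ToType) × κ.ord.ToType) = #(κ.ord.ToType) := by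
    simp [mul_eq_self hκ]
  obtain ⟨e⟩ := Cardinal.eq.1 h2
  refine ⟨fun i => (e.symm i).1, fun p => ?_⟩
  by_contra hcon
  push Not at hcon
  have : ∀ x, e (p, x) ≤ p.1 := by
    intro x
    by_contra h
    exact hcon _ (not_le.1 h) (by simp)
  have h3 : #(κ.ord.ToType) ≤ #(Set.Iic p.1) :=
    mk_le_of_injective (f := fun x => ⟨e (p, x), this x⟩) (by
      intro x y h
      have h' := congrArg Subtype.val h
      simpa using h')
  have h4 : #(Set.Iic p.1) < κ := by
    have := mk_Iio_toType_ord_lt p.1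
    rw [← Set.Iio_insert]
    exact (mk_insert_le).trans_lt (add_lt_of_lt hκ this (lt_of_lt_of_le one_lt_aleph0 hκ))
  rw [h1] at h3
  exact h4.not_ge h3

structure Good (N : Web Ω) (I M : Set Ω) (k : Wv Ω) (a : Ω) : Prop where
  wv : IsWv N (I ∪ M) k
  aA : a ∈ N.A
  aX : a ∈ k.X
  aU : a ∉ k.U
  gt : ∀ x ∈ k.X, ∀ y, N.R x y → y ∉ k.X → y ∉ k.S → Gets N k y

def Err (N : Web Ω) (I : Set Ω) (k : Wv Ω) : Set Ω :=
  {z | ∃ x ∈ k.X, N.R x z ∧ z ∉ k.X ∧ z ∉ k.S ∧ z ∉ I}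

theorem exists_good {I M : Set Ω} (h : ¬ Unh N (I ∪ M)) : ∃ k a, Good N I M k a := by
  simp only [Unh] at h
  push Not at h
  obtain ⟨k, hk, a, ha, haI, haU⟩ := h
  obtain ⟨l, h1, _, _, h2, h3, h4⟩ := aug hk ha haI haU
  exact ⟨l, a, h1, ha, h2, h3, h4⟩

theorem Good.err {I M : Set Ω} {k : Wv Ω} {a : Ω} (h : Good N I M k a) : Err N I k ⊆ M := by
  rintro z ⟨x, hx, hz, h1, h2, h3⟩
  rcases h.wv.nb x hx z hz with h | h | h
  · exact absurd h h1
  · exact absurd h h2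
  · exact h.resolve_left h3

theorem Good.dat0 {I M : Set Ω} {k : Wv Ω} {a : Ω} (h : Good N I M k a) :
    IsDat N I ⟨M, k.X, k.S, ∅, k.U, k.pr⟩ := by
  refine ⟨fun x hx h' => h.wv.dX x hx (Or.inl h'), fun x hx h' => h.wv.dS x hx (Or.inl h'),
    fun x hx => absurd hx (by simp), fun x hx h' => h.wv.dX x hx (Or.inr h'),
    fun x hx h' => h.wv.dS x hx (Or.inr h'), fun x hx => absurd hx (by simp), h.wv.XB, ?_,
    h.wv.lk, h.wv.prX, ?_, h.wv.SU, fun x hx => absurd hx (by simp)⟩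
  · intro x hx z hz
    have := h.wv.nb x hx z hz
    simpa using this
  · intro u hu
    have := h.wv.US u hu
    simpa using this

theorem Good.dat1 {I M : Set Ω} {k : Wv Ω} {a y : Ω} (h : Good N I M k a) (hy : y ∈ Err N I k) :
    ∃ U pr, IsDat N I ⟨M, k.X, k.S, {y}, U, pr⟩ := by
  have hyM := h.err hy
  obtain ⟨x, hx, hz, h1, h2, h3⟩ := hy
  obtain ⟨U, pr, g1, g2, g3, g4, g5⟩ := h.gt x hx y hz h1 h2
  refine ⟨U, pr, fun x hx h' => h.wv.dX x hx (Or.inl h'), fun x hx h' => h.wv.dS x hx (Or.inl h'),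
    ?_, fun x hx h' => h.wv.dX x hx (Or.inr h'),
    fun x hx h' => h.wv.dS x hx (Or.inr h'), ?_, h.wv.XB, ?_,
    g1, g5, ?_, g3, ?_⟩
  · rintro x rfl; exact h3
  · rintro x rfl; exact hyM
  · intro x hx z hz
    have := h.wv.nb x hx z hz
    simpa using this
  · intro u hu
    exact g2 u hu
  · rintro x rfl; exact g4

theorem star {κ : Cardinal.{w}} (hκ : κ.IsRegular) {I : Set Ω} (hI : Unh N I) :
    ∃ F : Finset Ω → Set Ω, (∀ s, #(F s) < κ) ∧ ∀ M, Cl F M → #M < κ → Unh N (I ∪ M) := by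
  classical
  by_contra hneg
  push Not at hneg
  have hω := hκ.aleph0_le
  let Y : Set Ω := {y | ∀ F : Finset Ω → Set Ω, (∀ s, #(F s) < κ) →
    ∃ M k a, Cl F M ∧ #M < κ ∧ Good N I M k a ∧ y ∈ Err N I k}
  obtain ⟨F0, hF0, hF0Y⟩ : ∃ F : Finset Ω → Set Ω, (∀ s, #(F s) < κ) ∧ ∀ M k a, Cl F M → #M < κ →
      Good N I M k a → Err N I k ⊆ Y := by
    have : ∀ y, ∃ F : Finset Ω → Set Ω, (∀ s, #(F s) < κ) ∧
        (y ∉ Y → ∀ M k a, Cl F M → #M < κ → Good N I M k a → y ∉ Err N I k) := by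
      intro y
      by_cases hy : y ∈ Y
      · exact ⟨fun _ => ∅, fun _ => by simpa using hκ.pos, fun h => absurd hy h⟩
      · have hy' := hy
        simp only [Y, Set.mem_ofPred_eq] at hy'
        push Not at hy'
        obtain ⟨F, h1, h2⟩ := hy'
        exact ⟨F, h1, fun _ => h2⟩
    choose Fy h1 h2 using this
    refine ⟨fun s => ⋃ p : {p : Ω × Finset Ω // p ∈ s ×ˢ s.powerset}, Fy p.1.1 p.1.2, ?_, ?_⟩
    · intro s
      exact small_iUnion hκ (small_finset hω (s ×ˢ s.powerset)) fun p => h1 _ _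
    · intro M k a hM hMκ hG y hy
      by_contra hyY
      refine h2 y hyY M k a ?_ hMκ hG hy
      intro s hs x hx
      have hyM := hG.err hy
      refine hM (insert y s) ?_ (Set.mem_iUnion.2 ⟨⟨(y, s), ?_⟩, hx⟩)
      · intro z hz
        rcases Finset.mem_insert.1 hz with rfl | hz
        · exact hyM
        · exact hs z hz
      · simp [Finset.subset_insert]
  let ι := κ.ord.ToType
  have hι : #ι = κ := by simp [ι]
  have union_small : ∀ F G : Finset Ω → Set Ω, (∀ s, #(F s) < κ) → (∀ s, #(G s) < κ) →
      ∀ s, #(F s ∪ G s : Set Ω) < κ := fun F G h1 h2 s => small_union hω (h1 s) (h2 s)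
  have cl1 : ∀ {F G : Finset Ω → Set Ω} {M : Set Ω}, Cl (fun s => F s ∪ G s) M → Cl F M ∧ Cl G M :=
    fun h => ⟨fun s hs x hx => h s hs (Or.inl hx), fun s hs x hx => h s hs (Or.inr hx)⟩
  have step0 : ∀ F : Finset Ω → Set Ω, (∀ s, #(F s) < κ) → ∃ M k a, Cl F M ∧ Cl F0 M ∧ #M < κ ∧
      Good N I M k a := by
    intro F hF
    obtain ⟨M, h1, h2, h3⟩ := hneg _ (union_small F F0 hF hF0)
    obtain ⟨k, a, h4⟩ := exists_good h3
    exact ⟨M, k, a, (cl1 h1).1, (cl1 h1).2, h2, h4⟩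
  have hne : Nonempty Ω := by
    obtain ⟨M, k, a, _⟩ := step0 F0 hF0
    exact ⟨a⟩
  let D := {p : Dat Ω × (ι → Ω) × Ω // IsDat N I p.1 ∧ #p.1.M < κ ∧
    ∀ x ∈ p.1.X, ∀ z, N.R x z → z ∉ p.1.X → z ∉ p.1.S → z ∉ I → z ∈ Y ∧ ∃ i, p.2.1 i = z}
  have st0 : ∀ F : Finset Ω → Set Ω, (∀ s, #(F s) < κ) → ∃ d : D, Cl F d.1.1.M ∧
      d.1.2.2 ∈ N.A ∧ d.1.2.2 ∈ d.1.1.X ∧ d.1.2.2 ∉ d.1.1.U := by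
    intro F hF
    obtain ⟨M, k, a, h1, h2, h3, h4⟩ := step0 F hF
    obtain ⟨e, he⟩ := exists_enum (ι := ι) (s := Err N I k)
      ((mk_le_mk_of_subset h4.err).trans (h3.le.trans hι.ge))
    refine ⟨⟨(⟨M, k.X, k.S, ∅, k.U, k.pr⟩, e, a), h4.dat0, h3, ?_⟩, h1, h4.aA, h4.aX, h4.aU⟩
    intro x hx z hz g1 g2 g3
    exact ⟨hF0Y M k a h2 h3 h4 ⟨x, hx, hz, g1, g2, g3⟩, he z ⟨x, hx, hz, g1, g2, g3⟩⟩
  have st1 : ∀ F : Finset Ω → Set Ω, (∀ s, #(F s) < κ) → ∀ y ∈ Y, ∃ d : D, Cl F d.1.1.M ∧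
      y ∈ d.1.1.T := by
    intro F hF y hy
    obtain ⟨M, k, a, h0, h3, h4, h5⟩ := hy _ (union_small F F0 hF hF0)
    obtain ⟨h1, h2⟩ := cl1 h0
    obtain ⟨e, he⟩ := exists_enum (ι := ι) (s := Err N I k)
      ((mk_le_mk_of_subset h4.err).trans (h3.le.trans hι.ge))
    obtain ⟨U, pr, h6⟩ := h4.dat1 h5
    refine ⟨⟨(⟨M, k.X, k.S, {y}, U, pr⟩, e, a), h6, h3, ?_⟩, h1, rfl⟩
    intro x hx z hz g1 g2 g3
    exact ⟨hF0Y M k a h2 h3 h4 ⟨x, hx, hz, g1, g2, g3⟩, he z ⟨x, hx, hz, g1, g2, g3⟩⟩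
  obtain ⟨b, hb⟩ := exists_book hω
  obtain ⟨f, hf⟩ := rec_exists (ι := ι) (D := D) (fun i g d =>
    (∀ j, ∀ hj : j < i, (g j hj).1.1.M ⊆ d.1.1.M ∧ (g j hj).1.2.2 ∈ d.1.1.M ∧
      (∀ u ∈ (g j hj).1.1.U, u ∉ N.A → u ∈ d.1.1.M → (g j hj).1.1.pr u ∈ d.1.1.M) ∧
      (∀ u ∈ (g j hj).1.1.U, u ∉ N.A → (g j hj).1.1.pr u ∈ d.1.1.M → u ∈ d.1.1.M) ∧
      (j = (b i).1 → (g j hj).1.2.1 (b i).2 ∈ Y → (g j hj).1.2.1 (b i).2 ∈ d.1.1.T)) ∧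
    ((∀ j, ¬ j < i) → d.1.2.2 ∈ N.A ∧ d.1.2.2 ∈ d.1.1.X ∧ d.1.2.2 ∉ d.1.1.U)) (by
    intro i g
    have hIio : #(Set.Iio i) < κ := mk_Iio_toType_ord_lt i
    let G : Set Ω := (⋃ j : Set.Iio i, (g j.1 j.2).1.1.M) ∪ Set.range fun j : Set.Iio i =>
      (g j.1 j.2).1.2.2
    let H : Ω → Set Ω := fun u => (Set.range fun j : Set.Iio i => (g j.1 j.2).1.1.pr u) ∪
      ⋃ j : Set.Iio i, {v | v ∈ (g j.1 j.2).1.1.U ∧ v ∉ N.A ∧ (g j.1 j.2).1.1.pr v = u}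
    have hG : #G < κ := small_union hω (small_iUnion hκ hIio fun j => (g j.1 j.2).2.2.1)
      (small_range _ hIio)
    have hH : ∀ u, #(H u) < κ := by
      intro u
      refine small_union hω (small_range _ hIio) (small_iUnion hκ hIio fun j => ?_)
      refine small_subsing hω ?_
      rintro v ⟨h1, h2, h3⟩ v' ⟨h1', h2', h3'⟩
      exact (g j.1 j.2).2.1.lk.inj v h1 v' h1' h2 h2' (h3.trans h3'.symm)
    let F : Finset Ω → Set Ω := fun s => G ∪ ⋃ u : {u // u ∈ s}, H u.1
    have hF : ∀ s, #(F s) < κ := fun s =>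
      small_union hω hG (small_iUnion hκ (small_finset hω s) fun u => hH u.1)
    have hcl : ∀ d : D, Cl F d.1.1.M → ∀ j, ∀ hj : j < i, (g j hj).1.1.M ⊆ d.1.1.M ∧
        (g j hj).1.2.2 ∈ d.1.1.M ∧
        (∀ u ∈ (g j hj).1.1.U, u ∉ N.A → u ∈ d.1.1.M → (g j hj).1.1.pr u ∈ d.1.1.M) ∧
        (∀ u ∈ (g j hj).1.1.U, u ∉ N.A → (g j hj).1.1.pr u ∈ d.1.1.M → u ∈ d.1.1.M) := by
      intro d hd j hj
      refine ⟨?_, ?_, ?_, ?_⟩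
      · intro x hx
        exact hd ∅ (by simp) (Or.inl (Or.inl (Set.mem_iUnion.2 ⟨⟨j, hj⟩, hx⟩)))
      · exact hd ∅ (by simp) (Or.inl (Or.inr ⟨⟨j, hj⟩, rfl⟩))
      · intro u hu hA hM
        exact hd {u} (by simpa using hM) (Or.inr (Set.mem_iUnion.2 ⟨⟨u, by simp⟩,
          Or.inl ⟨⟨j, hj⟩, rfl⟩⟩))
      · intro u hu hA hM
        exact hd {(g j hj).1.1.pr u} (by simpa using hM) (Or.inr (Set.mem_iUnion.2 ⟨⟨_, by simp⟩,
          Or.inr (Set.mem_iUnion.2 ⟨⟨j, hj⟩, hu, hA, rfl⟩)⟩))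
    by_cases hY : ∃ hj : (b i).1 < i, (g (b i).1 hj).1.2.1 (b i).2 ∈ Y
    · obtain ⟨hj, hY⟩ := hY
      obtain ⟨d, h1, h2⟩ := st1 F hF _ hY
      refine ⟨d, fun j hj' => ?_, fun h => absurd hj (h _)⟩
      obtain ⟨c1, c2, c3, c4⟩ := hcl d h1 j hj'
      refine ⟨c1, c2, c3, c4, ?_⟩
      rintro rfl _
      exact h2
    · obtain ⟨d, h1, h2⟩ := st0 F hF
      refine ⟨d, fun j hj' => ?_, fun _ => h2⟩
      obtain ⟨c1, c2, c3, c4⟩ := hcl d h1 j hj'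
      refine ⟨c1, c2, c3, c4, ?_⟩
      rintro rfl h
      exact absurd ⟨hj', h⟩ hY)
  have hne' : Nonempty ι := by
    rw [← mk_ne_zero_iff, hι]; exact hκ.ne_zero
  obtain ⟨bot, -, hbot⟩ := WellFounded.has_min (wellFounded_lt (α := ι)) Set.univ Set.univ_nonempty
  have hbot' : ∀ j, ¬ j < bot := fun j => hbot j trivial
  refine assemble (N := N) (fun i => (f i).1.1) (I := I) (fun i => (f i).2.1)
    (fun i j h => ((hf j).1 i h).1) (fun i j h => ((hf j).1 i h).2.2.1)
    (fun i j h => ((hf j).1 i h).2.2.2.1) ?_ bot (f bot).1.2.2 ((hf bot).2 hbot').1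
    ((hf bot).2 hbot').2.1 ((hf bot).2 hbot').2.2 (fun i h => ((hf i).1 bot h).2.1) hI
  intro i x hx z hz h1 h2 h3
  obtain ⟨hzY, α, hα⟩ := (f i).2.2.2 x hx z hz h1 h2 h3
  obtain ⟨j, hj1, hj2⟩ := hb (i, α)
  have := ((hf j).1 i hj1).2.2.2.2 (by rw [hj2])
  rw [hj2] at this
  simp only [hα] at this
  exact ⟨j, this hzY⟩

end EMW
end Part6

section Part7
namespace EMW
open Cardinal
variable {Ω : Type w} {N : Web Ω}

def Linkable (N : Web Ω) (I Z : Set Ω) : Prop :=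
  ∃ Q : Ω → List Ω, (∀ a ∈ N.A, a ∈ Z → a ∉ I → IsABPath N a (Q a) ∧ ∀ x ∈ Q a, x ∈ Z ∧ x ∉ I) ∧
    ∀ a ∈ N.A, a ∈ Z → a ∉ I → ∀ b ∈ N.A, b ∈ Z → b ∉ I → a ≠ b → ∀ x ∈ Q a, x ∉ Q b

theorem linkable_chain {ι : Type*} [LinearOrder ι] [WellFoundedLT ι] {I : Set Ω} {Z : ι → Set Ω}
    (h : ∀ i, Linkable N (I ∪ ⋃ j, ⋃ _ : j < i, Z j) (Z i)) : Linkable N I (⋃ i, Z i) := by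
  choose Q h1 h2 using h
  have hn : ∀ a, ∃ l : List Ω, ∀ _ : a ∈ ⋃ i, Z i, ∃ i, a ∈ Z i ∧ (∀ j, j < i → a ∉ Z j) ∧
      l = Q i a := by
    intro a
    by_cases ha : a ∈ ⋃ i, Z i
    · obtain ⟨i, hi, hm⟩ := WellFounded.has_min (wellFounded_lt (α := ι)) {i | a ∈ Z i}
        (Set.mem_iUnion.1 ha)
      exact ⟨Q i a, fun _ => ⟨i, hi, fun j hj h => hm j h hj, rfl⟩⟩
    · exact ⟨[], fun h => absurd h ha⟩
  choose P hP using hn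
  have out : ∀ a i, a ∉ I → (∀ j, j < i → a ∉ Z j) → a ∉ I ∪ ⋃ j, ⋃ _ : j < i, Z j := by
    intro a i h1 h2 h
    simp only [Set.mem_union, Set.mem_iUnion] at h
    rcases h with h | ⟨j, hj, h⟩
    · exact h1 h
    · exact h2 j hj h
  refine ⟨P, ?_, ?_⟩
  · intro a haA haZ haI
    obtain ⟨i, hi, hm, he⟩ := hP a haZ
    obtain ⟨g1, g2⟩ := h1 i a haA hi (out a i haI hm)
    rw [he]
    exact ⟨g1, fun x hx => ⟨Set.mem_iUnion.2 ⟨i, (g2 x hx).1⟩, fun h => (g2 x hx).2 (Or.inl h)⟩⟩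
  · intro a haA haZ haI b hbA hbZ hbI hab x hxa hxb
    obtain ⟨i, hi, hm, he⟩ := hP a haZ
    obtain ⟨i', hi', hm', he'⟩ := hP b hbZ
    rw [he] at hxa
    rw [he'] at hxb
    have g := (h1 i a haA hi (out a i haI hm)).2 x hxa
    have g' := (h1 i' b hbA hi' (out b i' hbI hm')).2 x hxb
    rcases lt_trichotomy i i' with hlt | rfl | hlt
    · refine g'.2 (Or.inr ?_)
      simp only [Set.mem_iUnion]
      exact ⟨i, hlt, g.1⟩
    · exact h2 i a haA hi (out a i haI hm) b hbA hi' (out b i hbI hm') hab x hxa hxb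
    · refine g.2 (Or.inr ?_)
      simp only [Set.mem_iUnion]
      exact ⟨i', hlt, g'.1⟩

/-- generic transfinite construction of linkable sets -/
theorem chain_build {ι : Type*} [LinearOrder ι] [WellFoundedLT ι] {I : Set Ω}
    (P : ι → Set Ω → Set Ω → Prop) (ok : ι → Set Ω → Prop)
    (H : ∀ i B, ok i B → Unh N (I ∪ B) → ∃ Z, B ⊆ Z ∧ P i B Z ∧ Linkable N (I ∪ B) Z)
    (K : ∀ i (Z : ι → Set Ω), (∀ j, j < i → P j (⋃ l, ⋃ _ : l < j, Z l) (Z j)) →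
      (∀ j, j < i → ∀ l, l ≤ j → Z l ⊆ Z j) →
      ok i (⋃ l, ⋃ _ : l < i, Z l) ∧ Unh N (I ∪ ⋃ l, ⋃ _ : l < i, Z l)) :
    ∃ Z : ι → Set Ω, (∀ i, P i (⋃ l, ⋃ _ : l < i, Z l) (Z i)) ∧ (∀ i j, i ≤ j → Z i ⊆ Z j) ∧
      Linkable N I (⋃ i, Z i) := by
  obtain ⟨Z, hZ⟩ := rec_exists (ι := ι) (D := Set Ω) (fun i g d =>
    ok i (⋃ l, ⋃ h : l < i, g l h) → Unh N (I ∪ ⋃ l, ⋃ h : l < i, g l h) →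
      (⋃ l, ⋃ h : l < i, g l h) ⊆ d ∧ P i (⋃ l, ⋃ h : l < i, g l h) d ∧
        Linkable N (I ∪ ⋃ l, ⋃ h : l < i, g l h) d) (by
    intro i g
    by_cases h1 : ok i (⋃ l, ⋃ h : l < i, g l h) ∧ Unh N (I ∪ ⋃ l, ⋃ h : l < i, g l h)
    · obtain ⟨d, hd⟩ := H i _ h1.1 h1.2
      exact ⟨d, fun _ _ => hd⟩
    · exact ⟨∅, fun h2 h3 => absurd ⟨h2, h3⟩ h1⟩)
  have sub : ∀ i, (⋃ l, ⋃ _ : l < i, Z l) ⊆ Z i → ∀ l, l ≤ i → Z l ⊆ Z i := by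
    intro i hi l hl
    rcases hl.eq_or_lt with rfl | hl
    · exact fun _ h => h
    · intro x hx
      refine hi ?_
      simp only [Set.mem_iUnion]
      exact ⟨l, hl, hx⟩
  have all : ∀ i, (⋃ l, ⋃ _ : l < i, Z l) ⊆ Z i ∧ P i (⋃ l, ⋃ _ : l < i, Z l) (Z i) ∧
        Linkable N (I ∪ ⋃ l, ⋃ _ : l < i, Z l) (Z i) := by
    intro i
    induction i using WellFoundedLT.induction with
    | ind i ih =>
    obtain ⟨h1, h2⟩ := K i Z (fun j hj => (ih j hj).2.1) (fun j hj => sub j (ih j hj).1)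
    exact hZ i h1 h2
  exact ⟨Z, fun i => (all i).2.1, fun i j hij => sub j (all j).1 i hij,
    linkable_chain fun i => (all i).2.2⟩

theorem Unh.empty_union {I : Set Ω} (h : Unh N I) : Unh N (I ∪ ∅) := by simpa using h

/-- finite subsets of a nonempty directed union -/
theorem fin_dir {ι : Type*} [LinearOrder ι] {p : ι → Prop} {Z : ι → Set Ω} (hne : ∃ i, p i)
    (hm : ∀ j, p j → ∀ l, l ≤ j → Z l ⊆ Z j) (s : Finset Ω)
    (hs : ∀ x ∈ s, ∃ i, p i ∧ x ∈ Z i) : ∃ i, p i ∧ ∀ x ∈ s, x ∈ Z i := by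
  classical
  induction s using Finset.induction_on with
  | empty => obtain ⟨i, hi⟩ := hne; exact ⟨i, hi, by simp⟩
  | insert a s _ ih =>
    obtain ⟨i, hi, h⟩ := ih fun x hx => hs x (Finset.mem_insert_of_mem hx)
    obtain ⟨j, hj, h'⟩ := hs a (Finset.mem_insert_self _ _)
    rcases le_total i j with hij | hij
    · refine ⟨j, hj, fun x hx => ?_⟩
      rcases Finset.mem_insert.1 hx with rfl | hx
      · exact h'
      · exact hm j hj i hij (h x hx)
    · refine ⟨i, hi, fun x hx => ?_⟩
      rcases Finset.mem_insert.1 hx with rfl | hx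
      · exact hm i hi j hij h'
      · exact h x hx

theorem mk_finset_sub {κ : Cardinal.{w}} (hκ : ℵ₀ < κ) {B : Set Ω} (hB : #B < κ) :
    #(Finset B) < κ := by
  rcases finite_or_infinite B with h | h
  · exact lt_of_lt_of_le (by simp) hκ.le
  · rw [mk_finset_of_infinite]; exact hB

/-- the union of the values of `F` on finite subsets of `B` -/
def hull (F : Finset Ω → Set Ω) (B : Set Ω) : Set Ω :=
  ⋃ s : Finset B, F (s.map (Function.Embedding.subtype _))

theorem mem_hull {F : Finset Ω → Set Ω} {B : Set Ω} {s : Finset Ω} (hs : ∀ x ∈ s, x ∈ B) :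
    F s ⊆ hull F B := by
  classical
  intro x hx
  refine Set.mem_iUnion.2 ⟨s.subtype (· ∈ B), ?_⟩
  have : (s.subtype (· ∈ B)).map (Function.Embedding.subtype _) = s := by
    ext y; simp; exact fun h => hs y h
  rw [this]; exact hx

theorem small_hull {κ : Cardinal.{w}} (hκ : κ.IsRegular) (hω : ℵ₀ < κ) {F : Finset Ω → Set Ω}
    (hF : ∀ s, #(F s) < κ) {B : Set Ω} (hB : #B < κ) : #(hull F B) < κ :=
  small_iUnion hκ (mk_finset_sub hω hB) fun _ => hF _

theorem closure {κ : Cardinal.{w}} (hκ : κ.IsRegular) (hω : ℵ₀ < κ) {F : Finset Ω → Set Ω}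
    (hF : ∀ s, #(F s) < κ) {B : Set Ω} (hB : #B < κ) : ∃ M, B ⊆ M ∧ Cl F M ∧ #M < κ := by
  let Z : ℕ → Set Ω := fun n => Nat.rec B (fun _ B => B ∪ hull F B) n
  have hs : ∀ n, Z (n+1) = Z n ∪ hull F (Z n) := fun n => rfl
  have hm : Monotone Z := monotone_nat_of_le_succ fun n => by
    rw [hs]; exact Set.subset_union_left
  have hsm : ∀ n, #(↥(Z n)) < κ := by
    intro n
    induction n with
    | zero => exact hB
    | succ n ih => rw [hs]; exact small_union hω.le ih (small_hull hκ hω hF ih)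
  refine ⟨⋃ n : ULift.{w} ℕ, Z n.down, ?_, ?_, small_iUnion hκ (by simpa using hω) fun n => hsm _⟩
  · intro x hx; exact Set.mem_iUnion.2 ⟨⟨0⟩, hx⟩
  · intro s h x hx
    obtain ⟨n, _, hn⟩ := fin_dir (p := fun _ : ℕ => True) (Z := Z) ⟨0, trivial⟩
      (fun j _ l hl => hm hl) s (fun x hx => by
        obtain ⟨i, hi⟩ := Set.mem_iUnion.1 (h x hx)
        exact ⟨_, trivial, hi⟩)
    exact Set.mem_iUnion.2 ⟨⟨n+1⟩, Or.inr (mem_hull hn hx)⟩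

theorem split {ι : Type w} {θ : ι → Cardinal.{w}} {s : Set Ω} (h : #s ≤ Cardinal.sum θ) :
    ∃ E : ι → Set Ω, (∀ i, #(E i) ≤ θ i) ∧ s = ⋃ i, E i := by
  have h' : #s ≤ #(Σ i, (θ i).out) := h
  obtain ⟨g⟩ := h'
  refine ⟨fun i => {x | ∃ hx : x ∈ s, (g ⟨x, hx⟩).1 = i}, ?_, ?_⟩
  · intro i
    have h1 : #{p : Σ i, (θ i).out // p.1 = i} = θ i := by
      rw [Cardinal.mk_congr (Equiv.sigmaSubtype i), mk_out]
    rw [← h1]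
    refine mk_le_of_injective (f := fun x => ⟨g ⟨x.1, x.2.choose⟩, x.2.choose_spec⟩) ?_
    intro x y h
    have h2 := g.injective (congrArg Subtype.val h)
    exact Subtype.ext (Subtype.mk.inj h2)
  · ext x
    simp only [Set.mem_iUnion, Set.mem_ofPred_eq]
    constructor
    · intro hx; exact ⟨_, hx, rfl⟩
    · rintro ⟨_, hx, _⟩; exact hx

def Cp (N : Web Ω) (κ : Cardinal.{w}) : Prop :=
  ∀ I, Unh N I → ∀ F : Finset Ω → Set Ω, (∀ s, #(F s) < κ) → ∃ Z, Cl F Z ∧ #Z < κ ∧ Linkable N I Z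

end EMW
end Part7

section Part8
namespace EMW
open Cardinal Order
variable {Ω : Type w} {N : Web Ω}

theorem chain_notA (l : List Ω) : ∀ b, (b :: l).IsChain N.R → ∀ x ∈ l, x ∉ N.A := by
  induction l with
  | nil => simp
  | cons c l ih =>
    intro b h1 x hx hxA
    rw [List.isChain_cons_cons] at h1
    rcases List.mem_cons.1 hx with rfl | hx'
    · exact N.hRA _ _ h1.1 hxA
    · exact ih c h1.2 x hx' hxA

theorem IsABPath.mem_A {a : Ω} {Q : List Ω} (h : IsABPath N a Q) {x : Ω} (hx : x ∈ Q)
    (hxA : x ∈ N.A) : x = a := by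
  obtain ⟨h1, h2, _⟩ := h
  cases Q with
  | nil => simp at hx
  | cons b l =>
    have : b = a := by simpa using h2
    subst this
    rcases List.mem_cons.1 hx with rfl | hx
    · rfl
    · exact absurd hxA (chain_notA l _ h1 x hx)

theorem cp_aleph1 : Cp N (succ ℵ₀) := by
  classical
  intro I hI F hF
  have hπ : ∀ (J : Set Ω) (a : Ω), ∃ Q : List Ω, (Unh N J → a ∈ N.A → a ∉ J → IsABPath N a Q ∧
      (∀ x ∈ Q, x ∉ J)) ∧ (Unh N J → Unh N (J ∪ {x | x ∈ Q})) ∧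
      (∀ x ∈ Q, x ∈ N.A → x = a) := by
    intro J a
    by_cases h : Unh N J ∧ a ∈ N.A ∧ a ∉ J
    · obtain ⟨Q, h1, h2, _, h3⟩ := M1 h.1 h.2.1 h.2.2
      exact ⟨Q, fun _ _ _ => ⟨h1, h2⟩, fun _ => h3, fun x hx hA => h1.mem_A hx hA⟩
    · refine ⟨[], fun h1 h2 h3 => absurd ⟨h1, h2, h3⟩ h, fun h => ?_, by simp⟩
      have : {x : Ω | x ∈ ([] : List Ω)} = ∅ := by ext; simp
      rw [this]; exact h.empty_union
  choose π hπ1 hπ2 hπ3 using hπ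
  let J : List Ω → Set Ω := fun l => List.rec I (fun a _ J => J ∪ {x | x ∈ π J a}) l
  have J0 : J [] = I := rfl
  have J1 : ∀ a l, J (a :: l) = J l ∪ {x | x ∈ π (J l) a} := fun _ _ => rfl
  have JU : ∀ l, Unh N (J l) := by
    intro l
    induction l with
    | nil => exact hI
    | cons a l ih => rw [J1]; exact hπ2 _ a ih
  have hreg : (succ ℵ₀ : Cardinal.{w}).IsRegular := isRegular_succ le_rfl
  have hω : ℵ₀ < (succ ℵ₀ : Cardinal.{w}) := lt_succ _
  let G : Finset Ω → Set Ω := fun s => F s ∪ ⋃ p : List {x // x ∈ s} × {x // x ∈ s},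
    {x | x ∈ π (J (p.1.map Subtype.val)) p.2.1}
  have hG : ∀ s, #(G s) < succ ℵ₀ := by
    intro s
    refine small_union hω.le (hF s) (small_iUnion hreg ?_ ?_)
    · rw [lt_succ_iff, mk_le_aleph0_iff]; infer_instance
    · intro p
      exact small_range (κ := succ ℵ₀) (α := {x // x ∈ π (J (p.1.map Subtype.val)) p.2.1})
        Subtype.val (by rw [lt_succ_iff, mk_le_aleph0_iff]; exact
          (List.finite_toSet _).countable.to_subtype) |> fun h => by simpa using h
  obtain ⟨H, -, hcl, hsm⟩ := closure hreg hω hG (B := ∅) (by simp)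
  have clF : Cl F H := fun s hs x hx => hcl s hs (Or.inl hx)
  have clπ : ∀ l : List Ω, ∀ a, (∀ x ∈ l, x ∈ H) → a ∈ H → ∀ x ∈ π (J l) a, x ∈ H := by
    intro l a hl ha x hx
    refine hcl (insert a l.toFinset) ?_ (Or.inr (Set.mem_iUnion.2 ⟨⟨l.attach.map fun y =>
      ⟨y.1, by simp [y.2]⟩, ⟨a, by simp⟩⟩, ?_⟩))
    · intro y hy
      rcases Finset.mem_insert.1 hy with rfl | hy
      · exact ha
      · exact hl y (by simpa using hy)
    · simpa [List.map_map, Function.comp_def] using hx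
  refine ⟨H, clF, hsm, ?_⟩
  have hcount : {a | a ∈ N.A ∧ a ∈ H ∧ a ∉ I}.Countable := by
    refine Set.Countable.mono (s₂ := H) (fun x hx => hx.2.1) ?_
    rw [← le_aleph0_iff_set_countable]
    exact lt_succ_iff.1 hsm
  rcases Set.eq_empty_or_nonempty {a | a ∈ N.A ∧ a ∈ H ∧ a ∉ I} with hemp | hne
  · refine ⟨fun _ => [], fun a h1 h2 h3 => ?_, fun a h1 h2 h3 => ?_⟩ <;>
    · have : a ∈ {a | a ∈ N.A ∧ a ∈ H ∧ a ∉ I} := ⟨h1, h2, h3⟩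
      rw [hemp] at this
      exact absurd this (by simp)
  obtain ⟨e, he⟩ := hcount.exists_eq_range hne
  have he1 : ∀ n, e n ∈ N.A ∧ e n ∈ H ∧ e n ∉ I := by
    intro n
    have : e n ∈ {a | a ∈ N.A ∧ a ∈ H ∧ a ∉ I} := he ▸ ⟨n, rfl⟩
    exact this
  let l : ℕ → List Ω := fun n => Nat.rec [] (fun n l => e n :: l) n
  have l1 : ∀ n, l (n+1) = e n :: l n := fun _ => rfl
  have lmem : ∀ n, ∀ x ∈ l n, ∃ m, m < n ∧ x = e m := by
    intro n
    induction n with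
    | zero => intro x hx; simp [l] at hx
    | succ n ih =>
      intro x hx
      rw [l1] at hx
      rcases List.mem_cons.1 hx with rfl | hx
      · exact ⟨n, by omega, rfl⟩
      · obtain ⟨m, h1, h2⟩ := ih x hx
        exact ⟨m, by omega, h2⟩
  have lH : ∀ n, ∀ x ∈ l n, x ∈ H := by
    intro n x hx
    obtain ⟨m, _, rfl⟩ := lmem n x hx
    exact (he1 m).2.1
  have Jmono : ∀ n m, n ≤ m → J (l n) ⊆ J (l m) := by
    intro n m h
    exact monotone_nat_of_le_succ (f := fun n => J (l n)) (fun n x hx => by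
      rw [l1, J1]; exact Or.inl hx) h
  -- sources in J
  have JA : ∀ n, ∀ x ∈ N.A, x ∈ J (l n) → x ∉ I → ∃ m, m < n ∧ x = e m := by
    intro n
    induction n with
    | zero => intro x _ h1 h2; exact absurd h1 h2
    | succ n ih =>
      intro x hxA h1 h2
      rw [l1, J1] at h1
      rcases h1 with h1 | h1
      · obtain ⟨m, g1, g2⟩ := ih x hxA h1 h2
        exact ⟨m, by omega, g2⟩
      · exact ⟨n, by omega, hπ3 _ _ x h1 hxA⟩
  have hidx : ∀ a, ∃ n, a ∈ N.A → a ∈ H → a ∉ I → e n = a ∧ ∀ m, m < n → e m ≠ a := by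
    intro a
    by_cases ha : ∃ n, e n = a
    · exact ⟨Nat.find ha, fun _ _ _ => ⟨Nat.find_spec ha, fun m hm => Nat.find_min ha hm⟩⟩
    · refine ⟨0, fun h1 h2 h3 => absurd ?_ ha⟩
      have : a ∈ {a | a ∈ N.A ∧ a ∈ H ∧ a ∉ I} := ⟨h1, h2, h3⟩
      rw [he] at this
      exact this
  choose n hn using hidx
  have good : ∀ a, a ∈ N.A → a ∈ H → a ∉ I → IsABPath N a (π (J (l (n a))) a) ∧
      ∀ x ∈ π (J (l (n a))) a, x ∉ J (l (n a)) := by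
    intro a h1 h2 h3
    refine hπ1 _ _ (JU _) h1 fun h => ?_
    obtain ⟨m, hm, he⟩ := JA _ a h1 h h3
    exact (hn a h1 h2 h3).2 m hm he.symm
  have dis : ∀ a ∈ N.A, a ∈ H → a ∉ I → ∀ b ∈ N.A, b ∈ H → b ∉ I → n a < n b →
      ∀ x ∈ π (J (l (n a))) a, x ∉ π (J (l (n b))) b := by
    intro a h1 h2 h3 b g1 g2 g3 hlt x hx hx'
    refine (good b g1 g2 g3).2 x hx' (Jmono (n a + 1) _ hlt ?_)
    rw [l1, J1, (hn a h1 h2 h3).1]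
    exact Or.inr hx
  refine ⟨fun a => π (J (l (n a))) a, ?_, ?_⟩
  · intro a h1 h2 h3
    obtain ⟨g1, g2⟩ := good a h1 h2 h3
    refine ⟨g1, fun x hx => ⟨clπ _ a (lH _) h2 x hx, fun h => g2 x hx (Jmono 0 _ (by omega) h)⟩⟩
  · intro a h1 h2 h3 b g1 g2 g3 hab x hx hx'
    rcases lt_trichotomy (n a) (n b) with h | h | h
    · exact dis a h1 h2 h3 b g1 g2 g3 h x hx hx'
    · exact hab (by rw [← (hn a h1 h2 h3).1, ← (hn b g1 g2 g3).1, h])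
    · exact dis b g1 g2 g3 a h1 h2 h3 h x hx' hx

end EMW
end Part8

section Part9
namespace EMW
open Cardinal Order
variable {Ω : Type w} {N : Web Ω}

theorem small_lt {ι : Type w} [LinearOrder ι] {κ : Cardinal.{w}} (hκ : κ.IsRegular) {i : ι}
    (hi : #(Set.Iio i) < κ) {Z : ι → Set Ω} (hZ : ∀ j, j < i → #(Z j) < κ) :
    #(⋃ l, ⋃ _ : l < i, Z l : Set Ω) < κ := by
  have : (⋃ l, ⋃ _ : l < i, Z l) = ⋃ l : Set.Iio i, Z l.1 := by
    ext x; simp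
  rw [this]
  exact small_iUnion hκ hi fun j => hZ j.1 j.2

theorem small_le_part {ι : Type w} [LinearOrder ι] {κ : Cardinal.{w}} (hκ : κ.IsRegular) {i : ι}
    (hi : #(Set.Iic i) < κ) {Z : ι → Set Ω} (hZ : ∀ j, j ≤ i → #(Z j) < κ) :
    #(⋃ l, ⋃ _ : l ≤ i, Z l : Set Ω) < κ := by
  have : (⋃ l, ⋃ _ : l ≤ i, Z l) = ⋃ l : Set.Iic i, Z l.1 := by
    ext x; simp
  rw [this]
  exact small_iUnion hκ hi fun j => hZ j.1 j.2

theorem small_Iic {ι : Type w} [LinearOrder ι] {κ : Cardinal.{w}} (hκ : ℵ₀ ≤ κ) {i : ι}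
    (hi : #(Set.Iio i) < κ) : #(Set.Iic i) < κ := by
  have : Set.Iic i = Set.Iio i ∪ {i} := by
    ext x; simp [le_iff_lt_or_eq]
  rw [this]
  refine small_union hκ hi ?_
  rw [mk_singleton]; exact lt_of_lt_of_le one_lt_aleph0 hκ

theorem cp_succ_reg {μ : Cardinal.{w}} (hμ : μ.IsRegular) (hω : ℵ₀ < μ) (ih : Cp N μ) :
    Cp N (succ μ) := by
  classical
  intro I hI F hF
  obtain ⟨f, hf, hstar⟩ := star hμ hI
  let ι := μ.ord.ToType
  have hι : #ι = μ := by simp [ι]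
  have hiio : ∀ i : ι, #(Set.Iio i) < μ := fun i => mk_Iio_toType_ord_lt i
  have hs : ∀ s, ∃ E : ι → Set Ω, (∀ i, #(E i) ≤ 1) ∧ F s = ⋃ i, E i := by
    intro s
    refine split (θ := fun _ : ι => 1) ?_
    have := lt_succ_iff.1 (hF s)
    simpa [hι] using this
  choose E hE1 hE2 using hs
  have h1 : (1 : Cardinal.{w}) < μ := one_lt_aleph0.trans hω
  obtain ⟨Z, hZ1, hZ2, hZ3⟩ := chain_build (N := N) (I := I) (ι := ι)
    (fun i B Z => #Z < μ ∧ Cl f Z ∧ ∀ α, α ≤ i → Cl (fun s => E s α) Z)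
    (fun i B => #B < μ) (by
      intro i B hB hU
      obtain ⟨Z, hZ, hZc, hZl⟩ := ih (I ∪ B) hU
        (fun s => B ∪ (f s ∪ ⋃ α, ⋃ _ : α ≤ i, E s α)) (by
          intro s
          exact small_union hω.le hB (small_union hω.le (hf s)
            (small_le_part hμ (small_Iic hω.le (hiio i)) fun j _ => (hE1 s j).trans_lt h1)))
      refine ⟨Z, fun x hx => hZ ∅ (by simp) (Or.inl hx), ⟨hZc, ?_, ?_⟩, hZl⟩
      · exact fun s hs x hx => hZ s hs (Or.inr (Or.inl hx))
      · intro α hα s hs x hx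
        refine hZ s hs (Or.inr (Or.inr ?_))
        simp only [Set.mem_iUnion]
        exact ⟨α, hα, hx⟩) (by
      intro i Z h1 h2
      have hsm := small_lt hμ (hiio i) (Z := Z) fun j hj => (h1 j hj).1
      refine ⟨hsm, ?_⟩
      by_cases hi : ∃ l, l < i
      · refine hstar _ ?_ hsm
        intro s hs x hx
        obtain ⟨j, hj, hjs⟩ := fin_dir (p := fun l => l < i) (Z := Z) hi h2 s (by
          intro x hx; simpa using hs x hx)
        simp only [Set.mem_iUnion]
        exact ⟨j, hj, (h1 j hj).2.1 s hjs hx⟩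
      · have : (⋃ l, ⋃ _ : l < i, Z l) = ∅ := by
          ext x; simp; intro j hj; exact absurd ⟨j, hj⟩ hi
        rw [this]; exact hI.empty_union)
  refine ⟨⋃ i, Z i, ?_, ?_, hZ3⟩
  · intro s hs x hx
    rw [hE2, Set.mem_iUnion] at hx
    obtain ⟨α, hα⟩ := hx
    obtain ⟨j, hj, hjs⟩ := fin_dir (p := fun l => α ≤ l) (Z := Z) ⟨α, le_rfl⟩
      (fun j _ l hl => hZ2 l j hl) s (by
        intro x hx
        obtain ⟨i, hi⟩ := Set.mem_iUnion.1 (hs x hx)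
        exact ⟨max α i, le_max_left _ _, hZ2 i _ (le_max_right _ _) hi⟩)
    exact Set.mem_iUnion.2 ⟨j, (hZ1 j).2.2 α hj s hjs hα⟩
  · refine small_iUnion (isRegular_succ hω.le) (by rw [hι]; exact lt_succ _) fun i =>
      (hZ1 i).1.trans (lt_succ _)

theorem cp_limit {κ : Cardinal.{w}} (hκ : κ.IsRegular) (hω : ℵ₀ < κ)
    (hlim : ∀ ν, ν < κ → succ ν < κ) (ih : ∀ ν, ℵ₀ ≤ ν → ν < κ → Cp N (succ ν)) : Cp N κ := by
  classical
  intro I hI F hF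
  obtain ⟨Z, hZ1, hZ2, hZ3⟩ := chain_build (N := N) (I := I) (ι := ℕ)
    (fun i B Z => #Z < κ ∧ hull F B ⊆ Z ∧ Unh N (I ∪ Z))
    (fun i B => #B < κ) (by
      intro i B hB hU
      have hH := small_hull hκ hω hF hB
      obtain ⟨ν, hν0, hνB, hνH, hν⟩ : ∃ ν, ℵ₀ ≤ ν ∧ #B ≤ ν ∧ #(hull F B) ≤ ν ∧ ν < κ :=
        ⟨max ℵ₀ (max #B #(hull F B)), le_max_left _ _, (le_max_left _ _).trans (le_max_right _ _),
          (le_max_right _ _).trans (le_max_right _ _), max_lt hω (max_lt hB hH)⟩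
      have hreg : (succ ν).IsRegular := isRegular_succ hν0
      have hω' : ℵ₀ ≤ succ ν := hν0.trans (le_succ _)
      obtain ⟨f, hf, hstar⟩ := star hreg hI
      obtain ⟨Z, hZ, hZc, hZl⟩ := ih ν hν0 hν (I ∪ B) hU
        (fun s => B ∪ (f s ∪ hull F B)) (by
          intro s
          exact small_union hω' (lt_succ_iff.2 hνB) (small_union hω' (hf s) (lt_succ_iff.2 hνH)))
      refine ⟨Z, fun x hx => hZ ∅ (by simp) (Or.inl hx), ⟨hZc.trans (hlim ν hν),
        fun x hx => hZ ∅ (by simp) (Or.inr (Or.inr hx)), hstar Z ?_ hZc⟩, hZl⟩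
      exact fun s hs x hx => hZ s hs (Or.inr (Or.inl hx))) (by
      intro i Z h1 h2
      cases i with
      | zero =>
        have : (⋃ l, ⋃ _ : l < 0, Z l) = ∅ := by ext x; simp
        rw [this]
        exact ⟨by simpa using (aleph0_pos.trans hω), hI.empty_union⟩
      | succ n =>
        have : (⋃ l, ⋃ _ : l < n+1, Z l) = Z n := by
          ext x; simp only [Set.mem_iUnion]
          constructor
          · rintro ⟨l, hl, hx⟩; exact h2 n (by omega) l (by omega) hx
          · intro h; exact ⟨n, by omega, h⟩
        rw [this]
        exact ⟨(h1 n (by omega)).1, (h1 n (by omega)).2.2⟩)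
  refine ⟨⋃ i, Z i, ?_, ?_, hZ3⟩
  · intro s hs x hx
    obtain ⟨j, hj, hjs⟩ := fin_dir (p := fun _ : ℕ => True) (Z := Z) ⟨0, trivial⟩
      (fun j _ l hl => hZ2 l j hl) s (by
        intro x hx
        obtain ⟨i, hi⟩ := Set.mem_iUnion.1 (hs x hx)
        exact ⟨i, trivial, hi⟩)
    refine Set.mem_iUnion.2 ⟨j+1, (hZ1 (j+1)).2.1 (mem_hull ?_ hx)⟩
    intro y hy
    simp only [Set.mem_iUnion]
    exact ⟨j, by omega, hjs y hy⟩
  · have : (⋃ i, Z i) = ⋃ i : ULift.{w} ℕ, Z i.down := by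
      ext x; simp
    rw [this]
    exact small_iUnion hκ (by simpa using hω) fun i => (hZ1 _).1

end EMW
end Part9

section Part10
namespace EMW
open Cardinal Order
variable {Ω : Type w} {N : Web Ω}

theorem sing_aux {ι : Type w} [LinearOrder ι] {θ : ι → Cardinal.{w}} (hθ : ∀ i, ℵ₀ ≤ θ i)
    {I : Set Ω} (hI : Unh N I) (j : ι) : ∃ e : ι → Finset Ω → Set Ω, (∀ i s, #(e i s) ≤ θ i) ∧
      ∀ Z : ι → Set Ω, (∀ l, l < j → #(Z l) ≤ θ l) → (∀ k, k < j → ∀ l, l ≤ k → Z l ⊆ Z k) →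
        (∀ l, l < j → ∀ i, i ≤ l → Cl (e i) (Z l)) → Unh N (I ∪ ⋃ l, ⋃ _ : l < j, Z l) := by
  classical
  by_cases hj : ∃ l, l < j
  · let ν : Cardinal.{w} := Cardinal.sum fun i : Set.Iio j => θ i.1
    have hν : ℵ₀ ≤ ν := by
      obtain ⟨l, hl⟩ := hj
      exact (hθ l).trans (le_sum (fun i : Set.Iio j => θ i.1) ⟨l, hl⟩)
    obtain ⟨f, hf, hstar⟩ := star (isRegular_succ hν) hI
    have hs : ∀ s, ∃ E : Set.Iio j → Set Ω, (∀ i, #(E i) ≤ θ i.1) ∧ f s = ⋃ i, E i := by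
      intro s
      exact split (θ := fun i : Set.Iio j => θ i.1) (lt_succ_iff.1 (hf s))
    choose E hE1 hE2 using hs
    refine ⟨fun i s => ⋃ h : i < j, E s ⟨i, h⟩, ?_, ?_⟩
    · intro i s
      by_cases h : i < j
      · simpa [h] using hE1 s ⟨i, h⟩
      · simp [h]
    · intro Z h1 h2 h3
      refine hstar _ ?_ ?_
      · intro s hs x hx
        rw [hE2, Set.mem_iUnion] at hx
        obtain ⟨⟨i, hi⟩, hx⟩ := hx
        obtain ⟨k, ⟨hk, hk'⟩, hks⟩ := fin_dir (p := fun l => i ≤ l ∧ l < j) (Z := Z)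
          ⟨i, le_rfl, hi⟩ (fun k hk => h2 k hk.2) s (by
          intro x hx
          have := hs x hx
          simp only [Set.mem_iUnion] at this
          obtain ⟨l, hl, hxl⟩ := this
          have hm : max i l < j := max_lt hi hl
          exact ⟨max i l, ⟨le_max_left _ _, hm⟩, h2 _ hm l (le_max_right _ _) hxl⟩)
        simp only [Set.mem_iUnion]
        exact ⟨k, hk', h3 k hk' i hk s hks (Set.mem_iUnion.2 ⟨hi, hx⟩)⟩
      · have : (⋃ l, ⋃ _ : l < j, Z l) = ⋃ l : Set.Iio j, Z l.1 := by
          ext x; simp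
        rw [this, lt_succ_iff]
        exact (mk_iUnion_le_sum_mk).trans (sum_le_sum _ _ fun l => h1 l.1 l.2)
  · refine ⟨fun _ _ => ∅, by simp, fun Z _ _ _ => ?_⟩
    have : (⋃ l, ⋃ _ : l < j, Z l) = ∅ := by
      ext x; simp; intro k hk; exact absurd ⟨k, hk⟩ hj
    rw [this]; exact hI.empty_union

theorem cp_sing_core {μ lam : Cardinal.{w}} (hlam : ℵ₀ ≤ lam) (hlt : lam < μ)
    (θ : lam.ord.ToType → Cardinal.{w}) (hm : Monotone θ) (hlo : ∀ i, lam ≤ θ i)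
    (hhi : ∀ i, θ i < μ) (hsum : μ ≤ Cardinal.sum θ)
    (ih : ∀ ν, ℵ₀ ≤ ν → ν < μ → Cp N (succ ν)) : Cp N (succ μ) := by
  classical
  intro I hI F hF
  have hθ : ∀ i, ℵ₀ ≤ θ i := fun i => hlam.trans (hlo i)
  let ι := lam.ord.ToType
  have hι : #ι = lam := by simp [ι]
  have hiio : ∀ i : ι, #(Set.Iio i) < lam := fun i => mk_Iio_toType_ord_lt i
  have hs : ∀ s, ∃ E : ι → Set Ω, (∀ i, #(E i) ≤ θ i) ∧ F s = ⋃ i, E i := by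
    intro s
    exact split (θ := θ) ((lt_succ_iff.1 (hF s)).trans hsum)
  choose E hE1 hE2 using hs
  choose e he1 he2 using sing_aux (N := N) hθ hI
  obtain ⟨Z, hZ1, hZ2, hZ3⟩ := chain_build (N := N) (I := I) (ι := ι)
    (fun i B Z => #Z ≤ θ i ∧ (∀ j, ∀ α, α ≤ i → Cl (e j α) Z) ∧
      ∀ α, α ≤ i → Cl (fun s => E s α) Z)
    (fun i B => #B ≤ θ i) (by
      intro i B hB hU
      have hreg : (succ (θ i)).IsRegular := isRegular_succ (hθ i)
      have hω : ℵ₀ ≤ succ (θ i) := (hθ i).trans (le_succ _)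
      have hlam' : lam < succ (θ i) := lt_succ_iff.2 (hlo i)
      have hic := small_Iic hω ((hiio i).trans hlam')
      obtain ⟨Z, hZ, hZc, hZl⟩ := ih (θ i) (hθ i) (hhi i) (I ∪ B) hU
        (fun s => B ∪ ((⋃ j, ⋃ α, ⋃ _ : α ≤ i, e j α s) ∪ ⋃ α, ⋃ _ : α ≤ i, E s α)) (by
          intro s
          refine small_union hω (lt_succ_iff.2 hB) (small_union hω ?_ ?_)
          · refine small_iUnion hreg (hι.trans_lt hlam') fun j => ?_
            exact small_le_part hreg hic fun k hk =>
              lt_succ_iff.2 ((he1 j k s).trans (hm hk))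
          · exact small_le_part hreg hic fun k hk =>
              lt_succ_iff.2 ((hE1 s k).trans (hm hk)))
      refine ⟨Z, fun x hx => hZ ∅ (by simp) (Or.inl hx), ⟨lt_succ_iff.1 hZc, ?_, ?_⟩, hZl⟩
      · intro j α hα s hs x hx
        refine hZ s hs (Or.inr (Or.inl ?_))
        simp only [Set.mem_iUnion]
        exact ⟨j, α, hα, hx⟩
      · intro α hα s hs x hx
        refine hZ s hs (Or.inr (Or.inr ?_))
        simp only [Set.mem_iUnion]
        exact ⟨α, hα, hx⟩) (by
      intro i Z h1 h2
      have hreg : (succ (θ i)).IsRegular := isRegular_succ (hθ i)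
      have hlam' : lam < succ (θ i) := lt_succ_iff.2 (hlo i)
      exact ⟨lt_succ_iff.1 (small_lt hreg ((hiio i).trans hlam') (Z := Z) fun j hj =>
        lt_succ_iff.2 ((h1 j hj).1.trans (hm hj.le))),
        he2 i Z (fun l hl => (h1 l hl).1) h2 fun l hl α hα => (h1 l hl).2.1 i α hα⟩)
  refine ⟨⋃ i, Z i, ?_, ?_, hZ3⟩
  · intro s hs x hx
    rw [hE2, Set.mem_iUnion] at hx
    obtain ⟨α, hα⟩ := hx
    obtain ⟨j, hj, hjs⟩ := fin_dir (p := fun l => α ≤ l) (Z := Z) ⟨α, le_rfl⟩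
      (fun j _ l hl => hZ2 l j hl) s (by
        intro x hx
        obtain ⟨i, hi⟩ := Set.mem_iUnion.1 (hs x hx)
        exact ⟨max α i, le_max_left _ _, hZ2 i _ (le_max_right _ _) hi⟩)
    exact Set.mem_iUnion.2 ⟨j, (hZ1 j).2.2 α hj s hjs hα⟩
  · refine small_iUnion (isRegular_succ (hlam.trans hlt.le))
      (by rw [hι]; exact hlt.trans (lt_succ _)) fun i =>
      (hZ1 i).1.trans_lt ((hhi i).trans (lt_succ _))

end EMW
end Part10

section Part11
namespace EMW
open Cardinal Order
variable {Ω : Type w} {N : Web Ω}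

theorem cp_succ_sing {μ : Cardinal.{w}} (hμ : μ.IsSingular)
    (ih : ∀ ν, ℵ₀ ≤ ν → ν < μ → Cp N (succ ν)) : Cp N (succ μ) := by
  classical
  let T := μ.ord.ToType
  have hlim : IsSuccLimit μ.ord := isSuccLimit_ord hμ.aleph0_le
  have hlam : ℵ₀ ≤ μ.ord.cof := Ordinal.aleph0_le_cof.2 hlim
  obtain ⟨S, hS, hSc⟩ := Order.exists_cof_eq T
  rw [Ordinal.cof_toType] at hSc
  have hιS : #(μ.ord.cof.ord.ToType) = #S := by rw [hSc]; simp
  obtain ⟨g⟩ := Cardinal.eq.1 hιS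
  let c : μ.ord.cof.ord.ToType → Cardinal.{w} := fun i => #(Set.Iic (g i).1)
  have hc : ∀ i, c i < μ := fun i => small_Iic hμ.aleph0_le (mk_Iio_toType_ord_lt _)
  have hic : ∀ j : μ.ord.cof.ord.ToType, #(Set.Iic j) < μ.ord.cof := fun j =>
    small_Iic hlam (mk_Iio_toType_ord_lt _)
  let θ : μ.ord.cof.ord.ToType → Cardinal.{w} := fun j =>
    max μ.ord.cof (⨆ i : Set.Iic j, c i.1)
  have hbdd : ∀ j : μ.ord.cof.ord.ToType, BddAbove (Set.range fun i : Set.Iic j => c i.1) :=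
    fun j => bddAbove_range _
  have hcθ : ∀ i j, i ≤ j → c i ≤ ⨆ i : Set.Iic j, c i.1 := fun i j hij =>
    le_ciSup (hbdd j) (⟨i, hij⟩ : Set.Iic j)
  refine cp_sing_core hlam hμ.cof_ord_lt θ ?_ (fun i => le_max_left _ _) ?_ ?_ ih
  · intro i j hij
    refine max_le_max le_rfl ?_
    haveI : Nonempty (Set.Iic i) := ⟨⟨i, le_refl i⟩⟩
    exact ciSup_le fun k => hcθ k.1 j (le_trans k.2 hij)
  · intro i
    refine max_lt hμ.cof_ord_lt ?_
    exact iSup_lt_of_lt_cof_ord (hic i) fun k => hc k.1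
  · have h1 : (Set.univ : Set T) = ⋃ i, Set.Iic (g i).1 := by
      ext x
      simp only [Set.mem_univ, Set.mem_iUnion, true_iff]
      obtain ⟨y, hy, hxy⟩ := hS x
      refine ⟨g.symm ⟨y, hy⟩, ?_⟩
      simpa using hxy
    have h2 : #T = μ := by simp [T]
    have h3 : #T ≤ Cardinal.sum c := by
      rw [← mk_univ, h1]; exact mk_iUnion_le_sum_mk
    rw [h2] at h3
    exact h3.trans (sum_le_sum _ _ fun i => (hcθ i i le_rfl).trans (le_max_right _ _))

theorem cp_all (κ : Cardinal.{w}) : κ.IsRegular → ℵ₀ < κ → Cp N κ := by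
  induction κ using WellFoundedLT.induction with
  | ind κ ih =>
  intro hκ hω
  by_cases hl : ∀ ν, ν < κ → succ ν < κ
  · exact cp_limit hκ hω hl fun ν h1 h2 => ih _ (hl ν h2) (isRegular_succ h1)
      (h1.trans_lt (lt_succ _))
  · push Not at hl
    obtain ⟨μ, h1, h2⟩ := hl
    have hk : κ = succ μ := le_antisymm h2 (succ_le_of_lt h1)
    subst hk
    have h0 : ℵ₀ ≤ μ := lt_succ_iff.1 hω
    have ih' : ∀ ν, ℵ₀ ≤ ν → ν < μ → Cp N (succ ν) := fun ν g1 g2 =>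
      ih _ (succ_lt_succ g2) (isRegular_succ g1) (g1.trans_lt (lt_succ _))
    rcases h0.eq_or_lt with rfl | h0'
    · exact cp_aleph1
    · rcases isRegular_or_isSingular h0 with hr | hs
      · exact cp_succ_reg hr h0' (ih μ h1 hr h0')
      · exact cp_succ_sing hs ih'

theorem linkable_univ {I : Set Ω} (h : Unh N I) : Linkable N I Set.univ := by
  have h0 : ℵ₀ ≤ max #Ω ℵ₀ := le_max_right _ _
  obtain ⟨Z, h1, -, h2⟩ := cp_all (N := N) (succ (max #Ω ℵ₀)) (isRegular_succ h0)
    (h0.trans_lt (lt_succ _)) I h (fun _ => Set.univ)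
    (fun s => by rw [mk_univ]; exact (le_max_left _ _).trans_lt (lt_succ _))
  have : Z = Set.univ := Set.eq_univ_of_univ_subset (h1 ∅ (by simp))
  rwa [this] at h2

end EMW
end Part11

section Part12
namespace EMW
open Multigraph
variable {V : Type u} {E : Type v} {G : Multigraph V E}

theorem walk_suffix {u x w : V} (p : G.Walk u w) (h : x ∈ p.support) :
    ∃ q : G.Walk x w, q.support.Sublist p.support ∧ q.edges ⊆ p.edges := by
  induction p with
  | nil y =>
    have : x = y := by simpa [Walk.support] using h
    subst this
    exact ⟨.nil x, List.Sublist.refl _, fun _ h => h⟩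
  | @cons a b c e he p ih =>
    by_cases hx : x = a
    · subst hx
      exact ⟨.cons e he p, List.Sublist.refl _, fun _ h => h⟩
    · have h' : x ∈ p.support := by
        simpa [Walk.support, hx] using h
      obtain ⟨q, h1, h2⟩ := ih h'
      exact ⟨q, h1.trans (List.sublist_cons_self _ _), fun y hy => List.mem_cons_of_mem _ (h2 hy)⟩

theorem walk_bypass {u w : V} (p : G.Walk u w) :
    ∃ q : G.Walk u w, q.support.Nodup ∧ q.edges ⊆ p.edges := by
  induction p with
  | nil y => exact ⟨.nil y, by simp [Walk.support], fun _ h => h⟩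
  | @cons a b c e he p ih =>
    obtain ⟨q, h1, h2⟩ := ih
    by_cases hx : a ∈ q.support
    · obtain ⟨r, g1, g2⟩ := walk_suffix q hx
      exact ⟨r, h1.sublist g1, fun y hy => List.mem_cons_of_mem _ (h2 (g2 hy))⟩
    · refine ⟨.cons e he q, by simp [Walk.support, hx, h1], ?_⟩
      intro y hy
      simp only [Walk.edges, List.mem_cons] at hy ⊢
      exact hy.imp_right fun h => h2 h

theorem walk_concat {u x w : V} (p : G.Walk u x) (e : E) (he : G.inc e = s(x, w)) :
    ∃ q : G.Walk u w, q.edges = p.edges ++ [e] ∧ q.support = p.support ++ [w] := by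
  induction p with
  | nil y => exact ⟨.cons e he (.nil w), rfl, rfl⟩
  | cons f hf p ih =>
    obtain ⟨q, h1, h2⟩ := ih he
    exact ⟨.cons f hf q, by simp [Walk.edges, h1], by simp [Walk.support, h2]⟩

theorem walk_init {u w : V} (p : G.Walk u w) (e : E) (h : e ∈ p.edges) :
    ∃ x, ∃ q : G.Walk u x, q.support.Sublist p.support ∧ q.edges ⊆ p.edges ∧
      q.edges.getLast? = some e := by
  induction p with
  | nil y => simp [Walk.edges] at h
  | @cons a b c f hf p ih =>
    by_cases hef : e = f
    · subst hef
      refine ⟨b, .cons e hf (.nil b), ?_, ?_, rfl⟩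
      · simp only [Walk.support]
        refine List.Sublist.cons_cons _ ?_
        cases p <;> simp [Walk.support]
      · intro y hy
        simp [Walk.edges] at hy ⊢
        exact Or.inl hy
    · have h' : e ∈ p.edges := by simpa [Walk.edges, hef] using h
      obtain ⟨x, q, h1, h2, h3⟩ := ih h'
      refine ⟨x, .cons f hf q, List.Sublist.cons_cons _ h1, ?_, ?_⟩
      · intro y hy
        simp only [Walk.edges, List.mem_cons] at hy ⊢
        exact hy.imp_right fun h => h2 h
      · simp only [Walk.edges]
        rw [List.getLast?_cons, h3]; rfl

theorem walk_cross {u w : V} (p : G.Walk u w) (Z : Set V) (hu : u ∈ Z) (hw : w ∉ Z) :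
    ∃ e ∈ p.edges, e ∈ G.cut Z := by
  induction p with
  | nil y => exact absurd hu hw
  | @cons a b c f hf p ih =>
    by_cases hb : b ∈ Z
    · obtain ⟨e, h1, h2⟩ := ih hb hw
      exact ⟨e, List.mem_cons_of_mem _ h1, h2⟩
    · exact ⟨f, by simp [Walk.edges], a, b, hf, hu, hb⟩

/-- the web of edges -/
def gweb (G : Multigraph V E) (s t : V) : Web E where
  R e f := s ∉ G.inc f ∧ ∃ x, x ∈ G.inc e ∧ x ∈ G.inc f
  A := G.inci s
  B := G.inci t
  hRA _ _ h h' := h.1 h'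

theorem inc_two {e : E} {x y : V} (hx : x ∈ G.inc e) (hy : y ∈ G.inc e) (h : x ≠ y) :
    G.inc e = s(x, y) := ((Sym2.mem_and_mem_iff h).1 ⟨hx, hy⟩)

theorem walk_of_list {s t : V} (l : List E) : ∀ e x, x ∈ G.inc e →
    (e :: l).IsChain (gweb G s t).R → (∃ b ∈ (gweb G s t).B, (e :: l).getLast? = some b) →
    ∃ p : G.Walk x t, ∀ f ∈ p.edges, f ∈ e :: l := by
  induction l with
  | nil =>
    rintro e x hx - ⟨b, hb, h⟩
    have : e = b := by simpa using h
    subst this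
    by_cases hxt : x = t
    · subst hxt; exact ⟨.nil x, by simp [Walk.edges]⟩
    · exact ⟨.cons e (inc_two hx hb hxt) (.nil t), by simp [Walk.edges]⟩
  | cons f l ih =>
    rintro e x hx hc ⟨b, hb, h⟩
    rw [List.isChain_cons_cons] at hc
    obtain ⟨⟨_, y, hy1, hy2⟩, hc⟩ := hc
    obtain ⟨p, hp⟩ := ih f y hy2 hc ⟨b, hb, by simpa using h⟩
    by_cases hxy : x = y
    · subst hxy; exact ⟨p, fun g hg => List.mem_cons_of_mem _ (hp g hg)⟩
    · refine ⟨.cons e (inc_two hx hy1 hxy) p, fun g hg => ?_⟩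
      rcases List.mem_cons.1 (show g ∈ e :: p.edges from hg) with rfl | hg
      · simp
      · exact List.mem_cons_of_mem _ (hp g hg)

theorem walk_first {s t : V} (hst : s ≠ t) (p : G.Walk s t) : ∃ e ∈ p.edges, s ∈ G.inc e := by
  cases p with
  | nil => exact absurd rfl hst
  | cons e he p => exact ⟨e, by simp [Walk.edges], by rw [he]; simp⟩

theorem path_of_list {s t : V} (hst : s ≠ t) {a : E} (ha : a ∈ G.inci s) {Q : List E}
    (h : IsABPath (gweb G s t) a Q) :
    ∃ p : G.STPath s t, (∀ f ∈ p.walk.edges, f ∈ Q) ∧ a ∈ p.walk.edges := by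
  have h' := h
  obtain ⟨h1, h2, h3⟩ := h'
  cases Q with
  | nil => simp at h2
  | cons b l =>
    have : b = a := by simpa using h2
    subst this
    obtain ⟨p, hp⟩ := walk_of_list l b s ha h1 h3
    obtain ⟨q, hq1, hq2⟩ := walk_bypass p
    obtain ⟨e, he1, he2⟩ := walk_first hst q
    have : e = b := h.mem_A (hp e (hq2 he1)) he2
    subst this
    exact ⟨⟨q, hq1⟩, fun f hf => hp f (hq2 hf), he1⟩

theorem inci_eq_cut (s : V) : G.inci s = G.cut {s} := by
  ext e
  constructor
  · intro h
    obtain ⟨y, hy⟩ := Sym2.mem_iff_exists.1 h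
    refine ⟨s, y, hy, rfl, ?_⟩
    rintro rfl
    exact G.not_isDiag e (by rw [hy]; simp)
  · rintro ⟨x, y, h, rfl, -⟩
    show x ∈ G.inc e
    rw [h]; simp

theorem covers {s t : V} (hst : s ≠ t) (hU : Unh (gweb G s t) ∅) :
    ∃ P : Set (G.STPath s t), G.STPathDisjoint P ∧
      (∀ p ∈ P, ∃! e, e ∈ G.inci s ∧ e ∈ p.walk.edges) ∧
      (∀ e ∈ G.inci s, ∃ p ∈ P, e ∈ p.walk.edges) := by
  classical
  obtain ⟨Q, h1, h2⟩ := linkable_univ hU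
  have h1' : ∀ a ∈ G.inci s, IsABPath (gweb G s t) a (Q a) := fun a ha =>
    (h1 a ha trivial (by simp)).1
  have hp : ∀ a : G.inci s, ∃ p : G.STPath s t,
      (∀ f ∈ p.walk.edges, f ∈ Q a.1) ∧ a.1 ∈ p.walk.edges :=
    fun a => path_of_list hst a.2 (h1' a.1 a.2)
  choose p hp1 hp2 using hp
  refine ⟨Set.range p, ?_, ?_, ?_⟩
  · rintro _ ⟨a, rfl⟩ _ ⟨b, rfl⟩ hab e he he'
    have : a.1 ≠ b.1 := fun h => hab (by rw [Subtype.ext h])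
    exact h2 a.1 a.2 trivial (by simp) b.1 b.2 trivial (by simp) this e (hp1 a e he) (hp1 b e he')
  · rintro _ ⟨a, rfl⟩
    exact ⟨a.1, ⟨a.2, hp2 a⟩, fun e he => (h1' a.1 a.2).mem_A (hp1 a e he.2) he.1⟩
  · intro e he
    exact ⟨p ⟨e, he⟩, ⟨_, rfl⟩, hp2 ⟨e, he⟩⟩

theorem em_wave {s t : V} {C : Set E} (h : G.IsEMCut s t C) :
    ∃ W : Set (G.SPath s), G.IsWave s {t} W ∧ G.lastEdges W = C := by
  classical
  obtain ⟨⟨X, hs, ht, hC⟩, P, hd, hu, hc⟩ := h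
  have hq : ∀ e : C, ∃ p ∈ P, ∃ q : G.SPath s, e.1 ∈ p.walk.edges ∧
      q.walk.edges ⊆ p.walk.edges ∧ q.walk.edges.getLast? = some e.1 := by
    intro e
    obtain ⟨p, hp, he⟩ := hc e.1 e.2
    obtain ⟨x, q, h1, h2, h3⟩ := walk_init p.walk e.1 he
    exact ⟨p, hp, ⟨x, q, p.support_nodup.sublist h1, by intro h; simp [h] at h3⟩, he, h2, h3⟩
  choose p hp q he hqp hl using hq
  have hlast : G.lastEdges (Set.range q) = C := by
    ext e
    constructor
    · rintro ⟨_, ⟨f, rfl⟩, h⟩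
      rw [hl] at h
      have : f.1 = e := by simpa using h
      exact this ▸ f.2
    · intro h
      exact ⟨_, ⟨⟨e, h⟩, rfl⟩, hl _⟩
  refine ⟨Set.range q, ⟨?_, ?_⟩, hlast⟩
  · rintro _ ⟨e, rfl⟩ _ ⟨f, rfl⟩ hne g hg hg'
    have hef : e ≠ f := fun h => hne (by rw [h])
    refine hd (p e) (hp e) (p f) (hp f) ?_ g (hqp e hg) (hqp f hg')
    intro hpe
    apply hef
    apply Subtype.ext
    obtain ⟨c, -, hcu⟩ := hu (p e) (hp e)
    rw [hcu e.1 ⟨e.2, he e⟩, hcu f.1 ⟨f.2, hpe ▸ he f⟩]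
  · rw [hlast]
    refine ⟨⟨X, by simpa using hs, by simpa using ht, hC⟩, ?_⟩
    rintro D ⟨Z, hsZ, htZ, rfl⟩ hDC
    refine Set.Subset.antisymm hDC ?_
    intro e heC
    obtain ⟨p, hp, hep⟩ := hc e heC
    obtain ⟨f, hf1, hf2⟩ := walk_cross p.walk Z (hsZ rfl) (htZ t rfl)
    obtain ⟨c, -, hcu⟩ := hu p hp
    have : e = f := by rw [hcu e ⟨heC, hep⟩, hcu f ⟨hDC hf2, hf1⟩]
    rw [this]; exact hf2

end EMW
end Part12

section Part13
namespace EMW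
open Multigraph
variable {V : Type u} {E : Type v} {G : Multigraph V E}

inductive Trail {Ω : Type v} (A : Set Ω) (pr : Ω → Ω) (e : Ω) : Ω → Prop
  | refl : Trail A pr e e
  | step (z : Ω) (h : Trail A pr e z) (hz : z ∉ A) : Trail A pr e (pr z)

theorem Trail.head {Ω : Type v} {A : Set Ω} {pr : Ω → Ω} {e z : Ω} (he : e ∉ A)
    (h : Trail A pr (pr e) z) : Trail A pr e z := by
  induction h with
  | refl => exact .step e .refl he
  | step z _ hz ih => exact .step z ih hz

theorem Trail.mem_U {Ω : Type v} {N : Web Ω} {I : Set Ω} {k : Wv Ω} (hk : IsWv N I k) {e z : Ω}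
    (he : e ∈ k.U) (h : Trail N.A k.pr e z) : z ∈ k.U := by
  induction h with
  | refl => exact he
  | step z _ hz ih => exact hk.lk.up z ih hz

theorem Trail.mem_X {Ω : Type v} {N : Web Ω} {I : Set Ω} {k : Wv Ω} (hk : IsWv N I k) {e z : Ω}
    (he : e ∈ k.U) (heX : e ∈ k.X) (h : Trail N.A k.pr e z) : z ∈ k.X := by
  cases h with
  | refl => exact heX
  | step z h hz => exact hk.prX z (h.mem_U hk he) hz

theorem Trail.disj {Ω : Type v} {N : Web Ω} {I : Set Ω} {k : Wv Ω} (hk : IsWv N I k) {e f z : Ω}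
    (he : e ∈ k.S) (hf : f ∈ k.S) (h : Trail N.A k.pr e z) (h' : Trail N.A k.pr f z) : e = f := by
  induction h with
  | refl =>
    cases h' with
    | refl => rfl
    | step z h hz => exact absurd he (hk.XS _ (hk.prX z (h.mem_U hk (hk.SU f hf)) hz))
  | step z h hz ih =>
    have hzU := h.mem_U hk (hk.SU e he)
    generalize hw : k.pr z = w at h'
    cases h' with
    | refl => exact absurd hf (hk.XS _ (hw ▸ hk.prX z hzU hz))
    | step y g hy =>
      have : z = y := hk.lk.inj z hzU y (g.mem_U hk (hk.SU f hf)) hz hy hw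
      subst this
      exact ih g

theorem walk_anc {s t : V} {k : Wv E} (hk : IsWv (gweb G s t) ∅ k) {e : E}
    (hr : Rooted (gweb G s t).A k.pr e) : e ∈ k.U → ∀ x ∈ G.inc e,
    ∃ p : G.Walk s x, ∀ z ∈ p.edges, Trail (gweb G s t).A k.pr e z := by
  have hb : ∀ e ∈ (gweb G s t).A, ∀ x ∈ G.inc e,
    ∃ p : G.Walk s x, ∀ z ∈ p.edges, Trail (gweb G s t).A k.pr e z := by
    intro a ha x hx
    by_cases hxs : s = x
    · subst hxs; exact ⟨.nil s, by simp [Walk.edges]⟩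
    · refine ⟨.cons a (inc_two ha hx hxs) (.nil x), fun z hz => ?_⟩
      have : z = a := by simpa [Walk.edges] using hz
      subst this; exact .refl
  induction hr with
  | base a ha => exact fun _ => hb a ha
  | step e hr ih =>
    intro hU x hx
    by_cases hA : e ∈ (gweb G s t).A
    · exact hb e hA x hx
    · obtain ⟨-, y, hy1, hy2⟩ := hk.lk.upR e hU hA
      obtain ⟨p, hp⟩ := ih (hk.lk.up e hU hA) y hy1
      by_cases hxy : y = x
      · subst hxy; exact ⟨p, fun z hz => (hp z hz).head hA⟩
      · obtain ⟨q, hq, -⟩ := walk_concat p e (inc_two hy2 hx hxy)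
        refine ⟨q, fun z hz => ?_⟩
        rw [hq, List.mem_append] at hz
        rcases hz with hz | hz
        · exact (hp z hz).head hA
        · have : z = e := by simpa using hz
          subst this; exact .refl

/-- vertices reachable from `s` without edges of `S` -/
inductive Rs (G : Multigraph V E) (s : V) (S : Set E) : V → Prop
  | base : Rs G s S s
  | step (x y : V) (e : E) (h : Rs G s S x) (he : G.inc e = s(x, y)) (hS : e ∉ S) : Rs G s S y

inductive Rt (G : Multigraph V E) (t : V) (P : V → Prop) : V → Prop
  | base : Rt G t P t
  | step (x y : V) (e : E) (h : Rt G t P x) (he : G.inc e = s(x, y)) (hP : ¬ P y) : Rt G t P y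

theorem walk_Rs {s u x : V} {S : Set E} (p : G.Walk u x) (hu : Rs G s S u)
    (h : ∀ z ∈ p.edges, z ∉ S) : ∀ y ∈ p.support, Rs G s S y := by
  induction p with
  | nil y =>
    intro z hz
    have : z = y := by simpa [Walk.support] using hz
    subst this; exact hu
  | @cons a b c e he p ih =>
    intro y hy
    rcases List.mem_cons.1 (show y ∈ a :: p.support from hy) with rfl | hy
    · exact hu
    · exact ih (.step a b e hu he (h e (by simp [Walk.edges])))
        (fun z hz => h z (List.mem_cons_of_mem _ hz)) y hy

theorem walk_end {u x : V} (p : G.Walk u x) : x ∈ p.support := by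
  induction p with
  | nil y => simp [Walk.support]
  | cons e he p ih => exact List.mem_cons_of_mem _ ih

theorem unh_of_nowave {s t : V} (hst : s ≠ t)
    (hnowave : ∀ W : Set (G.SPath s), G.IsWave s {t} W → G.lastEdges W = G.inci s) :
    Unh (gweb G s t) ∅ := by
  classical
  intro k0 hk0 a ha _
  by_contra haU
  obtain ⟨k, hk, -, -, haX, -, -⟩ := aug hk0 ha (by simp) haU
  have hXS := hk.XS
  have nbd : ∀ x, Rs G s k.S x → ∀ f, x ∈ G.inc f → f ∈ k.X ∨ f ∈ k.S := by
    intro x hx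
    induction hx with
    | base => exact fun f hf => hk.cov f hf (by simp)
    | step x y e _ he hS ih =>
      intro f hf
      have heX : e ∈ k.X := (ih e (by rw [he]; simp)).resolve_right hS
      by_cases hsf : s ∈ G.inc f
      · exact hk.cov f hsf (by simp)
      · have := hk.nb e heX f ⟨hsf, y, by rw [he]; simp, hf⟩
        simpa using this
  have ht : ¬ Rs G s k.S t := by
    intro h
    cases h with
    | base => exact hst rfl
    | step x _ e h he hS =>
      have heX : e ∈ k.X := (nbd x h e (by rw [he]; simp)).resolve_right hS
      refine hk.XB e heX ?_
      show t ∈ G.inc e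
      rw [he]; simp
  set Y : V → Prop := Rt G t (Rs G s k.S) with hY
  have YX : ∀ y, Y y → ¬ Rs G s k.S y := by
    intro y hy
    cases hy with
    | base => exact ht
    | step x _ e h he hP => exact hP
  have hsY : ¬ Y s := fun h => YX s h .base
  set C : Set E := G.cut {y | ¬ Y y} with hC
  have Cform : ∀ e ∈ C, ∃ x y, G.inc e = s(x, y) ∧ Rs G s k.S x ∧ Y y ∧ e ∈ k.S := by
    rintro e ⟨x, y, he, hx, hy⟩
    have hx : ¬ Y x := hx
    have hy : Y y := by
      by_contra h; exact hy h
    have hxs : Rs G s k.S x := by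
      by_contra h
      exact hx (.step y x e hy (by rw [he, Sym2.eq_swap]) h)
    refine ⟨x, y, he, hxs, hy, ?_⟩
    by_contra hS
    exact YX y hy (.step x y e hxs he hS)
  have hmin : G.IsMinSepCut {s} {t} C := by
    refine ⟨⟨{y | ¬ Y y}, by simpa using hsY, ?_, rfl⟩, ?_⟩
    · rintro b rfl h
      exact h .base
    · rintro D ⟨Z, hsZ, htZ, rfl⟩ hDC
      refine Set.Subset.antisymm hDC ?_
      have h1 : ∀ x, Rs G s k.S x → x ∈ Z := by
        intro x hx
        induction hx with
        | base => exact hsZ rfl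
        | step x y e _ he hS ih =>
          by_contra hy
          obtain ⟨_, _, _, _, _, h⟩ := Cform e (hDC ⟨x, y, he, ih, hy⟩)
          exact hS h
      have h2 : ∀ y, Y y → y ∉ Z := by
        intro y hy
        induction hy with
        | base => exact htZ t rfl
        | step x y e hx he hP ih =>
          intro hyZ
          obtain ⟨x', y', he', hx', hy', -⟩ :=
            Cform e (hDC ⟨y, x, by rw [he, Sym2.eq_swap], hyZ, ih⟩)
          rw [he, Sym2.eq_iff] at he'
          rcases he' with ⟨rfl, rfl⟩ | ⟨rfl, rfl⟩
          · exact YX _ hx hx'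
          · exact hP hx'
      intro e he
      obtain ⟨x, y, hxy, hx, hy, -⟩ := Cform e he
      exact ⟨x, y, hxy, h1 x hx, h2 y hy⟩
  have hpath : ∀ e : C, ∃ q : G.SPath s, q.walk.edges.getLast? = some e.1 ∧
      ∀ z ∈ q.walk.edges, Trail (gweb G s t).A k.pr e.1 z := by
    rintro ⟨e, heC⟩
    obtain ⟨x, y, hxy, hx, hy, heS⟩ := Cform e heC
    have heU := hk.SU e heS
    have hyx : y ≠ x := by rintro rfl; exact YX _ hy hx
    obtain ⟨p, hp1, hp2⟩ : ∃ p : G.Walk s x, (∀ z ∈ p.edges, Trail (gweb G s t).A k.pr e z) ∧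
        ∀ z ∈ p.edges, z ∉ k.S := by
      by_cases hA : e ∈ (gweb G s t).A
      · have hse : s ∈ G.inc e := hA
        rw [hxy, Sym2.mem_iff] at hse
        rcases hse with rfl | rfl
        · exact ⟨.nil _, by simp [Walk.edges], by simp [Walk.edges]⟩
        · exact absurd hy hsY
      · obtain ⟨-, w, hw1, hw2⟩ := hk.lk.upR e heU hA
        have hpU := hk.lk.up e heU hA
        have hpX := hk.prX e heU hA
        obtain ⟨p, hp⟩ := walk_anc hk (hk.lk.rt _ hpU) hpU w hw1
        have hpS : ∀ z ∈ p.edges, z ∉ k.S := fun z hz =>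
          hXS z ((hp z hz).mem_X hk hpU hpX)
        have hw : Rs G s k.S w := walk_Rs p .base hpS w (walk_end p)
        rw [hxy, Sym2.mem_iff] at hw2
        rcases hw2 with rfl | rfl
        · exact ⟨p, fun z hz => (hp z hz).head hA, hpS⟩
        · exact absurd hw (YX _ hy)
    obtain ⟨q, hq1, hq2⟩ := walk_bypass p
    obtain ⟨r, hr1, hr2⟩ := walk_concat q e hxy
    have hqR : ∀ z ∈ q.support, Rs G s k.S z :=
      walk_Rs q .base fun z hz => hp2 z (hq2 hz)
    refine ⟨⟨y, r, ?_, by simp [hr1]⟩, by simp [hr1], ?_⟩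
    · rw [hr2, List.nodup_append]
      refine ⟨hq1, by simp, ?_⟩
      intro z hz z' hz' h
      have : z' = y := by simpa using hz'
      subst this; subst h
      exact YX _ hy (hqR _ hz)
    · intro z hz
      have hz : z ∈ r.edges := hz
      rw [hr1, List.mem_append] at hz
      rcases hz with hz | hz
      · exact hp1 z (hq2 hz)
      · have : z = e := by simpa using hz
        subst this; exact .refl
  choose q hl hq using hpath
  have hlast : G.lastEdges (Set.range q) = C := by
    ext e
    constructor
    · rintro ⟨_, ⟨f, rfl⟩, h⟩
      rw [hl] at h
      have : f.1 = e := by simpa using h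
      exact this ▸ f.2
    · intro h
      exact ⟨_, ⟨⟨e, h⟩, rfl⟩, hl _⟩
  have hS : ∀ e : C, e.1 ∈ k.S := fun e => by
    obtain ⟨_, _, _, _, _, h⟩ := Cform e.1 e.2
    exact h
  have := hnowave (Set.range q) ⟨by
    rintro _ ⟨e, rfl⟩ _ ⟨f, rfl⟩ hne g hg hg'
    have hef : e ≠ f := fun h => hne (by rw [h])
    exact hef (Subtype.ext (Trail.disj hk (hS e) (hS f) (hq e g hg) (hq f g hg'))), by rw [hlast]; exact hmin⟩
  rw [hlast] at this
  have haC : a ∈ C := by rw [this]; exact ha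
  exact hXS a haX (hS ⟨a, haC⟩)

end EMW
end Part13

/-- If there is no non-trivial `st`-wave (every `st`-wave has `δ(s)` as its set
of last edges), then some system of pairwise edge-disjoint `st`-paths covers
`δ(s)`, and `δ(s)` is the unique Erdős–Menger `st`-cut. -/
theorem no_nontrivial_wave_covers {V : Type u} {E : Type v}
    (G : Multigraph V E) (s t : V) (hst : s ≠ t)
    (hnowave : ∀ W : Set (G.SPath s), G.IsWave s {t} W →
      G.lastEdges W = G.inci s) :
    (∃ P : Set (G.STPath s t), G.STPathDisjoint P ∧
      ∀ e ∈ G.inci s, ∃ p ∈ P, e ∈ p.walk.edges) ∧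
    G.IsEMCut s t (G.inci s) ∧
    (∀ C : Set E, G.IsEMCut s t C → C = G.inci s) := by
  have hU := EMW.unh_of_nowave hst hnowave
  obtain ⟨P, h1, h2, h3⟩ := EMW.covers hst hU
  refine ⟨⟨P, h1, h3⟩, ⟨⟨{s}, rfl, fun h => hst h.symm, EMW.inci_eq_cut s⟩, P, h1, h2, h3⟩, ?_⟩
  intro C hC
  obtain ⟨W, hW, hl⟩ := EMW.em_wave hC
  rw [← hl]
  exact hnowave W hW
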